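/- arXiv:1910.11891 — 3 statements merged into one kernel-verified Lean document; each statement's English description precedes it below -/
import Mathlib

section
/- For every integer t with 2 ≤ t ≤ 7 and every simple graph G of order n ≥ t−1 that contains no K_t minor, the number of edges of G is at most (t−2)·n − (t−1 choose 2). -/
attribute [local instance] Classical.propDecidable

/-- `G` contains a `K_t` minor: `t` pairwise disjoint nonempty branch sets, each inducing a
connected subgraph of `G`, with an edge of `G` between any two of them. -/
def SimpleGraph.HasCompleteMinor {V : Type*} (G : SimpleGraph V) (t : ℕ) : Prop :=
  ∃ B : Fin t → Set V,
    (∀ i, (B i).Nonempty) ∧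
    (∀ i, (G.induce (B i)).Connected) ∧
    (∀ i j, i ≠ j → Disjoint (B i) (B j)) ∧
    (∀ i j, i ≠ j → ∃ u ∈ B i, ∃ v ∈ B j, G.Adj u v)

/-! In a counterexample for `t = 7` with as few vertices as possible, delete edges until exactly
`5n - 14` are left. Contracting an edge then shows that every edge lies in at least five triangles.
Take a vertex `v` of degree at most nine with a non-neighbour, a component `K` of what is left after
removing `v` and its neighbourhood `N`, and the set `S` of vertices of `N` with a neighbour in `K`.

If `S ≠ N`, then `S` separates `K` from the rest. Away from `K`, contract `K` onto a vertex of `S`;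
on the side of `K`, contract `v` onto a vertex of `S` and a connected part of `N \ S` onto another
one. By minimality both sides satisfy the bound even with the edges gained in this way, and adding
up leaves too few edges for the whole graph.

If `S = N`, then contracting `K` onto a vertex of `N` shows that the complement of the graph induced
on `N` is regular up to a deficiency of one. Some two adjacent vertices of `N` then have very few
common neighbours in `N`, and contracting the edge between them as well violates the bound.

Adding a dominating vertex to a graph without `K_t` minor gives one without `K_{t+1}` minor, and the
bound for `t + 1` and the new graph is the bound for `t` and the old one. So `t = 7` suffices. -/

namespace Mader

open Finset

variable {V W : Type*}

section Connectivity

lemma connected_induce_singleton (G : SimpleGraph V) (a : V) :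
    (G.induce ({a} : Set V)).Connected := by
  rw [SimpleGraph.induce_singleton_eq_top]
  exact SimpleGraph.connected_top

lemma connected_induce_biUnion {H : SimpleGraph V} {G : SimpleGraph W} {s : Set V}
    {β : V → Set W} (hs : (H.induce s).Connected) (hβ : ∀ a ∈ s, (G.induce (β a)).Connected)
    (hadj : ∀ a ∈ s, ∀ b ∈ s, H.Adj a b → ∃ x ∈ β a, ∃ y ∈ β b, G.Adj x y) :
    (G.induce (⋃ a ∈ s, β a)).Connected := by
  obtain ⟨a⟩ := hs.nonempty
  obtain ⟨x, hx⟩ := (hβ a a.2).nonempty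
  have patch (b : s) : ∃ P ⊆ ⋃ a ∈ s, β a, β a ⊆ P ∧ β b ⊆ P ∧ (G.induce P).Connected := by
    have hab := (SimpleGraph.reachable_iff_reflTransGen a b).1 (hs.preconnected a b)
    induction hab with
    | refl => exact ⟨β a, Set.subset_biUnion_of_mem a.2, subset_rfl, subset_rfl, hβ a a.2⟩
    | @tail b c _ hbc ih =>
      obtain ⟨P, hP, haP, hbP, hPconn⟩ := ih
      obtain ⟨y, hy, z, hz, hyz⟩ := hadj b b.2 c c.2 hbc
      exact ⟨P ∪ β c, Set.union_subset hP (Set.subset_biUnion_of_mem c.2),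
        haP.trans Set.subset_union_left, Set.subset_union_right,
        SimpleGraph.connected_induce_union hPconn.preconnected (hβ c c.2).preconnected
          (hbP hy) hz hyz⟩
  refine SimpleGraph.induce_connected_of_patches x (Set.mem_biUnion a.2 hx) fun {y} hy => ?_
  obtain ⟨b, hb, hyb⟩ := Set.mem_iUnion₂.1 hy
  obtain ⟨P, hP, haP, hbP, hPconn⟩ := patch ⟨b, hb⟩
  exact ⟨P, hP, haP hx, hbP hyb, hPconn.preconnected _ _⟩

lemma exists_connected_adj_closed (G : SimpleGraph V) {R : Finset V} (hR : R.Nonempty) :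
    ∃ K ⊆ R, (G.induce (K : Set V)).Connected ∧ ∀ a ∈ K, ∀ b ∈ R, G.Adj a b → b ∈ K := by
  obtain ⟨r, hr⟩ := hR
  obtain ⟨K, hK⟩ := exists_maximal
    (s := R.powerset.filter fun K : Finset V => (G.induce (K : Set V)).Connected)
    ⟨{r}, mem_filter.2 ⟨by simpa using hr, by
      rw [coe_singleton]
      exact connected_induce_singleton G r⟩⟩
  obtain ⟨hKR, hKconn⟩ := mem_filter.1 hK.prop
  rw [mem_powerset] at hKR
  refine ⟨K, hKR, hKconn, fun a ha b hb hab => ?_⟩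
  have hconn := SimpleGraph.connected_induce_union hKconn.preconnected
    (connected_induce_singleton G b).preconnected ha rfl hab
  have hmem : K ∪ {b} ∈ R.powerset.filter fun K : Finset V => (G.induce (K : Set V)).Connected :=
    mem_filter.2 ⟨mem_powerset.2 (union_subset hKR (singleton_subset_iff.2 hb)),
      by rwa [coe_union, coe_singleton]⟩
  exact hK.le_of_ge hmem subset_union_left (mem_union_right _ (mem_singleton_self b))

end Connectivity

section Minor

/-- `G` has a `K_t` minor all of whose branch sets lie in `A`, that is, `G[A]` has a `K_t` minor.
Passing to smaller vertex sets `A` replaces passing to induced subgraphs, so that all graphs of an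
induction live on the same vertex type. Branch sets are nonempty because `Connected` says so. -/
def HasCompleteMinorOn (G : SimpleGraph V) (A : Set V) (t : ℕ) : Prop :=
  ∃ B : Fin t → Set V,
    (∀ i, B i ⊆ A) ∧
    (∀ i, (G.induce (B i)).Connected) ∧
    (∀ i j, i ≠ j → Disjoint (B i) (B j)) ∧
    (∀ i j, i ≠ j → ∃ u ∈ B i, ∃ v ∈ B j, G.Adj u v)

lemma hasCompleteMinorOn_univ {G : SimpleGraph V} {t : ℕ} :
    HasCompleteMinorOn G Set.univ t ↔ G.HasCompleteMinor t := by
  constructor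
  · rintro ⟨B, -, hconn, hdisj, hadj⟩
    exact ⟨B, fun i => Set.nonempty_coe_sort.1 (hconn i).nonempty, hconn, hdisj, hadj⟩
  · rintro ⟨B, -, hconn, hdisj, hadj⟩
    exact ⟨B, fun i => Set.subset_univ (B i), hconn, hdisj, hadj⟩

lemma HasCompleteMinorOn.sdiff_singleton {G : SimpleGraph V} {A : Set V} {t : ℕ}
    (h : HasCompleteMinorOn G A (t + 1)) (a : V) : HasCompleteMinorOn G (A \ {a}) t := by
  obtain ⟨B, hBA, hconn, hdisj, hadj⟩ := h
  obtain ⟨k, hk⟩ : ∃ k, ∀ i, i ≠ k → a ∉ B i := by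
    by_cases ha : ∃ k, a ∈ B k
    · obtain ⟨k, hk⟩ := ha
      exact ⟨k, fun i hik hi => Set.disjoint_left.1 (hdisj i k hik) hi hk⟩
    · exact ⟨0, fun i _ hi => ha ⟨i, hi⟩⟩
  have hne {i j : Fin t} (hij : i ≠ j) : k.succAbove i ≠ k.succAbove j :=
    fun h => hij (Fin.succAbove_right_injective h)
  exact ⟨B ∘ k.succAbove,
    fun i => Set.subset_sdiff_singleton (hBA _) (hk _ (Fin.succAbove_ne k i)),
    fun i => hconn _, fun i j hij => hdisj _ _ (hne hij), fun i j hij => hadj _ _ (hne hij)⟩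

lemma HasCompleteMinorOn.of_branchSets {H : SimpleGraph V} {G : SimpleGraph W} {A : Set V}
    {A' : Set W} {t : ℕ} (β : V → Set W) (hsub : ∀ a ∈ A, β a ⊆ A')
    (hconn : ∀ a ∈ A, (G.induce (β a)).Connected) (hdisj : A.PairwiseDisjoint β)
    (hadj : ∀ a ∈ A, ∀ b ∈ A, H.Adj a b → ∃ x ∈ β a, ∃ y ∈ β b, G.Adj x y)
    (hH : HasCompleteMinorOn H A t) : HasCompleteMinorOn G A' t := by
  obtain ⟨B, hBA, hBconn, hBdisj, hBadj⟩ := hH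
  refine ⟨fun i => ⋃ a ∈ B i, β a, fun i => Set.iUnion₂_subset fun a ha => hsub a (hBA i ha),
    fun i => ?_, fun i j hij => ?_, fun i j hij => ?_⟩
  · exact connected_induce_biUnion (hBconn i) (fun a ha => hconn a (hBA i ha))
      fun a ha b hb => hadj a (hBA i ha) b (hBA i hb)
  · simp only [Set.disjoint_iUnion_left, Set.disjoint_iUnion_right]
    intro b hb a ha
    exact hdisj (hBA i ha) (hBA j hb) fun h => Set.disjoint_left.1 (hBdisj i j hij) ha (h ▸ hb)
  · obtain ⟨a, ha, b, hb, hab⟩ := hBadj i j hij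
    obtain ⟨x, hx, y, hy, hxy⟩ := hadj a (hBA i ha) b (hBA j hb) hab
    exact ⟨x, Set.mem_biUnion ha hx, y, Set.mem_biUnion hb hy, hxy⟩

lemma HasCompleteMinorOn.mono {G G' : SimpleGraph V} {A A' : Set V} {t : ℕ} (hG : G ≤ G')
    (hA : A ⊆ A') (h : HasCompleteMinorOn G A t) : HasCompleteMinorOn G' A' t :=
  h.of_branchSets (fun a => {a}) (fun _ ha => Set.singleton_subset_iff.2 (hA ha))
    (fun a _ => connected_induce_singleton G' a) (fun _ _ _ _ => Set.disjoint_singleton.2)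
    fun a _ b _ hab => ⟨a, rfl, b, rfl, hG hab⟩

lemma hasCompleteMinorOn_of_isClique {G : SimpleGraph V} {A : Finset V}
    (hA : G.IsClique (A : Set V)) : HasCompleteMinorOn G A #A := by
  have hne (i j : Fin #A) (hij : i ≠ j) : (A.equivFin.symm i : V) ≠ A.equivFin.symm j :=
    fun h => hij (A.equivFin.symm.injective (Subtype.ext h))
  exact ⟨fun i => {(A.equivFin.symm i : V)},
    fun i => Set.singleton_subset_iff.2 (A.equivFin.symm i).2,
    fun i => connected_induce_singleton G _, fun i j hij => Set.disjoint_singleton.2 (hne i j hij),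
    fun i j hij => ⟨_, rfl, _, rfl,
      hA (A.equivFin.symm i).2 (A.equivFin.symm j).2 (hne i j hij)⟩⟩

/-- `G` with an edge added from `u` to every vertex of `Q` other than `u`. It models contractions:
contracting a connected set `X` onto a neighbour `u` makes `u` adjacent to all neighbours of `X`,
so the contracted graph is `addStar G u Q` on the remaining vertices, `Q` being the set of those
neighbours. -/
def addStar (G : SimpleGraph V) (u : V) (Q : Finset V) : SimpleGraph V :=
  G ⊔ SimpleGraph.fromRel fun a b => a = u ∧ b ∈ Q

lemma addStar_adj {G : SimpleGraph V} {u a b : V} {Q : Finset V} :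
    (addStar G u Q).Adj a b ↔ G.Adj a b ∨ a ≠ b ∧ (a = u ∧ b ∈ Q ∨ b = u ∧ a ∈ Q) := by
  simp [addStar]

lemma le_addStar (G : SimpleGraph V) (u : V) (Q : Finset V) : G ≤ addStar G u Q :=
  le_sup_left

lemma HasCompleteMinorOn.of_addStar {G : SimpleGraph V} {A X : Set V} {Q : Finset V} {u : V}
    {t : ℕ} (h : HasCompleteMinorOn (addStar G u Q) A t) (hX : (G.induce X).Connected)
    (hAX : Disjoint A X) (hu : ∃ x ∈ X, G.Adj u x) (hQ : ∀ q ∈ Q, ∃ x ∈ X, G.Adj q x) :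
    HasCompleteMinorOn G (A ∪ X) t := by
  set β : V → Set V := fun a => if a = u then {u} ∪ X else {a} with hβ
  have hβu : β u = {u} ∪ X := if_pos rfl
  have hβne {a : V} (ha : a ≠ u) : β a = {a} := if_neg ha
  have mem_β (a : V) : a ∈ β a := by
    by_cases ha : a = u
    · simp [ha, hβu]
    · simp [hβne ha]
  have hβX (a : V) : β a ⊆ {a} ∪ X := by
    by_cases ha : a = u
    · rw [ha, hβu]
    · simp [hβne ha]
  have hdisj {a b : V} (ha : a ∈ A) (hab : a ≠ b) (hau : a ≠ u) : Disjoint (β a) (β b) := by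
    rw [hβne hau, Set.disjoint_singleton_left]
    intro hmem
    exact (hβX b hmem).elim hab (Set.disjoint_left.1 hAX ha)
  refine h.of_branchSets β (fun a ha => (hβX a).trans ?_) (fun a _ => ?_)
    (fun a ha b hb hab => ?_) fun a _ b _ hab => ?_
  · exact Set.union_subset_union_left X (Set.singleton_subset_iff.2 ha)
  · by_cases hau : a = u
    · obtain ⟨x, hx, hux⟩ := hu
      rw [hau, hβu]
      exact SimpleGraph.connected_induce_union (connected_induce_singleton G u).preconnected
        hX.preconnected rfl hx hux
    · rw [hβne hau]
      exact connected_induce_singleton G a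
  · by_cases hau : a = u
    · exact (hdisj hb hab.symm (hau ▸ hab.symm)).symm
    · exact hdisj ha hab hau
  · rcases addStar_adj.1 hab with hab | ⟨-, ⟨rfl, hbQ⟩ | ⟨rfl, haQ⟩⟩
    · exact ⟨a, mem_β a, b, mem_β b, hab⟩
    · obtain ⟨x, hx, hbx⟩ := hQ b hbQ
      exact ⟨x, hβu ▸ Or.inr hx, b, mem_β b, hbx.symm⟩
    · obtain ⟨x, hx, hax⟩ := hQ a haQ
      exact ⟨a, mem_β a, x, hβu ▸ Or.inr hx, hax⟩

end Minor

section EdgeCount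

/-- The neighbours of `a` in the finite set `X`, so that `#(nbrs G X a)` is the degree of `a`
into `X`. -/
noncomputable def nbrs (G : SimpleGraph V) (X : Finset V) (a : V) : Finset V :=
  {b ∈ X | G.Adj a b}

/-- The edges of `G` with both ends in the finite set `X`. -/
noncomputable def edgesIn (G : SimpleGraph V) (X : Finset V) : Finset (Sym2 V) :=
  {e ∈ X.sym2 | e ∈ G.edgeSet}

variable {G H : SimpleGraph V} {X Y : Finset V} {a b x : V}

@[simp]
lemma mem_nbrs : b ∈ nbrs G X a ↔ b ∈ X ∧ G.Adj a b :=
  mem_filter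

lemma nbrs_subset : nbrs G X a ⊆ X :=
  filter_subset _ _

lemma notMem_nbrs_self : a ∉ nbrs G X a :=
  fun h => (mem_nbrs.1 h).2.ne rfl

lemma nbrs_eq_self (h : ∀ b ∈ X, G.Adj a b) : nbrs G X a = X :=
  filter_true_of_mem h

lemma nbrs_erase_self : nbrs G (X.erase a) a = nbrs G X a := by
  ext b
  simp only [mem_nbrs, mem_erase]
  exact ⟨fun h => ⟨h.1.2, h.2⟩, fun h => ⟨⟨h.2.ne', h.1⟩, h.2⟩⟩

lemma nbrs_mono (hGH : G ≤ H) (hXY : X ⊆ Y) : nbrs G X a ⊆ nbrs H Y a := fun _ hb =>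
  mem_nbrs.2 ⟨hXY (mem_nbrs.1 hb).1, hGH (mem_nbrs.1 hb).2⟩

lemma card_nbrs_union (hXY : Disjoint X Y) :
    #(nbrs G (X ∪ Y) a) = #(nbrs G X a) + #(nbrs G Y a) := by
  rw [nbrs, filter_union, card_union_of_disjoint (disjoint_filter_filter hXY)]
  rfl

lemma card_nbrs_add_card_nbrs_sdiff (hYX : Y ⊆ X) :
    #(nbrs G Y a) + #(nbrs G (X \ Y) a) = #(nbrs G X a) := by
  rw [← card_nbrs_union disjoint_sdiff, union_sdiff_of_subset hYX]

lemma sum_card_nbrs_comm (G : SimpleGraph V) (X Y : Finset V) :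
    ∑ a ∈ X, #(nbrs G Y a) = ∑ b ∈ Y, #(nbrs G X b) := by
  simp only [nbrs, card_filter]
  rw [sum_comm]
  simp only [G.adj_comm]

lemma edgesIn_univ [Fintype V] (G : SimpleGraph V) : edgesIn G univ = G.edgeFinset := by
  ext e
  simp [edgesIn]

lemma exists_le_card_edgesIn_eq (G : SimpleGraph V) (X : Finset V) {m : ℕ}
    (hm : m ≤ #(edgesIn G X)) : ∃ H ≤ G, #(edgesIn H X) = m := by
  obtain ⟨F, hF, rfl⟩ := exists_subset_card_eq hm
  have hFG (e : Sym2 V) (he : e ∈ F) : e ∈ X.sym2 ∧ e ∈ G.edgeSet := mem_filter.1 (hF he)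
  refine ⟨SimpleGraph.fromEdgeSet F, ?_, congrArg card ?_⟩
  · exact fun a b hab => (hFG _ (SimpleGraph.fromEdgeSet_adj _ |>.1 hab).1).2
  · ext e
    simp only [edgesIn, SimpleGraph.edgeSet_fromEdgeSet, mem_filter, Set.mem_sdiff, mem_coe]
    exact ⟨fun h => h.2.1, fun h => ⟨(hFG e h).1, h, G.not_isDiag_of_mem_edgeSet (hFG e h).2⟩⟩

lemma edgesIn_insert (G : SimpleGraph V) (X : Finset V) (x : V) :
    edgesIn G (insert x X) = edgesIn G X ∪ (nbrs G X x).image (s(x, ·)) := by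
  ext e
  induction e using Sym2.ind with | _ a b
  simp only [edgesIn, mem_filter, mk_mem_sym2_iff, mem_insert, SimpleGraph.mem_edgeSet, mem_union,
    mem_image, mem_nbrs, Sym2.eq_iff]
  constructor
  · rintro ⟨⟨rfl | ha, rfl | hb⟩, hab⟩
    · exact (hab.ne rfl).elim
    · exact Or.inr ⟨b, ⟨hb, hab⟩, Or.inl ⟨rfl, rfl⟩⟩
    · exact Or.inr ⟨a, ⟨ha, hab.symm⟩, Or.inr ⟨rfl, rfl⟩⟩
    · exact Or.inl ⟨⟨ha, hb⟩, hab⟩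
  · rintro (⟨⟨ha, hb⟩, hab⟩ | ⟨c, ⟨hc, hxc⟩, ⟨rfl, rfl⟩ | ⟨rfl, rfl⟩⟩)
    · exact ⟨⟨Or.inr ha, Or.inr hb⟩, hab⟩
    · exact ⟨⟨Or.inl rfl, Or.inr hc⟩, hxc⟩
    · exact ⟨⟨Or.inr hc, Or.inl rfl⟩, hxc.symm⟩

lemma card_edgesIn_insert (hx : x ∉ X) :
    #(edgesIn G (insert x X)) = #(edgesIn G X) + #(nbrs G X x) := by
  rw [edgesIn_insert, card_union_of_disjoint, card_image_of_injective]
  · exact fun a b hab => Sym2.congr_right.1 hab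
  · refine disjoint_left.2 fun e he hex => hx ?_
    obtain ⟨b, -, rfl⟩ := mem_image.1 hex
    exact (mk_mem_sym2_iff.1 (mem_filter.1 he).1).1

lemma card_edgesIn_erase_add (hx : x ∈ X) :
    #(edgesIn G (X.erase x)) + #(nbrs G X x) = #(edgesIn G X) := by
  rw [← nbrs_erase_self, ← card_edgesIn_insert (notMem_erase x X), insert_erase hx]

lemma card_edgesIn_union (hXY : Disjoint X Y) :
    #(edgesIn G (X ∪ Y)) = #(edgesIn G X) + #(edgesIn G Y) + ∑ a ∈ X, #(nbrs G Y a) := by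
  induction X using Finset.induction_on with
  | empty => simp [edgesIn]
  | insert x X hx ih =>
    rw [disjoint_insert_left] at hXY
    rw [insert_union, card_edgesIn_insert (by simp [hx, hXY.1]), ih hXY.2,
      card_nbrs_union hXY.2, card_edgesIn_insert hx, sum_insert hx]
    ring

lemma sum_card_nbrs (G : SimpleGraph V) (X : Finset V) :
    ∑ a ∈ X, #(nbrs G X a) = 2 * #(edgesIn G X) := by
  induction X using Finset.induction_on with
  | empty => simp [edgesIn]
  | insert x X hx ih =>
    have hadd (a : V) : #(nbrs G (insert x X) a) = #(nbrs G {x} a) + #(nbrs G X a) := by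
      rw [insert_eq, card_nbrs_union (disjoint_singleton_left.2 hx)]
    have hself : nbrs G (insert x X) x = nbrs G X x := by
      rw [← nbrs_erase_self, erase_insert hx]
    rw [sum_insert hx, hself]
    simp only [hadd, sum_add_distrib]
    rw [sum_card_nbrs_comm, sum_singleton, ih, card_edgesIn_insert hx]
    ring

lemma card_edgesIn_le_add_sum (hYX : Y ⊆ X) :
    #(edgesIn G X) ≤ #(edgesIn G (X \ Y)) + ∑ y ∈ Y, #(nbrs G X y) := by
  have hunion := card_edgesIn_union (G := G) (disjoint_sdiff : Disjoint Y (X \ Y))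
  have hsum : ∑ y ∈ Y, #(nbrs G X y) = 2 * #(edgesIn G Y) + ∑ y ∈ Y, #(nbrs G (X \ Y) y) := by
    simp only [← card_nbrs_add_card_nbrs_sdiff hYX, sum_add_distrib, sum_card_nbrs]
  rw [union_sdiff_of_subset hYX] at hunion
  omega

lemma card_nbrs_add_card_nbrs_compl (ha : a ∈ X) :
    #(nbrs G X a) + #(nbrs Gᶜ X a) + 1 = #X := by
  have hnadj : {b ∈ X.erase a | ¬G.Adj a b} = nbrs Gᶜ X a := by
    ext b
    simp only [mem_nbrs, mem_filter, mem_erase, SimpleGraph.compl_adj, ne_comm (a := a)]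
    tauto
  rw [← nbrs_erase_self, nbrs, ← hnadj, card_filter_add_card_filter_not, card_erase_add_one ha]

lemma two_mul_card_edgesIn_add_compl (G : SimpleGraph V) (X : Finset V) :
    2 * #(edgesIn G X) + 2 * #(edgesIn Gᶜ X) + #X = #X * #X := by
  have hsum : ∑ a ∈ X, (#(nbrs G X a) + #(nbrs Gᶜ X a) + 1) = ∑ _a ∈ X, #X :=
    sum_congr rfl fun a ha => card_nbrs_add_card_nbrs_compl ha
  simpa only [sum_add_distrib, sum_card_nbrs, sum_const, smul_eq_mul, mul_one] using hsum

lemma card_edgesIn_addStar {u : V} {Q : Finset V} (hu : u ∈ X) (hQ : Q ⊆ X) :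
    #(edgesIn (addStar G u Q) X) = #(edgesIn G X) + #(nbrs Gᶜ Q u) := by
  have herase : edgesIn (addStar G u Q) (X.erase u) = edgesIn G (X.erase u) := by
    ext e
    induction e using Sym2.ind with | _ a b
    simp only [edgesIn, mem_filter, mk_mem_sym2_iff, mem_erase, SimpleGraph.mem_edgeSet,
      addStar_adj]
    tauto
  have hnbrs : nbrs (addStar G u Q) X u = nbrs G X u ∪ nbrs Gᶜ Q u := by
    ext b
    simp only [mem_nbrs, mem_union, addStar_adj, SimpleGraph.compl_adj]
    grind
  have hdisj : Disjoint (nbrs G X u) (nbrs Gᶜ Q u) := disjoint_left.2 fun b hb hb' =>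
    (SimpleGraph.compl_adj .. |>.1 (mem_nbrs.1 hb').2).2 (mem_nbrs.1 hb).2
  rw [← card_edgesIn_erase_add hu, ← card_edgesIn_erase_add (G := G) hu, herase, hnbrs,
    card_union_of_disjoint hdisj, add_assoc]

lemma card_edgesIn_le_contract (ha : a ∈ X) (hb : b ∈ X) (hab : G.Adj a b) :
    #(edgesIn G X) ≤ #(edgesIn (addStar G a (nbrs G X b)) (X.erase b)) + 1 +
      #(nbrs G (nbrs G X b) a) := by
  have hsub : nbrs G X b ⊆ X.erase b := fun y hy =>
    mem_erase.2 ⟨(mem_nbrs.1 hy).2.ne', nbrs_subset hy⟩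
  have hsplit := card_nbrs_add_card_nbrs_compl (G := G) (mem_nbrs.2 ⟨ha, hab.symm⟩)
  rw [card_edgesIn_addStar (mem_erase.2 ⟨hab.ne, ha⟩) hsub, ← card_edgesIn_erase_add hb]
  omega

lemma HasCompleteMinorOn.of_contract {t : ℕ} (hb : b ∈ X) (hab : G.Adj a b)
    (h : HasCompleteMinorOn (addStar G a (nbrs G X b)) (X.erase b) t) :
    HasCompleteMinorOn G X t := by
  have hX := h.of_addStar (connected_induce_singleton G b) (by simp) ⟨b, rfl, hab⟩
    fun q hq => ⟨b, rfl, (mem_nbrs.1 hq).2.symm⟩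
  rwa [Set.union_singleton, ← coe_insert, insert_erase hb] at hX

end EdgeCount

section MinimalCounterexample

/-- A counterexample on `A` to the bound of `5n - 15` edges for graphs with `n ≥ 6` vertices and no
`K_7` minor, minimal in the number of vertices and with exactly `5n - 14` edges. -/
structure MinimalCounterexample (G : SimpleGraph V) (A : Finset V) : Prop where
  six_le_card : 6 ≤ #A
  card_edgesIn : #(edgesIn G A) + 14 = 5 * #A
  not_minor : ¬HasCompleteMinorOn G A 7
  bound_of_lt (H : SimpleGraph V) (B : Finset V) : 6 ≤ #B → #B < #A →
    ¬HasCompleteMinorOn H B 7 → #(edgesIn H B) + 15 ≤ 5 * #B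

namespace MinimalCounterexample

variable {G H : SimpleGraph V} {A B : Finset V} {a b v x : V}

lemma bound (hG : MinimalCounterexample G A) (hB : 6 ≤ #B) (hBA : #B < #A)
    (hminor : HasCompleteMinorOn H B 7 → HasCompleteMinorOn G A 7) :
    #(edgesIn H B) + 15 ≤ 5 * #B :=
  hG.bound_of_lt H B hB hBA fun h => hG.not_minor (hminor h)

lemma seven_le_card (hG : MinimalCounterexample G A) : 7 ≤ #A := by
  refine hG.six_le_card.lt_of_ne fun h => ?_
  have hedges := hG.card_edgesIn
  have hcompl := two_mul_card_edgesIn_add_compl G A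
  rw [← h] at hedges hcompl
  omega

lemma six_le_card_nbrs (hG : MinimalCounterexample G A) (hx : x ∈ A) : 6 ≤ #(nbrs G A x) := by
  have hcard := card_erase_add_one hx
  have hbound := hG.bound (H := G) (B := A.erase x) (by have := hG.seven_le_card; omega) (by omega)
    fun h => h.mono le_rfl (coe_subset.2 (erase_subset x A))
  have hedges := card_edgesIn_erase_add (G := G) hx
  have := hG.card_edgesIn
  omega

lemma five_le_card_common_nbrs (hG : MinimalCounterexample G A) (ha : a ∈ A) (hb : b ∈ A)
    (hab : G.Adj a b) : 5 ≤ #(nbrs G (nbrs G A b) a) := by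
  have hcard := card_erase_add_one hb
  have hbound := hG.bound (B := A.erase b) (by have := hG.seven_le_card; omega) (by omega)
    (HasCompleteMinorOn.of_contract hb hab)
  have hedges := card_edgesIn_le_contract ha hb hab
  have := hG.card_edgesIn
  omega

lemma card_nbrs_compl_add_six_le (hG : MinimalCounterexample G A) (hv : v ∈ A)
    (hx : x ∈ nbrs G A v) : #(nbrs Gᶜ (nbrs G A v) x) + 6 ≤ #(nbrs G A v) := by
  have hxv := mem_nbrs.1 hx
  have hcommon := hG.five_le_card_common_nbrs hxv.1 hv hxv.2.symm
  have hcompl := card_nbrs_add_card_nbrs_compl (G := G) hx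
  omega

lemma exists_not_adj (hG : MinimalCounterexample G A) :
    ∃ a ∈ A, ∃ b ∈ A, a ≠ b ∧ ¬G.Adj a b := by
  by_contra! hclique
  obtain ⟨B, hBA, hB⟩ := exists_subset_card_eq hG.seven_le_card
  have hminor := hasCompleteMinorOn_of_isClique (G := G) (A := B)
    fun a ha b hb hab => hclique a (hBA ha) b (hBA hb) hab
  exact hG.not_minor (hB ▸ hminor.mono le_rfl (coe_subset.2 hBA))

lemma exists_card_nbrs_le_nine (hG : MinimalCounterexample G A) :
    ∃ v ∈ A, #(nbrs G A v) ≤ 9 ∧ #(nbrs G A v) + 1 < #A := by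
  by_cases hA : 11 ≤ #A
  · have hsum : ∑ v ∈ A, #(nbrs G A v) < ∑ _v ∈ A, 10 := by
      rw [sum_card_nbrs, sum_const, smul_eq_mul]
      have := hG.card_edgesIn
      omega
    obtain ⟨v, hv, hlt⟩ := exists_lt_of_sum_lt hsum
    exact ⟨v, hv, by omega, by omega⟩
  · obtain ⟨a, ha, b, hb, hab, hnadj⟩ := hG.exists_not_adj
    have hcompl := card_nbrs_add_card_nbrs_compl (G := G) ha
    have hpos : 0 < #(nbrs Gᶜ A a) :=
      card_pos.2 ⟨b, mem_nbrs.2 ⟨hb, (SimpleGraph.compl_adj ..).2 ⟨hab, hnadj⟩⟩⟩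
    exact ⟨a, ha, by omega, by omega⟩

end MinimalCounterexample

/-- `K` is the vertex set of a connected component of `G[A]` with `v` and its neighbours removed. -/
structure FarComponent (G : SimpleGraph V) (A : Finset V) (v : V) (K : Finset V) : Prop where
  mem : v ∈ A
  subset : K ⊆ A
  notMem : v ∉ K
  disjoint : Disjoint K (nbrs G A v)
  connected : (G.induce (K : Set V)).Connected
  closed (a b : V) : a ∈ K → b ∈ A → G.Adj a b → b ∈ K ∪ nbrs G A v

lemma exists_farComponent {G : SimpleGraph V} {A : Finset V} {v : V} (hv : v ∈ A)
    (hdeg : #(nbrs G A v) + 1 < #A) : ∃ K, FarComponent G A v K := by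
  have hne : (A \ insert v (nbrs G A v)).Nonempty := by
    refine sdiff_nonempty.2 fun h => ?_
    have := card_le_card h
    rw [card_insert_of_notMem notMem_nbrs_self] at this
    omega
  obtain ⟨K, hKsub, hKconn, hKclosed⟩ := exists_connected_adj_closed G hne
  simp only [subset_iff, mem_sdiff, mem_insert, not_or] at hKsub hKclosed
  refine ⟨K, hv, fun a ha => (hKsub ha).1, fun h => (hKsub h).2.1 rfl,
    disjoint_left.2 fun a ha => (hKsub ha).2.2, hKconn, fun a b ha hb hab => ?_⟩
  by_cases hbN : b ∈ nbrs G A v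
  · exact mem_union_right _ hbN
  · refine mem_union_left _ (hKclosed a ha b ⟨hb, ?_, hbN⟩ hab)
    rintro rfl
    exact (hKsub ha).2.2 (mem_nbrs.2 ⟨(hKsub ha).1, hab.symm⟩)

end MinimalCounterexample

section Missed

/-- The vertices of `S` that are not adjacent to `X` although they have a non-neighbour in `S`:
contracting `X` onto a vertex of `S` adds no edge at them. -/
noncomputable def missed (G : SimpleGraph V) (S X : Finset V) : Finset V :=
  {y ∈ S | (∀ p ∈ X, ¬G.Adj y p) ∧ 1 ≤ #(nbrs Gᶜ S y)}

/-- The bounds on the set `T` of vertices of `S` missed by a suitable connected set which make the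
counting in the separating case work; `C` is the complement of the graph. -/
structure FewMissed (C : SimpleGraph V) (S T : Finset V) : Prop where
  subset : T ⊆ S
  card_le_three : #T ≤ 3
  card_nbrs_le_two (t : V) : t ∈ T → #(nbrs C S t) ≤ 2
  card_le_one : #S ≤ 6 → #T ≤ 1
  card_add_card_edgesIn_le : #S = 7 → #T + #(edgesIn C S) ≤ 10
  card_le_two_or : #S = 7 → #T ≤ 2 ∨ ∀ t ∈ T, #(nbrs C S t) ≤ 1

variable {G : SimpleGraph V} {N S W X : Finset V}

lemma compl_adj_of_mem_missed {t p : V} (hSX : Disjoint S X) (ht : t ∈ missed G S X)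
    (hp : p ∈ X) : Gᶜ.Adj t p := by
  obtain ⟨htS, htX, -⟩ := mem_filter.1 ht
  exact (SimpleGraph.compl_adj ..).2 ⟨fun h => disjoint_left.1 hSX htS (h ▸ hp), htX p hp⟩

lemma card_missed_le {p : V} (hSX : Disjoint S X) (hp : p ∈ X) :
    #(missed G S X) ≤ #(nbrs Gᶜ S p) :=
  card_le_card fun _ ht =>
    mem_nbrs.2 ⟨(mem_filter.1 ht).1, (compl_adj_of_mem_missed hSX ht hp).symm⟩

lemma card_le_card_edgesIn_compl_add_one (hW : W.Nonempty)
    (hconn : ¬(G.induce (W : Set V)).Connected) : #W ≤ #(edgesIn Gᶜ W) + 1 := by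
  obtain ⟨K, hKW, hKconn, hKclosed⟩ := exists_connected_adj_closed G hW
  have hK : 0 < #K := card_pos.2 (coe_nonempty.1 (Set.nonempty_coe_sort.1 hKconn.nonempty))
  have hWK : 0 < #(W \ K) :=
    card_pos.2 (sdiff_nonempty.2 fun h => hconn (hKW.antisymm h ▸ hKconn))
  have hjoin (a : V) (ha : a ∈ K) : nbrs Gᶜ (W \ K) a = W \ K :=
    nbrs_eq_self fun b hb => by
      rw [mem_sdiff] at hb
      exact (SimpleGraph.compl_adj ..).2
        ⟨fun h => hb.2 (h ▸ ha), fun hab => hb.2 (hKclosed a ha b hb.1 hab)⟩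
  have hsum : ∑ a ∈ K, #(nbrs Gᶜ (W \ K) a) = #K * #(W \ K) := by
    rw [sum_congr rfl fun a ha => congrArg card (hjoin a ha), sum_const, smul_eq_mul]
  have hedges := card_edgesIn_union (G := Gᶜ) (disjoint_sdiff : Disjoint K (W \ K))
  have hcard := card_sdiff_add_card_eq_card hKW
  rw [union_sdiff_of_subset hKW, hsum] at hedges
  nlinarith

lemma fewMissed_of_connected (hSN : S ⊆ N) (hN9 : #N ≤ 9)
    (hN : ∀ x ∈ N, #(nbrs Gᶜ N x) + 6 ≤ #N) (hne : (N \ S).Nonempty) :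
    FewMissed Gᶜ S (missed G S (N \ S)) := by
  set T := missed G S (N \ S)
  have hTS : T ⊆ S := filter_subset _ _
  have hcard := card_sdiff_add_card_eq_card hSN
  have hdeg (t : V) (ht : t ∈ T) : 1 ≤ #(nbrs Gᶜ S t) ∧ #(nbrs Gᶜ S t) + 6 ≤ #S := by
    have hsplit := card_nbrs_add_card_nbrs_sdiff (G := Gᶜ) (a := t) hSN
    rw [nbrs_eq_self fun p => compl_adj_of_mem_missed disjoint_sdiff ht] at hsplit
    have := hN t (hSN (hTS ht))
    exact ⟨(mem_filter.1 ht).2.2, by omega⟩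
  have hpos := card_pos.2 hne
  have hT3 : #T ≤ 3 := by
    obtain ⟨p, hp⟩ := hne
    have hTp : #T ≤ #(nbrs Gᶜ N p) := (card_missed_le disjoint_sdiff hp).trans
      (card_le_card (nbrs_mono le_rfl hSN))
    have := hN p (sdiff_subset hp)
    omega
  refine ⟨hTS, hT3, fun t ht => ?_, fun h6 => ?_, fun h7 => ?_, fun h7 => Or.inr fun t ht => ?_⟩
  · have := hdeg t ht
    omega
  · have hT : T = ∅ := eq_empty_of_forall_notMem fun t ht => by
      have := hdeg t ht
      omega
    simp [hT]
  · have hsum := sum_sdiff (f := fun x => #(nbrs Gᶜ S x)) hTS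
    have hrest : ∑ x ∈ S \ T, #(nbrs Gᶜ S x) ≤ #(S \ T) • 3 :=
      sum_le_card_nsmul _ _ _ fun x hx => by
        have hx := sdiff_subset hx
        have := card_le_card (nbrs_mono (a := x) (le_refl Gᶜ) hSN)
        have := hN x (hSN hx)
        omega
    have hT : ∑ x ∈ T, #(nbrs Gᶜ S x) ≤ #T • 1 := sum_le_card_nsmul _ _ _ fun t ht => by
      have := hdeg t ht
      omega
    have := card_sdiff_add_card_eq_card hTS
    rw [sum_card_nbrs] at hsum
    simp only [smul_eq_mul] at hrest hT
    omega
  · have := hdeg t ht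
    omega

/- Here `s = #S`, `w = #(N \ S)`, and `m` is the least number of non-neighbours in `S` of a vertex
of `N \ S`; `e`, `eW`, `σ` count the non-adjacent pairs inside `S`, inside `N \ S` and between. -/
lemma fewMissed_arith {s w m e eW σ : ℕ} (h5 : 5 ≤ s) (hw : 2 ≤ w) (h9 : s + w ≤ 9)
    (hσ : w * m ≤ σ) (heW : w ≤ eW + 1) (hW : σ + 2 * eW + w * 6 ≤ w * (s + w))
    (hS : σ + 2 * e + s * 6 ≤ s * (s + w)) :
    m ≤ 2 ∧ (s ≤ 6 → m ≤ 1) ∧ (s = 7 → m + e ≤ 10) := by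
  have hs : s ≤ 7 := by omega
  have hw4 : w ≤ 4 := by omega
  interval_cases s <;> interval_cases w <;> omega

lemma exists_fewMissed_singleton (hSN : S ⊆ N) (h5 : 5 ≤ #S) (hN9 : #N ≤ 9)
    (hN : ∀ x ∈ N, #(nbrs Gᶜ N x) + 6 ≤ #N) (hne : (N \ S).Nonempty)
    (hconn : ¬(G.induce ((N \ S : Finset V) : Set V)).Connected) :
    ∃ p ∈ N \ S, FewMissed Gᶜ S (missed G S {p}) := by
  set W := N \ S
  have hcard : #W + #S = #N := card_sdiff_add_card_eq_card hSN
  have hsplit (x : V) : #(nbrs Gᶜ S x) + #(nbrs Gᶜ W x) = #(nbrs Gᶜ N x) :=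
    card_nbrs_add_card_nbrs_sdiff hSN
  have hdeg (x : V) (hx : x ∈ N) : #(nbrs Gᶜ S x) + #(nbrs Gᶜ W x) + 6 ≤ #S + #W := by
    have := hN x hx
    have := hsplit x
    omega
  obtain ⟨p, hpW, hpmin⟩ := exists_min_image W (fun q => #(nbrs Gᶜ S q)) hne
  refine ⟨p, hpW, ?_⟩
  have hSp : Disjoint S {p} := disjoint_singleton_right.2 (mem_sdiff.1 hpW).2
  have hTp : #(missed G S {p}) ≤ #(nbrs Gᶜ S p) := card_missed_le hSp (mem_singleton_self p)
  have hedgesW : #W ≤ #(edgesIn Gᶜ W) + 1 := card_le_card_edgesIn_compl_add_one hne hconn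
  have hmin : #W • #(nbrs Gᶜ S p) ≤ ∑ q ∈ W, #(nbrs Gᶜ S q) := card_nsmul_le_sum _ _ _ hpmin
  have hsumW := sum_le_card_nsmul W _ _ fun q hq => hdeg q (sdiff_subset hq)
  have hsumS := sum_le_card_nsmul S _ _ fun x hx => hdeg x (hSN hx)
  have hW2 : 2 ≤ #W := by
    by_contra! hlt
    have := card_pos.2 hne
    obtain ⟨q, hq⟩ := card_eq_one.1 (by omega : #W = 1)
    apply hconn
    rw [hq, coe_singleton]
    exact connected_induce_singleton G q
  simp only [sum_add_distrib, sum_card_nbrs, sum_const, smul_eq_mul] at hmin hsumW hsumS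
  rw [sum_card_nbrs_comm Gᶜ S W] at hsumS
  obtain ⟨hm2, hm6, hm7⟩ := fewMissed_arith (e := #(edgesIn Gᶜ S)) h5 hW2 (by omega) hmin hedgesW
    hsumW (by omega)
  refine ⟨filter_subset _ _, by omega, fun t ht => ?_, fun h6 => hTp.trans (hm6 h6),
    fun h7 => (Nat.add_le_add_right hTp _).trans (hm7 h7), fun _ => Or.inl (hTp.trans hm2)⟩
  have htp : Gᶜ.Adj t p := compl_adj_of_mem_missed hSp ht (mem_singleton_self p)
  have hpos : 0 < #(nbrs Gᶜ W t) := card_pos.2 ⟨p, mem_nbrs.2 ⟨hpW, htp⟩⟩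
  have := hdeg t (hSN (mem_filter.1 ht).1)
  omega

lemma exists_connected_fewMissed (hSN : S ⊂ N) (h5 : 5 ≤ #S) (hN9 : #N ≤ 9)
    (hN : ∀ x ∈ N, #(nbrs Gᶜ N x) + 6 ≤ #N) :
    ∃ X ⊆ N \ S, (G.induce (X : Set V)).Connected ∧ FewMissed Gᶜ S (missed G S X) := by
  have hne : (N \ S).Nonempty := sdiff_nonempty.2 hSN.not_subset
  by_cases hconn : (G.induce ((N \ S : Finset V) : Set V)).Connected
  · exact ⟨N \ S, Subset.rfl, hconn, fewMissed_of_connected hSN.subset hN9 hN hne⟩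
  · obtain ⟨p, hp, hfew⟩ := exists_fewMissed_singleton hSN.subset h5 hN9 hN hne hconn
    refine ⟨{p}, singleton_subset_iff.2 hp, ?_, hfew⟩
    rw [coe_singleton]
    exact connected_induce_singleton G p

end Missed

section Separation

/-- The neighbours of `v` that have a neighbour in `K`; when `K` is a component of
`G[A]` without `v` and its neighbours, these separate `K` from the rest of `G[A]`. -/
noncomputable def attachments (G : SimpleGraph V) (A : Finset V) (v : V) (K : Finset V) :
    Finset V :=
  {y ∈ nbrs G A v | ∃ x ∈ K, G.Adj y x}

variable {G : SimpleGraph V} {A B K X : Finset V} {u v x : V}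

lemma attachments_subset_nbrs : attachments G A v K ⊆ nbrs G A v :=
  filter_subset _ _

lemma attachments_subset : attachments G A v K ⊆ A :=
  attachments_subset_nbrs.trans nbrs_subset

lemma hasCompleteMinorOn_of_contract_vertex {S : Finset V} {t : ℕ} (hv : v ∈ A) (hBA : B ⊆ A)
    (hvB : v ∉ B) (hS : S ⊆ nbrs G A v) (hu : u ∈ S)
    (h : HasCompleteMinorOn (addStar G u S) B t) : HasCompleteMinorOn G A t := by
  have hadj (q : V) (hq : q ∈ S) : ∃ x ∈ ({v} : Set V), G.Adj q x :=
    ⟨v, rfl, (mem_nbrs.1 (hS hq)).2.symm⟩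
  refine (h.of_addStar (connected_induce_singleton G v) ?_ (hadj u hu) hadj).mono le_rfl ?_
  · exact Set.disjoint_singleton_right.2 hvB
  · exact Set.union_subset (coe_subset.2 hBA) (Set.singleton_subset_iff.2 hv)

namespace FarComponent

lemma disjoint_attachments (hK : FarComponent G A v K) : Disjoint K (attachments G A v K) :=
  hK.disjoint.mono_right attachments_subset_nbrs

lemma mem_union_attachments (hK : FarComponent G A v K) {a b : V} (ha : a ∈ K) (hb : b ∈ A)
    (hab : G.Adj a b) : b ∈ K ∪ attachments G A v K := by
  refine (mem_union.1 (hK.closed a b ha hb hab)).elim (mem_union_left _) fun hbN => ?_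
  exact mem_union_right _ (mem_filter.2 ⟨hbN, a, ha, hab.symm⟩)

lemma notMem_union_attachments (hK : FarComponent G A v K) : v ∉ K ∪ attachments G A v K :=
  fun h => (mem_union.1 h).elim hK.notMem fun hv => notMem_nbrs_self (attachments_subset_nbrs hv)

lemma card_edgesIn_add_card_edgesIn_attachments (hK : FarComponent G A v K) :
    #(edgesIn G A) + #(edgesIn G (attachments G A v K)) =
      #(edgesIn G (K ∪ attachments G A v K)) + #(edgesIn G (A \ K)) := by
  have hA := card_edgesIn_union (G := G) (disjoint_sdiff : Disjoint K (A \ K))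
  rw [union_sdiff_of_subset hK.subset] at hA
  have hKS := card_edgesIn_union (G := G) hK.disjoint_attachments
  have hnbrs (a : V) (ha : a ∈ K) : nbrs G (A \ K) a = nbrs G (attachments G A v K) a := by
    ext b
    simp only [mem_nbrs, mem_sdiff, and_congr_left_iff]
    intro hab
    exact ⟨fun hb => (mem_union.1 (hK.mem_union_attachments ha hb.1 hab)).resolve_left hb.2,
      fun hb => ⟨attachments_subset hb, disjoint_right.1 hK.disjoint_attachments hb⟩⟩
  rw [sum_congr rfl fun a ha => congrArg card (hnbrs a ha)] at hA
  omega

lemma nonempty (hK : FarComponent G A v K) : K.Nonempty :=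
  coe_nonempty.1 (Set.nonempty_coe_sort.1 hK.connected.nonempty)

lemma six_le_card_union (hK : FarComponent G A v K) (hG : MinimalCounterexample G A) :
    6 ≤ #(K ∪ attachments G A v K) := by
  obtain ⟨a, ha⟩ := hK.nonempty
  refine (hG.six_le_card_nbrs (hK.subset ha)).trans (card_le_card fun b hb => ?_)
  exact hK.mem_union_attachments ha (mem_nbrs.1 hb).1 (mem_nbrs.1 hb).2

lemma card_union_lt (hK : FarComponent G A v K) : #(K ∪ attachments G A v K) < #A :=
  card_lt_card ⟨union_subset hK.subset attachments_subset,
    fun h => hK.notMem_union_attachments (h hK.mem)⟩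

lemma six_le_card_sdiff (hK : FarComponent G A v K) (hG : MinimalCounterexample G A) :
    6 ≤ #(A \ K) :=
  (hG.six_le_card_nbrs hK.mem).trans (card_le_card fun _ hb =>
    mem_sdiff.2 ⟨nbrs_subset hb, disjoint_right.1 hK.disjoint hb⟩)

lemma card_sdiff_lt (hK : FarComponent G A v K) : #(A \ K) < #A := by
  have := card_sdiff_add_card_eq_card hK.subset
  have := hK.nonempty.card_pos
  omega

lemma hasCompleteMinorOn_of_contract_component (hK : FarComponent G A v K)
    (hB : B ⊆ A \ K) (hu : u ∈ attachments G A v K) {t : ℕ}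
    (h : HasCompleteMinorOn (addStar G u (attachments G A v K)) B t) :
    HasCompleteMinorOn G A t := by
  refine (h.of_addStar hK.connected (disjoint_coe.2 (disjoint_of_subset_left hB sdiff_disjoint))
    (mem_filter.1 hu).2 fun q hq => (mem_filter.1 hq).2).mono le_rfl ?_
  exact Set.union_subset (coe_subset.2 (hB.trans sdiff_subset)) (coe_subset.2 hK.subset)

lemma card_edgesIn_sdiff_add_le (hK : FarComponent G A v K) (hG : MinimalCounterexample G A)
    (hu : u ∈ attachments G A v K) :
    #(edgesIn G (A \ K)) + #(nbrs Gᶜ (attachments G A v K) u) + 15 ≤ 5 * #(A \ K) := by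
  have hS : attachments G A v K ⊆ A \ K := fun y hy =>
    mem_sdiff.2 ⟨attachments_subset hy, disjoint_right.1 hK.disjoint_attachments hy⟩
  rw [← card_edgesIn_addStar (hS hu) hS]
  exact hG.bound (hK.six_le_card_sdiff hG) hK.card_sdiff_lt
    (hK.hasCompleteMinorOn_of_contract_component le_rfl hu)

lemma card_edgesIn_union_add_le (hK : FarComponent G A v K) (hG : MinimalCounterexample G A)
    (hu : u ∈ attachments G A v K) :
    #(edgesIn G (K ∪ attachments G A v K)) + #(nbrs Gᶜ (attachments G A v K) u) + 15 ≤
      5 * #(K ∪ attachments G A v K) := by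
  rw [← card_edgesIn_addStar (mem_union_right K hu) subset_union_right]
  exact hG.bound (hK.six_le_card_union hG) hK.card_union_lt
    (hasCompleteMinorOn_of_contract_vertex hK.mem (union_subset hK.subset attachments_subset)
      hK.notMem_union_attachments attachments_subset_nbrs hu)

lemma card_edgesIn_union_add_add_le (hK : FarComponent G A v K) (hG : MinimalCounterexample G A)
    {F : Finset V} (hu : u ∈ attachments G A v K) (hx : x ∈ attachments G A v K) (hxu : x ≠ u)
    (hX : (G.induce (X : Set V)).Connected) (hXN : X ⊆ nbrs G A v \ attachments G A v K)
    (hxX : ∃ p ∈ X, G.Adj x p) (hF : F ⊆ attachments G A v K) (huF : u ∉ F)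
    (hFX : ∀ y ∈ F, ∃ p ∈ X, G.Adj y p) :
    #(edgesIn G (K ∪ attachments G A v K)) + #(nbrs Gᶜ (attachments G A v K) u) +
      #(nbrs Gᶜ F x) + 15 ≤ 5 * #(K ∪ attachments G A v K) := by
  set S := attachments G A v K
  have hSB : S ⊆ K ∪ S := subset_union_right
  have hXN' : X ⊆ nbrs G A v := hXN.trans sdiff_subset
  have hle := le_addStar G u S
  have hcompl : nbrs (addStar G u S)ᶜ F x = nbrs Gᶜ F x := by
    ext y
    simp only [mem_nbrs, SimpleGraph.compl_adj, addStar_adj]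
    grind
  have hdisj : Disjoint (K ∪ S) X := disjoint_union_left.2
    ⟨hK.disjoint.mono_right hXN', disjoint_sdiff.mono_right hXN⟩
  rw [← card_edgesIn_addStar (hSB hu) hSB, ← hcompl,
    ← card_edgesIn_addStar (hSB hx) (hF.trans hSB)]
  refine hG.bound (hK.six_le_card_union hG) hK.card_union_lt fun h => ?_
  have hminor := h.of_addStar (hX.mono (SimpleGraph.comap_monotone _ hle)) (disjoint_coe.2 hdisj)
    (hxX.imp fun p hp => ⟨hp.1, hle hp.2⟩) fun q hq => (hFX q hq).imp fun p hp => ⟨hp.1, hle hp.2⟩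
  rw [← coe_union] at hminor
  refine hasCompleteMinorOn_of_contract_vertex hK.mem
    (union_subset (union_subset hK.subset attachments_subset) (hXN'.trans nbrs_subset))
    (fun h => ?_) attachments_subset_nbrs hu hminor
  exact (mem_union.1 h).elim hK.notMem_union_attachments fun hv => notMem_nbrs_self (hXN' hv)

lemma attachments_nonempty (hK : FarComponent G A v K) (hG : MinimalCounterexample G A) :
    (attachments G A v K).Nonempty := by
  by_contra! hS
  have hsdiff := hG.bound (H := G) (hK.six_le_card_sdiff hG) hK.card_sdiff_lt
    fun h => h.mono le_rfl (coe_subset.2 sdiff_subset)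
  have hunion := hG.bound (H := G) (hK.six_le_card_union hG) hK.card_union_lt
    fun h => h.mono le_rfl (coe_subset.2 (union_subset hK.subset attachments_subset))
  have hcount := hK.card_edgesIn_add_card_edgesIn_attachments
  have := hG.card_edgesIn
  have := card_sdiff_add_card_eq_card hK.subset
  rw [hS, union_empty] at hunion hcount
  omega

lemma card_attachments_sq_add_le (hK : FarComponent G A v K) (hG : MinimalCounterexample G A)
    (hu : u ∈ attachments G A v K) {c : ℕ}
    (hc : #(edgesIn G (K ∪ attachments G A v K)) + c + 15 ≤ 5 * #(K ∪ attachments G A v K)) :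
    #(attachments G A v K) * #(attachments G A v K) + 32 +
        2 * #(nbrs Gᶜ (attachments G A v K) u) + 2 * c ≤
      11 * #(attachments G A v K) + 2 * #(edgesIn Gᶜ (attachments G A v K)) := by
  have hsdiff := hK.card_edgesIn_sdiff_add_le hG hu
  have hcount := hK.card_edgesIn_add_card_edgesIn_attachments
  have hcompl := two_mul_card_edgesIn_add_compl G (attachments G A v K)
  have hcardA := card_sdiff_add_card_eq_card hK.subset
  have hcardB := card_union_of_disjoint hK.disjoint_attachments
  have := hG.card_edgesIn
  omega

end FarComponent

end Separation

section SeparationCount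

/- In the next two lemmas `s = #S`, `e` counts the edges of `C` inside `S`, `D` is their maximum
degree, `τ = #T`, and `r` and `eR` count the vertices and edges left in `S` after deleting `T` (and,
in the second one, a vertex of degree `D`); `q` is the degree sum over `T`. -/
lemma separation_arith_of_mem {s D e τ eR q r : ℕ} (hs : s ≤ 8) (hD : D ≤ 2)
    (hmain : s * s + 32 + 4 * D ≤ 11 * s + 2 * e) (heD : 2 * e ≤ s * D) (hτ : τ ≤ 3)
    (h6 : s ≤ 6 → τ ≤ 1) (h7 : s = 7 → τ ≤ 2 ∨ D ≤ 1) (he : e ≤ eR + q) (hq : q ≤ τ * D)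
    (hr : r + τ = s) (hR : 4 * eR + r * (s * s + 32 + 4 * D) ≤ r * (11 * s + 2 * e)) :
    False := by
  interval_cases s <;> interval_cases D <;> first | omega | skip
  all_goals
    interval_cases τ <;> first | omega | (obtain rfl := Nat.eq_sub_of_add_eq hr; omega)

lemma separation_arith_of_notMem {s D e τ eR q r : ℕ} (hs : s ≤ 8) (hD : D ≤ 3)
    (hmain : s * s + 32 + 4 * D ≤ 11 * s + 2 * e) (heD : 2 * e ≤ s * D) (hτ : τ ≤ 3)
    (heτ : 2 * e + τ ≤ 3 * s) (h6 : s ≤ 6 → τ ≤ 1) (h7 : s = 7 → τ + e ≤ 10)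
    (he : e ≤ eR + (D + q)) (hq : q ≤ τ * (D - 1))
    (hr : r + (τ + 1) = s) (hR : 4 * eR + r * (s * s + 32 + 4 * D) ≤ r * (11 * s + 2 * e)) :
    False := by
  interval_cases s <;> interval_cases D <;> first | omega | skip
  all_goals
    interval_cases τ <;> first | omega | (obtain rfl := Nat.eq_sub_of_add_eq hr; omega)

variable {C : SimpleGraph V} {S T R : Finset V}

lemma two_mul_card_edgesIn_le {D : ℕ} (hD : ∀ x ∈ S, #(nbrs C S x) ≤ D) :
    2 * #(edgesIn C S) ≤ #S * D := by
  rw [← sum_card_nbrs]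
  exact sum_le_card_nsmul _ _ _ hD

lemma four_mul_card_edgesIn_add_le {m k : ℕ}
    (hR : ∀ x ∈ R, m + 2 * #(nbrs C R x) ≤ k) :
    4 * #(edgesIn C R) + #R * m ≤ #R * k := by
  have hsum := sum_le_card_nsmul R _ k hR
  rw [sum_add_distrib, ← mul_sum, sum_card_nbrs, sum_const, smul_eq_mul, smul_eq_mul] at hsum
  omega

lemma FewMissed.two_mul_card_edgesIn_add_le (hT : FewMissed C S T)
    (h3 : ∀ x ∈ S, #(nbrs C S x) ≤ 3) : 2 * #(edgesIn C S) + #T ≤ 3 * #S := by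
  have hin : ∑ t ∈ T, #(nbrs C S t) ≤ #T • 2 := sum_le_card_nsmul _ _ _ hT.card_nbrs_le_two
  have hout : ∑ x ∈ S \ T, #(nbrs C S x) ≤ #(S \ T) • 3 :=
    sum_le_card_nsmul _ _ _ fun x hx => h3 x (sdiff_subset hx)
  have hcard := card_sdiff_add_card_eq_card hT.subset
  rw [← sum_card_nbrs, ← sum_sdiff hT.subset]
  simp only [smul_eq_mul] at hin hout
  omega

lemma FewMissed.false_of_mem (hT : FewMissed C S T) (hs : #S ≤ 8) {u : V} (hu : u ∈ T)
    (hmax : ∀ x ∈ S, #(nbrs C S x) ≤ #(nbrs C S u))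
    (hmain : #S * #S + 32 + 4 * #(nbrs C S u) ≤ 11 * #S + 2 * #(edgesIn C S))
    (hR : ∀ x ∈ S \ T, #S * #S + 32 + 4 * #(nbrs C S u) + 2 * #(nbrs C (S \ T) x) ≤
      11 * #S + 2 * #(edgesIn C S)) : False := by
  have hsum : ∑ t ∈ T, #(nbrs C S t) ≤ #T • #(nbrs C S u) :=
    sum_le_card_nsmul _ _ _ fun t ht => hmax t (hT.subset ht)
  exact separation_arith_of_mem hs (hT.card_nbrs_le_two u hu) hmain (two_mul_card_edgesIn_le hmax)
    hT.card_le_three hT.card_le_one (fun h => (hT.card_le_two_or h).imp_right (· u hu))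
    (card_edgesIn_le_add_sum hT.subset) hsum (card_sdiff_add_card_eq_card hT.subset)
    (four_mul_card_edgesIn_add_le hR)

lemma FewMissed.false_of_notMem (hT : FewMissed C S T) (hs : #S ≤ 8)
    (h3 : ∀ x ∈ S, #(nbrs C S x) ≤ 3) {u : V} (hu : u ∈ S) (huT : u ∉ T)
    (hmax : ∀ x ∈ S, #(nbrs C S x) ≤ #(nbrs C S u))
    (hTlt : ∀ t ∈ T, #(nbrs C S t) < #(nbrs C S u))
    (hmain : #S * #S + 32 + 4 * #(nbrs C S u) ≤ 11 * #S + 2 * #(edgesIn C S))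
    (hR : ∀ x ∈ S \ insert u T, #S * #S + 32 + 4 * #(nbrs C S u) +
      2 * #(nbrs C (S \ insert u T) x) ≤ 11 * #S + 2 * #(edgesIn C S)) : False := by
  have huTS : insert u T ⊆ S := insert_subset hu hT.subset
  have hsum : ∑ t ∈ T, #(nbrs C S t) ≤ #T • (#(nbrs C S u) - 1) :=
    sum_le_card_nsmul _ _ _ fun t ht => Nat.le_sub_one_of_lt (hTlt t ht)
  have hedges := card_edgesIn_le_add_sum (G := C) huTS
  have hcard := card_sdiff_add_card_eq_card huTS
  rw [sum_insert huT] at hedges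
  rw [card_insert_of_notMem huT] at hcard
  exact separation_arith_of_notMem hs (h3 u hu) hmain (two_mul_card_edgesIn_le hmax)
    hT.card_le_three (hT.two_mul_card_edgesIn_add_le h3) hT.card_le_one
    hT.card_add_card_edgesIn_le hedges hsum hcard (four_mul_card_edgesIn_add_le hR)

end SeparationCount

section SeparatingCase

variable {G : SimpleGraph V} {A K X : Finset V} {u u' v x : V}

lemma FarComponent.card_attachments_sq_add_add_le (hK : FarComponent G A v K)
    (hG : MinimalCounterexample G A) (hX : (G.induce (X : Set V)).Connected)
    (hXN : X ⊆ nbrs G A v \ attachments G A v K) (hu' : u' ∈ attachments G A v K)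
    (hu : u ∈ attachments G A v K)
    (hx : x ∈ attachments G A v K \ insert u (missed G (attachments G A v K) X)) :
    #(attachments G A v K) * #(attachments G A v K) + 32 +
        2 * #(nbrs Gᶜ (attachments G A v K) u') + 2 * #(nbrs Gᶜ (attachments G A v K) u) +
        2 * #(nbrs Gᶜ (attachments G A v K \ insert u (missed G (attachments G A v K) X)) x) ≤
      11 * #(attachments G A v K) + 2 * #(edgesIn Gᶜ (attachments G A v K)) := by
  set S := attachments G A v K
  set R := S \ insert u (missed G S X)
  have hRS : R ⊆ S := sdiff_subset
  have hadjX (y : V) (hy : y ∈ R) (hpos : 1 ≤ #(nbrs Gᶜ S y)) : ∃ p ∈ X, G.Adj y p := by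
    by_contra! hno
    exact (mem_sdiff.1 hy).2 (mem_insert_of_mem (mem_filter.2 ⟨hRS hy, hno, hpos⟩))
  rcases Nat.eq_zero_or_pos #(nbrs Gᶜ S x) with hzero | hpos
  · have hR : #(nbrs Gᶜ R x) = 0 :=
      Nat.le_zero.1 ((card_le_card (nbrs_mono le_rfl hRS)).trans hzero.le)
    rw [hR]
    exact hK.card_attachments_sq_add_le hG hu' (hK.card_edgesIn_union_add_le hG hu)
  · have hxu : x ≠ u := fun h => (mem_sdiff.1 hx).2 (mem_insert.2 (Or.inl h))
    have hbound := hK.card_edgesIn_union_add_add_le (F := nbrs Gᶜ R x) hG hu (hRS hx) hxu hX hXN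
      (hadjX x hx hpos) (nbrs_subset.trans hRS)
      (fun h => (mem_sdiff.1 (nbrs_subset h)).2 (mem_insert_self u _))
      fun y hy => hadjX y (nbrs_subset hy)
        (card_pos.2 ⟨x, mem_nbrs.2 ⟨hRS hx, (mem_nbrs.1 hy).2.symm⟩⟩)
    rw [nbrs_eq_self fun y hy => (mem_nbrs.1 hy).2, add_assoc #(edgesIn _ _)] at hbound
    have hmain : #S * #S + 32 + 2 * #(nbrs Gᶜ S u') + 2 * (#(nbrs Gᶜ S u) + #(nbrs Gᶜ R x)) ≤
        11 * #S + 2 * #(edgesIn Gᶜ S) :=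
      hK.card_attachments_sq_add_le hG hu' hbound
    omega

lemma FarComponent.five_le_card_attachments (hK : FarComponent G A v K)
    (hG : MinimalCounterexample G A) : 5 ≤ #(attachments G A v K) := by
  obtain ⟨w, hw, hmax⟩ := exists_max_image _ (fun x => #(nbrs Gᶜ (attachments G A v K) x))
    (hK.attachments_nonempty hG)
  have hmain := hK.card_attachments_sq_add_le hG hw (hK.card_edgesIn_union_add_le hG hw)
  have hedges := two_mul_card_edgesIn_le hmax
  by_contra! hlt
  interval_cases #(attachments G A v K) <;> omega

lemma MinimalCounterexample.attachments_eq (hG : MinimalCounterexample G A)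
    (hv : #(nbrs G A v) ≤ 9) (hK : FarComponent G A v K) :
    attachments G A v K = nbrs G A v := by
  by_contra hne
  have hSN : attachments G A v K ⊂ nbrs G A v := attachments_subset_nbrs.ssubset_of_ne hne
  have hN (x : V) (hx : x ∈ nbrs G A v) := hG.card_nbrs_compl_add_six_le hK.mem hx
  obtain ⟨X, hXN, hX, hT⟩ :=
    exists_connected_fewMissed hSN (hK.five_le_card_attachments hG) hv hN
  have hR (u' : V) (hu' : u' ∈ attachments G A v K) (u : V) (hu : u ∈ attachments G A v K)
      (x : V) :=
    hK.card_attachments_sq_add_add_le (x := x) hG hX hXN hu' hu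
  set S := attachments G A v K
  have hs : #S ≤ 8 := Nat.le_of_lt_succ ((card_lt_card hSN).trans_le hv)
  have h3 (x : V) (hx : x ∈ S) : #(nbrs Gᶜ S x) ≤ 3 := by
    have := card_le_card (nbrs_mono (a := x) (le_refl Gᶜ) hSN.subset)
    have := hN x (hSN.subset hx)
    omega
  obtain ⟨w, hw, hmax⟩ := exists_max_image S (fun x => #(nbrs Gᶜ S x)) (hK.attachments_nonempty hG)
  have hmain : #S * #S + 32 + 2 * #(nbrs Gᶜ S w) + 2 * #(nbrs Gᶜ S w) ≤
      11 * #S + 2 * #(edgesIn Gᶜ S) :=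
    hK.card_attachments_sq_add_le hG hw (hK.card_edgesIn_union_add_le hG hw)
  by_cases hmem : ∃ u ∈ missed G S X, #(nbrs Gᶜ S u) = #(nbrs Gᶜ S w)
  · obtain ⟨u, hu, huw⟩ := hmem
    refine hT.false_of_mem hs hu (fun x hx => huw ▸ hmax x hx) (by omega) fun x hx => ?_
    have := hR w hw u (hT.subset hu) x (by rwa [insert_eq_of_mem hu])
    rw [insert_eq_of_mem hu] at this
    omega
  · push Not at hmem
    refine hT.false_of_notMem hs h3 hw (fun h => hmem w h rfl) hmax
      (fun t ht => (hmax t (hT.subset ht)).lt_of_ne (hmem t ht)) (by omega) fun x hx => ?_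
    have := hR w hw w hw x hx
    omega

end SeparatingCase

section NearlyRegular

/-- The graph induced by `C` on `N` has maximum degree at most `D` and is `D`-regular up to a total
degree deficiency of at most one. -/
structure NearlyRegular (C : SimpleGraph V) (N : Finset V) (D : ℕ) : Prop where
  card_nbrs_le (x : V) : x ∈ N → #(nbrs C N x) ≤ D
  card_mul_le : #N * D ≤ 2 * #(edgesIn C N) + 1

variable {C G : SimpleGraph V} {N Y : Finset V} {D : ℕ} {a b : V}

namespace NearlyRegular

lemma card_mul_le_sum (h : NearlyRegular C N D) (hY : Y ⊆ N) :
    #Y * D ≤ ∑ x ∈ Y, #(nbrs C N x) + 1 := by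
  have hout : ∑ x ∈ N \ Y, #(nbrs C N x) ≤ #(N \ Y) * D :=
    sum_le_card_nsmul _ _ _ fun x hx => h.card_nbrs_le x (sdiff_subset hx)
  have htotal := h.card_mul_le
  rw [← sum_card_nbrs, ← sum_sdiff hY, ← card_sdiff_add_card_eq_card hY, add_mul] at htotal
  omega

lemma exists_card_nbrs_eq (h : NearlyRegular C N D) (hY : Y ⊆ N) (h2 : 2 ≤ #Y) :
    ∃ u ∈ Y, #(nbrs C N u) = D := by
  by_contra! hne
  have hlt : ∑ x ∈ Y, (#(nbrs C N x) + 1) ≤ #Y * D :=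
    sum_le_card_nsmul _ _ _ fun x hx => (h.card_nbrs_le x (hY hx)).lt_of_ne (hne x hx)
  have := h.card_mul_le_sum hY
  rw [sum_add_distrib, sum_const, smul_eq_mul, mul_one] at hlt
  omega

lemma sum_card_nbrs_sdiff_add_le (h : NearlyRegular C N D) (ha : a ∈ N) :
    ∑ b ∈ N \ insert a (nbrs C N a), #(nbrs C (nbrs C N a) b) + #(nbrs C N a) ≤
      #(nbrs C N a) * D := by
  rw [sum_card_nbrs_comm, card_eq_sum_ones (nbrs C N a), ← sum_add_distrib, ← card_eq_sum_ones]
  refine sum_le_card_nsmul _ _ _ fun c hc => (Nat.succ_le_of_lt (card_lt_card ?_)).trans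
    (h.card_nbrs_le c (nbrs_subset hc))
  refine (ssubset_iff_of_subset (nbrs_mono le_rfl sdiff_subset)).2
    ⟨a, mem_nbrs.2 ⟨ha, (mem_nbrs.1 hc).2.symm⟩, fun haM => ?_⟩
  exact (mem_sdiff.1 (mem_nbrs.1 haM).1).2 (mem_insert_self a _)

/-- The neighbours of `a` send few edges to the rest of `N`, so the non-neighbours of `a` cannot
all have all but one of their neighbours in common with `a`. -/
lemma exists_add_two_le_card_union (h : NearlyRegular C N D) (hN : #N = D + 6) (h2 : 2 ≤ D)
    (h4 : D ≤ 4) (ha : a ∈ N) (haD : #(nbrs C N a) = D) :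
    ∃ b ∈ N, a ≠ b ∧ ¬C.Adj a b ∧ D + 2 ≤ #(nbrs C N a ∪ nbrs C N b) := by
  set P := nbrs C N a
  have haPN : insert a P ⊆ N := insert_subset ha nbrs_subset
  set M := N \ insert a P
  have hM : #M + (D + 1) = D + 6 := by
    rw [← hN, ← haD, ← card_insert_of_notMem notMem_nbrs_self, card_sdiff_add_card_eq_card haPN]
  have hMP : ∑ b ∈ M, #(nbrs C P b) + #P ≤ #P * D := h.sum_card_nbrs_sdiff_add_le ha
  have hMN : #M * D ≤ ∑ b ∈ M, #(nbrs C N b) + 1 := h.card_mul_le_sum sdiff_subset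
  by_contra! hno
  have hfew : ∑ b ∈ M, #(nbrs C N b) ≤ ∑ b ∈ M, (#(nbrs C P b) + 1) := by
    refine sum_le_sum fun b hb => ?_
    obtain ⟨hbN, hb⟩ := mem_sdiff.1 hb
    rw [mem_insert, not_or] at hb
    have hlt := hno b hbN (Ne.symm hb.1) fun hab => hb.2 (mem_nbrs.2 ⟨hbN, hab⟩)
    have hinter : P ∩ nbrs C N b = nbrs C P b := by
      rw [nbrs, nbrs, inter_filter, inter_eq_left.2 nbrs_subset]
    have := card_union_add_card_inter P (nbrs C N b)
    rw [hinter] at this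
    omega
  rw [sum_add_distrib, sum_const, smul_eq_mul, mul_one] at hfew
  have hM : #M = 5 := by omega
  rw [hM] at hMN hfew
  rw [haD] at hMP
  interval_cases D <;> omega

end NearlyRegular

lemma card_nbrs_compl_union_add (ha : a ∈ N) (hb : b ∈ N) (hab : G.Adj a b) :
    #(nbrs Gᶜ N a ∪ nbrs Gᶜ N b) + 2 + #(nbrs G (nbrs G N b) a) = #N := by
  have hsub : {a, b} ∪ nbrs G (nbrs G N b) a ⊆ N :=
    union_subset (insert_subset ha (singleton_subset_iff.2 hb)) (nbrs_subset.trans nbrs_subset)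
  have hdisj : Disjoint {a, b} (nbrs G (nbrs G N b) a) := by
    simp
  have hcompl : N \ ({a, b} ∪ nbrs G (nbrs G N b) a) = nbrs Gᶜ N a ∪ nbrs Gᶜ N b := by
    ext y
    simp only [mem_sdiff, mem_union, mem_insert, mem_singleton, mem_nbrs, SimpleGraph.compl_adj]
    grind [G.adj_comm, G.ne_of_adj]
  rw [← hcompl, ← card_sdiff_add_card_eq_card hsub, card_union_of_disjoint hdisj,
    card_pair hab.ne, add_assoc]

lemma exists_adj_card_erase_le_one (h : NearlyRegular Gᶜ N D) (hN : #N = D + 6) (h2 : 2 ≤ D)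
    (h4 : D ≤ 4) : ∃ u ∈ N, #(nbrs Gᶜ N u) = D ∧ ∃ a ∈ N, ∃ b ∈ N, u ≠ a ∧ u ≠ b ∧ G.Adj a b ∧
      #((nbrs G (nbrs G N b) a).erase u) ≤ 1 := by
  obtain ⟨a, ha, haD⟩ := h.exists_card_nbrs_eq (Subset.refl N) (by omega)
  obtain ⟨b, hb, hne, hnadj, hunion⟩ := h.exists_add_two_le_card_union hN h2 h4 ha haD
  have hab : G.Adj a b := by simpa [hne] using hnadj
  have hcard := card_nbrs_compl_union_add ha hb hab
  set W := nbrs G (nbrs G N b) a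
  have hWN : W ⊆ N := nbrs_subset.trans nbrs_subset
  by_cases hW : ∃ u ∈ W, #(nbrs Gᶜ N u) = D
  · obtain ⟨u, hu, huD⟩ := hW
    have hau := mem_nbrs.1 hu
    have hW : #(W.erase u) ≤ 1 := by
      have := card_erase_add_one hu
      omega
    exact ⟨u, hWN hu, huD, a, ha, b, hb, hau.2.ne', (mem_nbrs.1 hau.1).2.ne', hab, hW⟩
  · have hW1 : #W ≤ 1 := by
      by_contra! hlt
      exact hW (h.exists_card_nbrs_eq hWN hlt)
    obtain ⟨u, hu, huD⟩ := h.exists_card_nbrs_eq (nbrs_subset (a := a)) (haD ▸ h2)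
    have hau := (mem_nbrs.1 hu).2
    exact ⟨u, nbrs_subset hu, huD, a, ha, b, hb, hau.ne',
      fun hub => hnadj (hub ▸ hau), hab, (card_le_card (erase_subset u W)).trans hW1⟩

end NearlyRegular

section FullCase

variable {G : SimpleGraph V} {A K : Finset V} {a b u v : V}

lemma card_edgesIn_addStar_insert (hu : u ∈ nbrs G A v) :
    #(edgesIn (addStar G u (nbrs G A v)) (insert v (nbrs G A v))) =
      #(edgesIn G (nbrs G A v)) + #(nbrs G A v) + #(nbrs Gᶜ (nbrs G A v) u) := by
  rw [card_edgesIn_addStar (mem_insert_of_mem hu) (subset_insert _ _),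
    card_edgesIn_insert notMem_nbrs_self, nbrs_eq_self fun y hy => (mem_nbrs.1 hy).2]

lemma card_common_nbrs_addStar_le {N : Finset V} (hua : u ≠ a) (hub : u ≠ b) :
    #(nbrs (addStar G u N) (nbrs (addStar G u N) (insert v N) b) a) ≤
      #((nbrs G (nbrs G N b) a).erase u) + 2 := by
  have hsub : nbrs (addStar G u N) (nbrs (addStar G u N) (insert v N) b) a ⊆
      insert v (insert u ((nbrs G (nbrs G N b) a).erase u)) := by
    intro y hy
    simp only [mem_nbrs, mem_insert, addStar_adj, hua.symm, hub.symm, false_and, false_or] at hy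
    simp only [mem_insert, mem_erase, mem_nbrs]
    tauto
  exact (card_le_card hsub).trans
    ((card_insert_le _ _).trans (Nat.succ_le_succ (card_insert_le _ _)))

namespace FarComponent

lemma insert_subset_sdiff (hK : FarComponent G A v K) : insert v (nbrs G A v) ⊆ A \ K :=
  subset_sdiff.2 ⟨insert_subset hK.mem nbrs_subset,
    disjoint_insert_left.2 ⟨hK.notMem, hK.disjoint.symm⟩⟩

lemma hasCompleteMinorOn_of_attachments_eq (hK : FarComponent G A v K)
    (hS : attachments G A v K = nbrs G A v) (hu : u ∈ nbrs G A v) {t : ℕ}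
    (h : HasCompleteMinorOn (addStar G u (nbrs G A v)) (insert v (nbrs G A v) : Finset V) t) :
    HasCompleteMinorOn G A t := by
  rw [← hS] at hu
  refine hK.hasCompleteMinorOn_of_contract_component hK.insert_subset_sdiff hu ?_
  rwa [hS]

lemma card_nbrs_add_one_lt (hK : FarComponent G A v K) : #(nbrs G A v) + 1 < #A := by
  rw [← card_insert_of_notMem notMem_nbrs_self]
  exact (card_le_card hK.insert_subset_sdiff).trans_lt hK.card_sdiff_lt

lemma card_edgesIn_nbrs_add_le (hK : FarComponent G A v K) (hG : MinimalCounterexample G A)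
    (hS : attachments G A v K = nbrs G A v) (hu : u ∈ nbrs G A v) :
    #(edgesIn G (nbrs G A v)) + #(nbrs Gᶜ (nbrs G A v) u) + 10 ≤ 4 * #(nbrs G A v) := by
  have hsix := hG.six_le_card_nbrs hK.mem
  have hcard := card_insert_of_notMem (notMem_nbrs_self (G := G) (X := A) (a := v))
  have hbound := hG.bound (hsix.trans (card_le_card (subset_insert _ _)))
    (hcard ▸ hK.card_nbrs_add_one_lt) (hK.hasCompleteMinorOn_of_attachments_eq hS hu)
  rw [card_edgesIn_addStar_insert hu] at hbound
  omega

lemma card_edgesIn_nbrs_add_le_of_adj (hK : FarComponent G A v K)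
    (hG : MinimalCounterexample G A) (hS : attachments G A v K = nbrs G A v)
    (hu : u ∈ nbrs G A v) (ha : a ∈ nbrs G A v) (hb : b ∈ nbrs G A v) (hua : u ≠ a) (hub : u ≠ b)
    (hab : G.Adj a b) :
    #(edgesIn G (nbrs G A v)) + #(nbrs Gᶜ (nbrs G A v) u) + 12 ≤
      4 * #(nbrs G A v) + #((nbrs G (nbrs G (nbrs G A v) b) a).erase u) := by
  have hb' := mem_insert_of_mem (b := v) hb
  have hab' : (addStar G u (nbrs G A v)).Adj a b := le_addStar _ _ _ hab
  have hcard : #((insert v (nbrs G A v)).erase b) = #(nbrs G A v) := by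
    rw [card_erase_of_mem hb', card_insert_of_notMem notMem_nbrs_self, Nat.add_sub_cancel]
  have hlt := hK.card_nbrs_add_one_lt
  have hbound := hG.bound (B := (insert v (nbrs G A v)).erase b)
    (hcard ▸ hG.six_le_card_nbrs hK.mem) (by omega)
    fun h => hK.hasCompleteMinorOn_of_attachments_eq hS hu (.of_contract hb' hab' h)
  have hcontract := card_edgesIn_le_contract (mem_insert_of_mem ha) hb' hab'
  have hcommon := card_common_nbrs_addStar_le (G := G) (v := v) (N := nbrs G A v) hua hub
  rw [card_edgesIn_addStar_insert hu] at hcontract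
  omega

lemma exists_nearlyRegular (hK : FarComponent G A v K) (hG : MinimalCounterexample G A)
    (hv : #(nbrs G A v) ≤ 9) (hS : attachments G A v K = nbrs G A v) :
    ∃ D, 2 ≤ D ∧ D ≤ 3 ∧ #(nbrs G A v) = D + 6 ∧ NearlyRegular Gᶜ (nbrs G A v) D := by
  have hsix := hG.six_le_card_nbrs hK.mem
  have hdeg (x : V) (hx : x ∈ nbrs G A v) := hG.card_nbrs_compl_add_six_le hK.mem hx
  have hmul := two_mul_card_edgesIn_add_compl G (nbrs G A v)
  obtain ⟨w, hw, hmax⟩ := exists_max_image (nbrs G A v) (fun x => #(nbrs Gᶜ (nbrs G A v) x))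
    (card_pos.1 (by omega))
  have hbound := hK.card_edgesIn_nbrs_add_le hG hS hw
  have hw6 := hdeg w hw
  have hedges := two_mul_card_edgesIn_le hmax
  obtain ⟨D, hD⟩ := Nat.exists_eq_add_of_le' hsix
  have : 2 ≤ D ∧ D ≤ 3 ∧ #(nbrs G A v) * D ≤ 2 * #(edgesIn Gᶜ (nbrs G A v)) + 1 := by
    rw [hD] at hmul hbound hw6 hedges ⊢
    have hD3 : D ≤ 3 := by omega
    have hwD : #(nbrs Gᶜ (nbrs G A v) w) ≤ D := by omega
    interval_cases D <;> interval_cases #(nbrs Gᶜ (nbrs G A v) w) <;> omega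
  exact ⟨D, this.1, this.2.1, hD, fun x hx => by have := hdeg x hx; omega, this.2.2⟩

lemma attachments_ne (hK : FarComponent G A v K) (hG : MinimalCounterexample G A)
    (hv : #(nbrs G A v) ≤ 9) : attachments G A v K ≠ nbrs G A v := by
  intro hS
  obtain ⟨D, hD2, hD3, hD, hreg⟩ := hK.exists_nearlyRegular hG hv hS
  obtain ⟨u, hu, huD, a, ha, b, hb, hua, hub, hab, hcommon⟩ :=
    exists_adj_card_erase_le_one hreg hD hD2 (by omega)
  have hbound := hK.card_edgesIn_nbrs_add_le_of_adj hG hS hu ha hb hua hub hab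
  have hmul := two_mul_card_edgesIn_add_compl G (nbrs G A v)
  have hedges := two_mul_card_edgesIn_le hreg.card_nbrs_le
  rw [hD] at hbound hmul hedges
  interval_cases D <;> omega

end FarComponent

end FullCase

section EdgeBound

theorem card_edgesIn_add_fifteen_le (G : SimpleGraph V) (A : Finset V) (hA : 6 ≤ #A)
    (hminor : ¬HasCompleteMinorOn G A 7) : #(edgesIn G A) + 15 ≤ 5 * #A := by
  induction hn : #A using Nat.strong_induction_on generalizing G A with | _ n ih
  by_contra! hlt
  obtain ⟨H, hHG, hH⟩ := exists_le_card_edgesIn_eq G A (m := 5 * #A - 14) (by omega)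
  have hmin : MinimalCounterexample H A :=
    { six_le_card := hA
      card_edgesIn := by omega
      not_minor := fun h => hminor (h.mono hHG subset_rfl)
      bound_of_lt := fun H' B hB hBA hminor' => ih #B (hn ▸ hBA) H' B hB hminor' rfl }
  obtain ⟨v, hv, hv9, hvA⟩ := hmin.exists_card_nbrs_le_nine
  obtain ⟨K, hK⟩ := exists_farComponent hv hvA
  exact hK.attachments_ne hmin hv9 (hmin.attachments_eq hv9 hK)

end EdgeBound

section Cone

variable [Fintype V]

/-- The cone over `G`: a copy of `G` on the vertices `some a` together with the apex `none`, which
is adjacent to all of them. -/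
def cone (G : SimpleGraph V) : SimpleGraph (Option V) :=
  addStar (G.map Function.Embedding.some) none univ

lemma cone_adj_some {G : SimpleGraph V} {a b : V} :
    (cone G).Adj (some a) (some b) ↔ G.Adj a b := by
  have hmap : (G.map Function.Embedding.some).Adj (some a) (some b) ↔ G.Adj a b :=
    SimpleGraph.map_adj_apply
  simp only [cone, addStar_adj, hmap, reduceCtorEq, false_and, or_false, and_false]

lemma hasCompleteMinor_of_cone {G : SimpleGraph V} {t : ℕ}
    (h : (cone G).HasCompleteMinor (t + 1)) : G.HasCompleteMinor t := by
  have hsome (a : Option V) (ha : a ∈ Set.univ \ {none}) : ∃ b, some b = a :=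
    Option.ne_none_iff_exists.1 ha.2
  refine hasCompleteMinorOn_univ.1 <|
    ((hasCompleteMinorOn_univ.2 h).sdiff_singleton none).of_branchSets
      (fun a => {b | some b = a}) (fun _ _ => Set.subset_univ _) (fun a ha => ?_)
      (fun a _ b _ hab => Set.disjoint_left.2 fun c hac hbc => hab (hac.symm.trans hbc))
      fun a ha b hb hab => ?_
  · obtain ⟨b, rfl⟩ := hsome a ha
    have hb : {c | some c = some b} = {b} := by
      ext c
      simp
    rw [hb]
    exact connected_induce_singleton G b
  · obtain ⟨a, rfl⟩ := hsome a ha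
    obtain ⟨b, rfl⟩ := hsome b hb
    exact ⟨a, rfl, b, rfl, cone_adj_some.1 hab⟩

lemma card_edgesIn_cone (G : SimpleGraph V) :
    #(edgesIn (cone G) univ) = #(edgesIn G univ) + Fintype.card V := by
  have hmap : #(edgesIn (G.map Function.Embedding.some) univ) = #(edgesIn G univ) := by
    rw [edgesIn_univ, edgesIn_univ]
    convert SimpleGraph.card_edgeFinset_map Function.Embedding.some G
  have hapex : nbrs (G.map Function.Embedding.some) univ none = ∅ := by
    refine eq_empty_iff_forall_notMem.2 fun b hb => ?_
    obtain ⟨a, -, -, ha, -⟩ := (SimpleGraph.map_adj ..).1 (mem_nbrs.1 hb).2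
    exact Option.some_ne_none a ha
  have hcompl := card_nbrs_add_card_nbrs_compl (G := G.map Function.Embedding.some)
    (mem_univ none)
  rw [hapex, card_empty, zero_add, card_univ, Fintype.card_option, add_left_inj] at hcompl
  rw [cone, card_edgesIn_addStar (mem_univ _) (subset_univ _), hmap, hcompl]

end Cone

theorem card_edgesIn_univ_add_choose_le [Fintype V] (G : SimpleGraph V) {s : ℕ} (hs : s ≤ 5)
    (hn : s + 1 ≤ Fintype.card V) (hminor : ¬G.HasCompleteMinor (s + 2)) :
    #(edgesIn G univ) + (s + 1).choose 2 ≤ s * Fintype.card V := by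
  induction hs using Nat.decreasingInduction generalizing V with
  | self =>
    refine card_edgesIn_add_fifteen_le G univ hn fun h => hminor ?_
    rw [coe_univ] at h
    exact hasCompleteMinorOn_univ.1 h
  | of_succ s _ ih =>
    have hcone := ih (cone G) (by rw [Fintype.card_option]; omega)
      fun h => hminor (hasCompleteMinor_of_cone h)
    rw [card_edgesIn_cone, Fintype.card_option, Nat.choose_succ_succ, Nat.choose_one_right] at hcone
    linarith

end Mader

theorem mader_edge_bound {V : Type*} [Fintype V] (G : SimpleGraph V) (t : ℕ)
    (ht2 : 2 ≤ t) (ht7 : t ≤ 7) (hn : t - 1 ≤ Fintype.card V)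
    (hminor : ¬ G.HasCompleteMinor t) :
    (G.edgeFinset.card : ℤ) ≤ ((t : ℤ) - 2) * (Fintype.card V : ℤ) - (Nat.choose (t - 1) 2 : ℤ) := by
  obtain ⟨s, rfl⟩ := Nat.exists_eq_add_of_le' ht2
  have hbound := Mader.card_edgesIn_univ_add_choose_le G (by omega) hn hminor
  rw [Mader.edgesIn_univ] at hbound
  rw [le_sub_iff_add_le]
  push_cast
  rw [add_sub_cancel_right]
  exact_mod_cast hbound
end

section
/- Every simple graph of order n ≥ 5 with at least 4n − 9 edges contains a K_6 minor. -/
attribute [local instance] Classical.propDecidable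

/-!
The proof is Mader's induction for the statement that more than `k * n - (k + 1).choose 2` edges
force a `K_{k+2}` minor. A violator `G` that is minimal under taking minors has minimum degree at
least `k + 1`, and each of its edges lies in at least `k` triangles: otherwise deleting a vertex or
contracting an edge leaves a smaller violator. The edge count is so small that some vertex `x` has
degree less than `2 * k`; thus `N(x)` induces a graph on fewer than `2 * k` vertices with all
degrees at least `k`. Let `C` be a component of `G - N[x]`. Its boundary lies in `N(x)` and is not
a clique, since otherwise the two sides of this separation would both obey the bound, and so would
`G`. Contracting `C` into one of two nonadjacent boundary vertices adds a missing edge to `N(x)`.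
If this always produces a `K_{k+1}` minor there, then `x` extends it to a `K_{k+2}` minor of `G`, a
contradiction.

It remains to see that in a graph of order less than `2 * k` with all degrees at least `k`, a new
edge forces a `K_{k+1}` minor. There is no such graph with a missing edge for `k = 2`, and for
`k = 3, 4` the claim follows from the bound for `k - 1`, except when `k = 4` and the graph is
4-regular of order 7. Then there is an edge `cv` away from the new edge whose ends have at most one
common neighbour, because the complement has degree 2 and so some vertex `v` is at distance at least
3 from `c` in it. Contracting `cv` loses few enough edges for the bound with `k = 3` to apply.
-/

open SimpleGraph Finset

universe u

section MinorModel

variable {U V W : Type*} {K : SimpleGraph U} {H : SimpleGraph W} {G : SimpleGraph V}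

/-- `f` exhibits `H` as a minor of `G`: the branch sets `f w` are connected and pairwise disjoint,
and every edge of `H` is realised by an edge of `G` between the corresponding branch sets. -/
structure IsMinorModel (H : SimpleGraph W) (G : SimpleGraph V) (f : W → Set V) : Prop where
  connected : ∀ w, (G.induce (f w)).Connected
  disjoint : Pairwise fun w w' => Disjoint (f w) (f w')
  exists_adj : ∀ ⦃w w'⦄, H.Adj w w' → ∃ p ∈ f w, ∃ q ∈ f w', G.Adj p q

theorem connected_induce_singleton (G : SimpleGraph V) (v : V) : (G.induce {v}).Connected where
  preconnected := .of_subsingleton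

theorem connected_induce_biUnion {f : W → Set V} {s : Set W} (hs : (H.induce s).Connected)
    (hf : ∀ w ∈ s, (G.induce (f w)).Connected)
    (hadj : ∀ w ∈ s, ∀ w' ∈ s, H.Adj w w' → ∃ p ∈ f w, ∃ q ∈ f w', G.Adj p q) :
    (G.induce (⋃ w ∈ s, f w)).Connected := by
  have hsub : ∀ w ∈ s, f w ⊆ ⋃ w ∈ s, f w := fun w hw => Set.subset_biUnion_of_mem (u := f) hw
  have reachable_of_mem : ∀ w (hw : w ∈ s) p (hp : p ∈ f w) q (hq : q ∈ f w),
      (G.induce (⋃ w ∈ s, f w)).Reachable ⟨p, hsub w hw hp⟩ ⟨q, hsub w hw hq⟩ :=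
    fun w hw p hp q hq =>
      ((hf w hw).preconnected ⟨p, hp⟩ ⟨q, hq⟩).map (G.induceHomOfLE (hsub w hw)).toHom
  obtain ⟨w₀⟩ := hs.nonempty
  obtain ⟨p₀⟩ := (hf w₀ w₀.2).nonempty
  rw [connected_iff_exists_forall_reachable]
  refine ⟨⟨p₀, hsub w₀ w₀.2 p₀.2⟩, fun ⟨q, hq⟩ => ?_⟩
  obtain ⟨w, hw, hqw⟩ := Set.mem_iUnion₂.1 hq
  suffices h : ∀ v : s, Relation.ReflTransGen (H.induce s).Adj w₀ v → ∀ q (hq : q ∈ f v),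
      (G.induce (⋃ w ∈ s, f w)).Reachable ⟨p₀, hsub w₀ w₀.2 p₀.2⟩ ⟨q, hsub v v.2 hq⟩ from
    h ⟨w, hw⟩ ((reachable_iff_reflTransGen _ _).1 (hs.preconnected w₀ ⟨w, hw⟩)) q hqw
  intro v hv
  induction hv with
  | refl => exact reachable_of_mem w₀ w₀.2 p₀ p₀.2
  | @tail b c _ hbc ih =>
    intro q hq
    obtain ⟨p, hp, r, hr, hpr⟩ := hadj b b.2 c c.2 hbc
    have hstep : (G.induce (⋃ w ∈ s, f w)).Adj ⟨p, hsub b b.2 hp⟩ ⟨r, hsub c c.2 hr⟩ := hpr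
    exact ((ih p hp).trans hstep.reachable).trans (reachable_of_mem c c.2 r hr q hq)

namespace IsMinorModel

theorem comp {g : U → Set W} {f : W → Set V} (hg : IsMinorModel K H g)
    (hf : IsMinorModel H G f) : IsMinorModel K G fun u => ⋃ w ∈ g u, f w where
  connected u := connected_induce_biUnion (hg.connected u) (fun w _ => hf.connected w)
    fun _ _ _ _ h => hf.exists_adj h
  disjoint u u' hu := by
    simp only [Set.disjoint_iUnion_left, Set.disjoint_iUnion_right]
    intro w' hw' w hw
    exact hf.disjoint ((hg.disjoint hu).ne_of_mem hw hw')
  exists_adj u u' hu := by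
    obtain ⟨w, hw, w', hw', hadj⟩ := hg.exists_adj hu
    obtain ⟨p, hp, q, hq, hpq⟩ := hf.exists_adj hadj
    exact ⟨p, Set.mem_biUnion hw hp, q, Set.mem_biUnion hw' hq, hpq⟩

theorem of_copy (φ : Copy H G) : IsMinorModel H G fun w => {φ w} where
  connected w := connected_induce_singleton G (φ w)
  disjoint _ _ hw := Set.disjoint_singleton.2 (φ.injective.ne hw)
  exists_adj w w' hw := ⟨φ w, rfl, φ w', rfl, φ.toHom.map_adj hw⟩

end IsMinorModel

theorem hasCompleteMinor_iff_exists_isMinorModel {t : ℕ} :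
    G.HasCompleteMinor t ↔ ∃ f, IsMinorModel (⊤ : SimpleGraph (Fin t)) G f := by
  constructor
  · rintro ⟨f, -, hconn, hdisj, hadj⟩
    exact ⟨f, hconn, fun i j => hdisj i j, fun i j h => hadj i j h.ne⟩
  · rintro ⟨f, hf⟩
    exact ⟨f, fun i => Set.nonempty_coe_sort.1 (hf.connected i).nonempty, hf.connected,
      fun i j h => hf.disjoint h, fun i j h => hf.exists_adj h⟩

theorem IsMinorModel.hasCompleteMinor {f : W → Set V} {t : ℕ} (hf : IsMinorModel H G f)
    (h : H.HasCompleteMinor t) : G.HasCompleteMinor t := by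
  obtain ⟨g, hg⟩ := hasCompleteMinor_iff_exists_isMinorModel.1 h
  exact hasCompleteMinor_iff_exists_isMinorModel.2 ⟨_, hg.comp hf⟩

theorem hasCompleteMinor_of_isContained {t : ℕ} (hHG : H ⊑ G) (h : H.HasCompleteMinor t) :
    G.HasCompleteMinor t :=
  hHG.elim fun φ => (IsMinorModel.of_copy φ).hasCompleteMinor h

theorem hasCompleteMinor_top [Fintype V] {t : ℕ} (ht : t ≤ Fintype.card V) :
    (⊤ : SimpleGraph V).HasCompleteMinor t := by
  obtain ⟨φ⟩ : (⊤ : SimpleGraph (Fin t)) ⊑ (⊤ : SimpleGraph V) :=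
    isContained_top_iff.2 (Function.Embedding.nonempty_of_card_le (by simpa using ht))
  exact hasCompleteMinor_iff_exists_isMinorModel.2 ⟨_, .of_copy φ⟩

theorem IsMinorModel.hasCompleteMinor_succ {f : W → Set V} {t : ℕ} {x : V}
    (hf : IsMinorModel H G f) (hx : ∀ w, x ∉ f w) (hadj : ∀ w, ∃ p ∈ f w, G.Adj x p)
    (h : H.HasCompleteMinor t) : G.HasCompleteMinor (t + 1) := by
  obtain ⟨g, hg⟩ := hasCompleteMinor_iff_exists_isMinorModel.1 h
  have hgf := hg.comp hf
  set B : Fin t → Set V := fun i => ⋃ w ∈ g i, f w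
  have hxB : ∀ i, x ∉ B i := fun i => by simpa [B] using fun w _ => hx w
  have hadjB : ∀ i, ∃ p ∈ B i, G.Adj x p := fun i => by
    obtain ⟨w⟩ := (hg.connected i).nonempty
    obtain ⟨p, hp, hxp⟩ := hadj w
    exact ⟨p, Set.mem_biUnion w.2 hp, hxp⟩
  refine hasCompleteMinor_iff_exists_isMinorModel.2 ⟨Fin.cons {x} B, ?_, ?_, ?_⟩
  · exact Fin.cases (connected_induce_singleton G x) hgf.connected
  · rw [pairwise_fin_succ_iff]
    exact ⟨fun i => Set.disjoint_singleton_right.2 (hxB i),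
      fun i => Set.disjoint_singleton_left.2 (hxB i), hgf.disjoint⟩
  · intro i j hij
    induction i using Fin.cases <;> induction j using Fin.cases
    · exact absurd rfl hij.ne
    · obtain ⟨p, hp, hxp⟩ := hadjB _
      exact ⟨x, rfl, p, hp, hxp⟩
    · obtain ⟨p, hp, hxp⟩ := hadjB _
      exact ⟨p, hp, x, rfl, hxp.symm⟩
    · exact hgf.exists_adj (by simpa using hij)

end MinorModel

section Contraction

variable {V : Type*} {G : SimpleGraph V}

/-- The graph obtained from `G` by giving `a` the neighbours of all vertices of `D`. If
`insert a D` is connected, then restricting `absorb G a D` to vertices outside `D` yields the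
graph in which `insert a D` has been contracted to `a`. -/
def absorb (G : SimpleGraph V) (a : V) (D : Set V) : SimpleGraph V :=
  G ⊔ fromRel fun p q => p = a ∧ ∃ d ∈ D, G.Adj d q

theorem absorb_adj {a p q : V} {D : Set V} :
    (absorb G a D).Adj p q ↔ G.Adj p q ∨
      p ≠ q ∧ (p = a ∧ (∃ d ∈ D, G.Adj d q) ∨ q = a ∧ ∃ d ∈ D, G.Adj d p) := by
  simp [absorb]

theorem isMinorModel_absorb {a : V} {D s : Set V} (hD : (G.induce (insert a D)).Connected)
    (hs : Disjoint s D) :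
    IsMinorModel ((absorb G a D).induce s) G
      fun w => Function.update (fun v => ({v} : Set V)) a (insert a D) w.1 where
  connected w := by
    obtain hw | hw := eq_or_ne w.1 a
    · rwa [hw, Function.update_self]
    · rw [Function.update_of_ne hw]
      exact connected_induce_singleton G w.1
  disjoint w w' hw := by
    have hne : w.1 ≠ w'.1 := Subtype.coe_ne_coe.2 hw
    have hwD := Set.disjoint_left.1 hs w.2
    have hwD' := Set.disjoint_left.1 hs w'.2
    grind
  exists_adj w w' hw := by
    have hself : ∀ v, v ∈ Function.update (fun v => ({v} : Set V)) a (insert a D) v := by grind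
    obtain h | ⟨-, ⟨rfl, d, hd, h⟩ | ⟨rfl, d, hd, h⟩⟩ := absorb_adj.1 hw
    · exact ⟨w, hself w, w', hself w', h⟩
    · exact ⟨d, by simp [hd], w', hself w', h⟩
    · exact ⟨w, hself w, d, by simp [hd], h.symm⟩

variable [Fintype V]

theorem card_edgeFinset_eq_induce_compl_singleton_add_degree (G : SimpleGraph V) (v : V) :
    #G.edgeFinset = #(G.induce {v}ᶜ).edgeFinset + G.degree v := by
  rw [card_edgeFinset_induce_compl_singleton, card_edgeFinset_deleteIncidenceSet,
    Nat.sub_add_cancel (G.degree_le_card_edgeFinset v)]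

theorem card_edgeFinset_le_absorb_add {u v : V} (huv : G.Adj u v) :
    #G.edgeFinset ≤ #((absorb G u {v}).induce {v}ᶜ).edgeFinset + 1 +
      #(G.neighborFinset u ∩ G.neighborFinset v) := by
  set N := (G.neighborFinset v \ G.neighborFinset u).erase u
  have hN : G.degree v = #N + 1 + #(G.neighborFinset u ∩ G.neighborFinset v) := by
    rw [card_erase_add_one (by simp [huv.symm]), inter_comm, card_sdiff_add_card_inter,
      card_neighborFinset_eq_degree]
  have hdisj : Disjoint (G.deleteIncidenceSet v).edgeFinset (N.image fun w => s(u, w)) := by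
    simp only [disjoint_right, mem_image, mem_edgeFinset, N]
    rintro _ ⟨w, hw, rfl⟩ h
    simp_all [deleteIncidenceSet_adj]
  have hsub : (G.deleteIncidenceSet v).edgeFinset ∪ N.image (fun w => s(u, w)) ⊆
      ((absorb G u {v}).deleteIncidenceSet v).edgeFinset := by
    refine union_subset (edgeFinset_mono fun p q h => ?_) fun e he => ?_
    · rw [deleteIncidenceSet_adj] at h ⊢
      exact ⟨absorb_adj.2 (.inl h.1), h.2⟩
    · obtain ⟨w, hw, rfl⟩ := mem_image.1 he
      simp only [N, mem_erase, mem_sdiff, mem_neighborFinset] at hw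
      rw [mem_edgeFinset, mem_edgeSet, deleteIncidenceSet_adj, absorb_adj]
      exact ⟨.inr ⟨hw.1.symm, .inl ⟨rfl, v, rfl, hw.2.1⟩⟩, huv.ne, hw.2.1.ne'⟩
  have hcard : #(N.image fun w => s(u, w)) = #N :=
    card_image_of_injective _ fun _ _ => Sym2.congr_right.1
  have hle := card_le_card hsub
  rw [card_union_of_disjoint hdisj, hcard, ← card_edgeFinset_induce_compl_singleton,
    ← card_edgeFinset_induce_compl_singleton] at hle
  have := card_edgeFinset_eq_induce_compl_singleton_add_degree G v
  omega

end Contraction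

section Separation

variable {V : Type*} [Fintype V] {G : SimpleGraph V} {A B : Set V}

theorem card_edgeFinset_induce (G : SimpleGraph V) (s : Set V) :
    #(G.induce s).edgeFinset = #(G.edgeFinset ∩ s.toFinset.sym2) := by
  rw [← map_edgeFinset_induce, card_map]

theorem card_edgeFinset_induce_of_isClique {s : Set V} (hs : G.IsClique s) :
    #(G.induce s).edgeFinset = s.ncard.choose 2 := by
  rw [← Set.fintypeCard_eq_ncard, ← card_edgeFinset_top_eq_card_choose_two]
  congr!
  exact induce_eq_top.2 hs

theorem card_edgeFinset_add_choose_le_of_isClique_inter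
    (hAB : ∀ p q, G.Adj p q → p ∈ A ∧ q ∈ A ∨ p ∈ B ∧ q ∈ B) (hclique : G.IsClique (A ∩ B)) :
    #G.edgeFinset + (A ∩ B).ncard.choose 2 ≤
      #(G.induce A).edgeFinset + #(G.induce B).edgeFinset := by
  have hunion : G.edgeFinset ⊆
      G.edgeFinset ∩ A.toFinset.sym2 ∪ G.edgeFinset ∩ B.toFinset.sym2 := by
    intro e he
    induction e with | _ p q
    have := hAB p q (mem_edgeFinset.1 he)
    simpa only [mem_union, mem_inter, he, true_and, mk_mem_sym2_iff, Set.mem_toFinset]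
  have hinter : G.edgeFinset ∩ (A ∩ B).toFinset.sym2 ⊆
      (G.edgeFinset ∩ A.toFinset.sym2) ∩ (G.edgeFinset ∩ B.toFinset.sym2) := by
    rw [Set.toFinset_inter]
    exact subset_inter (inter_subset_inter_left (sym2_mono inter_subset_left))
      (inter_subset_inter_left (sym2_mono inter_subset_right))
  calc #G.edgeFinset + (A ∩ B).ncard.choose 2
      = #G.edgeFinset + #(G.edgeFinset ∩ (A ∩ B).toFinset.sym2) := by
        rw [← card_edgeFinset_induce_of_isClique hclique, card_edgeFinset_induce]
        congr!
    _ ≤ _ := add_le_add (card_le_card hunion) (card_le_card hinter)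
    _ = #(G.induce A).edgeFinset + #(G.induce B).edgeFinset := by
        rw [card_union_add_card_inter, card_edgeFinset_induce, card_edgeFinset_induce]

end Separation

section Choose

theorem two_mul_choose_succ_two (k : ℕ) : 2 * (k + 1).choose 2 = k * (k + 1) := by
  have := Nat.add_one_mul_choose_eq k 1
  rw [Nat.choose_one_right] at this
  lia

theorem mul_le_choose_two_add_choose_succ_two (k s : ℕ) :
    k * s ≤ s.choose 2 + (k + 1).choose 2 := by
  have hs : (2 * s.choose 2 : ℤ) = s * (s - 1) := by
    cases s with
    | zero => rfl
    | succ s => have := two_mul_choose_succ_two s; push_cast; zify at this; linarith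
  have hk : (2 * (k + 1).choose 2 : ℤ) = k * (k + 1) := mod_cast two_mul_choose_succ_two k
  obtain h | h := Nat.lt_or_ge k s <;> zify at h ⊢ <;> nlinarith

end Choose

section MaderCritical

variable {V : Type u} [Fintype V] {G : SimpleGraph V} {k : ℕ}

/-- Mader's extremal bound for `K_{k+2}` minors: a graph of order `n ≥ k + 1` with more than
`k * n - (k + 1).choose 2` edges contains a `K_{k+2}` minor. The subtrahend is moved to the other
side, so that no truncated subtraction occurs. -/
def MaderBound (k : ℕ) : Prop :=
  ∀ ⦃V : Type u⦄ [Fintype V] (G : SimpleGraph V), k + 1 ≤ Fintype.card V →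
    k * Fintype.card V < #G.edgeFinset + (k + 1).choose 2 → G.HasCompleteMinor (k + 2)

/-- The vertices outside `C` with a neighbour in `C`. -/
def outerBoundary {V : Type*} (G : SimpleGraph V) (C : Set V) : Set V :=
  {v | v ∉ C ∧ ∃ c ∈ C, G.Adj c v}

/-- A minor-minimal counterexample to `MaderBound k`: its number of edges exceeds the bound by
exactly one, it has no `K_{k+2}` minor, and its minors of smaller order obey the bound. -/
structure IsMaderCritical (k : ℕ) (G : SimpleGraph V) : Prop where
  succ_le_card : k + 1 ≤ Fintype.card V
  card_edgeFinset_add_choose : #G.edgeFinset + (k + 1).choose 2 = k * Fintype.card V + 1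
  not_hasCompleteMinor : ¬ G.HasCompleteMinor (k + 2)
  card_edgeFinset_minor : ∀ ⦃W : Type u⦄ [Fintype W] (H : SimpleGraph W) (f : W → Set V),
    IsMinorModel H G f → Fintype.card W < Fintype.card V → k + 1 ≤ Fintype.card W →
      #H.edgeFinset + (k + 1).choose 2 ≤ k * Fintype.card W

theorem exists_le_card_edgeFinset_eq {V : Type*} [Fintype V] (G : SimpleGraph V) {m : ℕ}
    (hm : m ≤ #G.edgeFinset) : ∃ H ≤ G, #H.edgeFinset = m := by
  obtain ⟨s, hs, rfl⟩ := exists_subset_card_eq hm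
  have hsub : (s : Set (Sym2 V)) ⊆ G.edgeSet := by simpa [← coe_edgeFinset] using hs
  refine ⟨fromEdgeSet s, edgeSet_subset_edgeSet.1 ?_, ?_⟩
  · rw [edgeSet_fromEdgeSet]
    exact Set.sdiff_subset.trans hsub
  · congr 1
    ext e
    have : e ∈ s → ¬ e.IsDiag := fun he => G.not_isDiag_of_mem_edgeSet (hsub he)
    simpa using this

theorem exists_isMaderCritical (h : ¬ MaderBound.{u} k) :
    ∃ (V : Type u) (_ : Fintype V) (G : SimpleGraph V), IsMaderCritical k G := by
  let P (n : ℕ) : Prop := ∃ (V : Type u) (_ : Fintype V) (G : SimpleGraph V),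
    Fintype.card V = n ∧ k + 1 ≤ n ∧ k * n < #G.edgeFinset + (k + 1).choose 2 ∧
      ¬ G.HasCompleteMinor (k + 2)
  have hP : ∃ n, P n := by
    simp only [MaderBound, not_forall] at h
    obtain ⟨V, _, G, hV, hG, hminor⟩ := h
    exact ⟨_, V, _, G, rfl, hV, hG, hminor⟩
  obtain ⟨V, _, G, hcard, hV, hG, hminor⟩ := Nat.find_spec hP
  obtain ⟨G', hle, hG'⟩ := exists_le_card_edgeFinset_eq G
    (m := k * Nat.find hP + 1 - (k + 1).choose 2) (by omega)
  have hchoose : (k + 1).choose 2 ≤ k * Nat.find hP := by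
    have := two_mul_choose_succ_two k
    have := Nat.mul_le_mul_left k hV
    omega
  have hminor' : ¬ G'.HasCompleteMinor (k + 2) :=
    fun h => hminor (hasCompleteMinor_of_isContained (.of_le hle) h)
  refine ⟨V, _, G', hcard ▸ hV, by rw [hcard]; omega, hminor', fun W _ H f hf hWV hW => ?_⟩
  by_contra! hH
  exact Nat.find_min hP (hcard ▸ hWV)
    ⟨W, _, H, rfl, hW, hH, fun h => hminor' (hf.hasCompleteMinor h)⟩

theorem ncard_compl_singleton_add_one (v : V) : ({v}ᶜ : Set V).ncard + 1 = Fintype.card V := by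
  rw [← Set.ncard_singleton v, Set.ncard_compl_add_ncard, Nat.card_eq_fintype_card]

namespace IsMaderCritical

theorem add_two_le_card (hG : IsMaderCritical k G) : k + 2 ≤ Fintype.card V := by
  by_contra! h
  have hcard : Fintype.card V = k + 1 := by have := hG.succ_le_card; omega
  have hle := G.card_edgeFinset_le_card_choose_two
  have he := hG.card_edgeFinset_add_choose
  have := two_mul_choose_succ_two k
  rw [hcard] at hle he
  omega

theorem card_edgeFinset_induce_add_choose_le (hG : IsMaderCritical k G) {s : Set V}
    (hs : s ≠ Set.univ) (hk : k + 1 ≤ s.ncard) :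
    #(G.induce s).edgeFinset + (k + 1).choose 2 ≤ k * s.ncard := by
  have hlt := Set.ncard_lt_card hs
  rw [Nat.card_eq_fintype_card] at hlt
  rw [← Set.fintypeCard_eq_ncard] at hlt hk ⊢
  exact hG.card_edgeFinset_minor _ _ (.of_copy (Embedding.induce s).toCopy) hlt hk

theorem lt_degree (hG : IsMaderCritical k G) (v : V) : k < G.degree v := by
  have hcard := ncard_compl_singleton_add_one v
  have := hG.add_two_le_card
  have he := hG.card_edgeFinset_add_choose
  have hdel : #(G.induce {v}ᶜ).edgeFinset + (k + 1).choose 2 ≤ k * ({v}ᶜ : Set V).ncard := by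
    convert hG.card_edgeFinset_induce_add_choose_le (s := {v}ᶜ) (by simp) (by omega)
  rw [← hcard, card_edgeFinset_eq_induce_compl_singleton_add_degree G v,
    mul_add_one] at he
  lia

theorem le_card_inter_neighborFinset (hG : IsMaderCritical k G) {u v : V} (huv : G.Adj u v) :
    k ≤ #(G.neighborFinset u ∩ G.neighborFinset v) := by
  have hcard := ncard_compl_singleton_add_one v
  have := hG.add_two_le_card
  have he := hG.card_edgeFinset_add_choose
  have hcontract : #((absorb G u {v}).induce {v}ᶜ).edgeFinset + (k + 1).choose 2 ≤
      k * ({v}ᶜ : Set V).ncard := by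
    rw [← Set.fintypeCard_eq_ncard] at hcard ⊢
    convert hG.card_edgeFinset_minor ((absorb G u {v}).induce {v}ᶜ) _
      (isMinorModel_absorb (induce_pair_connected_of_adj huv) disjoint_compl_left)
      (by omega) (by omega)
  have := card_edgeFinset_le_absorb_add huv
  rw [← hcard, mul_add_one] at he
  lia

theorem exists_degree_lt (hG : IsMaderCritical k G) (hk : 2 ≤ k) : ∃ x, G.degree x < 2 * k := by
  have hsum : ∑ x, G.degree x < ∑ _x : V, 2 * k := by
    have := hG.card_edgeFinset_add_choose
    have := two_mul_choose_succ_two k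
    rw [sum_degrees_eq_twice_card_edges, sum_const, card_univ, smul_eq_mul]
    nlinarith
  obtain ⟨x, -, hx⟩ := exists_lt_of_sum_lt hsum
  exact ⟨x, hx⟩

theorem lt_ncard_of_neighborSet_subset (hG : IsMaderCritical k G) {v : V} {s : Set V}
    (h : G.neighborSet v ⊆ s) : k < s.ncard :=
  calc k < G.degree v := hG.lt_degree v
    _ = (G.neighborSet v).ncard := by
      rw [← Set.fintypeCard_eq_ncard, card_neighborSet_eq_degree]
    _ ≤ s.ncard := Set.ncard_le_ncard h

theorem not_isClique_outerBoundary (hG : IsMaderCritical k G) {C : Set V} (hC : C.Nonempty)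
    (hne : C ∪ outerBoundary G C ≠ Set.univ) : ¬ G.IsClique (outerBoundary G C) := by
  intro hclique
  set A := C ∪ outerBoundary G C
  have hunion : A ∪ Cᶜ = Set.univ := by grind
  have hinter : A ∩ Cᶜ = outerBoundary G C := by grind [outerBoundary]
  have hAC : ∀ p q, G.Adj p q → p ∈ A ∧ q ∈ A ∨ p ∈ Cᶜ ∧ q ∈ Cᶜ := by
    grind [outerBoundary, adj_comm]
  have hA : k < A.ncard := by
    obtain ⟨c, hc⟩ := hC
    exact hG.lt_ncard_of_neighborSet_subset (v := c) (by grind [outerBoundary, mem_neighborSet])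
  have hB : k < Cᶜ.ncard := by
    obtain ⟨y, hy⟩ := (Set.ne_univ_iff_exists_notMem _).1 hne
    exact hG.lt_ncard_of_neighborSet_subset (v := y)
      (by grind [outerBoundary, mem_neighborSet, adj_comm])
  have heA := hG.card_edgeFinset_induce_add_choose_le hne hA
  have heB := hG.card_edgeFinset_induce_add_choose_le (by simpa using hC.ne_empty) hB
  have he := hG.card_edgeFinset_add_choose
  have hsep := card_edgeFinset_add_choose_le_of_isClique_inter hAC (hinter ▸ hclique)
  have hcard := congrArg (k * ·) (Set.ncard_union_add_ncard_inter A Cᶜ)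
  have := mul_le_choose_two_add_choose_succ_two k (A ∩ Cᶜ).ncard
  simp only [hunion, Set.ncard_univ, Nat.card_eq_fintype_card, mul_add] at hcard
  omega

end IsMaderCritical

end MaderCritical

section LocalStep

variable {V : Type u} {G : SimpleGraph V} {k : ℕ}

/-- The local condition on which the induction for `MaderBound k` rests: in a graph on fewer than
`2 * k` vertices with all degrees at least `k`, joining two nonadjacent vertices by a new edge
produces a `K_{k+1}` minor. -/
def AddEdgeForcesMinor (k : ℕ) : Prop :=
  ∀ ⦃W : Type u⦄ [Fintype W] (H : SimpleGraph W), Fintype.card W < 2 * k →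
    (∀ w, k ≤ H.degree w) → ∀ ⦃a b⦄, a ≠ b → ¬ H.Adj a b →
      (H ⊔ edge a b).HasCompleteMinor (k + 1)

theorem connected_induce_componentCompl {K : Set V} (C : G.ComponentCompl K) :
    (G.induce (C : Set V)).Connected := by
  refine (ConnectedComponent.connected_toSimpleGraph C).map
    { toFun := fun v => ⟨v.1.1, v.1.2, v.2⟩, map_rel' := fun h => h } ?_
  rintro ⟨v, hv, hC⟩
  exact ⟨⟨⟨v, hv⟩, hC⟩, rfl⟩

theorem outerBoundary_componentCompl_subset {K : Set V} (C : G.ComponentCompl K) :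
    outerBoundary G C ⊆ K := by
  rintro v ⟨hv, c, hc, hcv⟩
  by_contra hK
  exact hv (C.mem_of_adj c v hc hK hcv)

theorem hasCompleteMinor_succ_of_induce_neighborSet_sup_edge {x : V} {C : Set V} {t : ℕ}
    (hC : (G.induce C).Connected) (hxC : Disjoint (insert x (G.neighborSet x)) C)
    {a b : G.neighborSet x} (ha : a.1 ∈ outerBoundary G C) (hb : b.1 ∈ outerBoundary G C)
    (h : (G.induce (G.neighborSet x) ⊔ edge a b).HasCompleteMinor t) :
    G.HasCompleteMinor (t + 1) := by
  obtain ⟨hx, hNC⟩ := Set.disjoint_insert_left.1 hxC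
  obtain ⟨-, c, hc, hca⟩ := ha
  obtain ⟨-, d, hd, hdb⟩ := hb
  have haC : (G.induce (insert a.1 C)).Connected :=
    connected_induce_union (connected_induce_singleton G a.1).preconnected hC.preconnected
      rfl hc hca.symm
  have hle : G.induce (G.neighborSet x) ⊔ edge a b ≤
      (absorb G a C).induce (G.neighborSet x) := by
    refine sup_le (fun p q hpq => absorb_adj.2 (.inl hpq)) ((edge_le_iff _).2 ?_)
    obtain hab | hab := eq_or_ne a b
    · exact .inl hab
    · exact .inr (absorb_adj.2 (.inr ⟨Subtype.coe_ne_coe.2 hab, .inl ⟨rfl, d, hd, hdb⟩⟩))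
  refine (isMinorModel_absorb haC hNC).hasCompleteMinor_succ (x := x) (fun w hw => ?_) (fun w => ?_)
    (hasCompleteMinor_of_isContained (.of_le hle) h)
  · have := w.2.ne
    have := a.2.ne
    grind
  · exact ⟨w, by grind, w.2⟩

namespace IsMaderCritical

variable [Fintype V]

theorem exists_degree_lt_and_not_isUniversal (hG : IsMaderCritical k G) (hk : 2 ≤ k) :
    ∃ x, G.degree x < 2 * k ∧ ¬ G.IsUniversal x := by
  obtain ⟨v, hv⟩ := hG.exists_degree_lt hk
  have : Nonempty V := ⟨v⟩
  obtain ⟨x, hx⟩ := G.exists_minimal_degree_vertex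
  have hmin : ∀ w, G.degree x ≤ G.degree w := fun w => hx ▸ G.minDegree_le_degree w
  refine ⟨x, (hmin v).trans_lt hv, fun huniv => hG.not_hasCompleteMinor ?_⟩
  have htop : G = ⊤ := by
    refine eq_top_iff.2 fun p q hpq => (degree_eq_card_sub_one G p).1 ?_ hpq
    have := hmin p
    have := G.degree_lt_card_verts p
    rw [(degree_eq_card_sub_one G x).2 huniv] at *
    omega
  exact htop ▸ hasCompleteMinor_top hG.add_two_le_card

theorem le_degree_induce_neighborSet (hG : IsMaderCritical k G) (x : V) (v : G.neighborSet x) :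
    k ≤ (G.induce (G.neighborSet x)).degree v := by
  rw [← card_neighborFinset_eq_degree, ← card_map, map_neighborFinset_induce]
  convert hG.le_card_inter_neighborFinset (show G.Adj v x from v.2.symm) using 3
  exact Set.toFinset_congr rfl

theorem not_addEdgeForcesMinor (hG : IsMaderCritical k G) (hk : 2 ≤ k) :
    ¬ AddEdgeForcesMinor.{u} k := by
  intro hlocal
  obtain ⟨x, hxdeg, hx⟩ := hG.exists_degree_lt_and_not_isUniversal hk
  obtain ⟨y, hy⟩ : ∃ y, y ∉ insert x (G.neighborSet x) := by
    rwa [← insert_neighborSet_eq_univ, ← ne_eq, Set.ne_univ_iff_exists_notMem] at hx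
  set C := G.componentComplMk hy
  have hxC := C.disjoint_right
  have hboundary : outerBoundary G C ⊆ G.neighborSet x := by
    intro v hv
    obtain rfl | hvx := outerBoundary_componentCompl_subset C hv
    · obtain ⟨-, c, hc, hcv⟩ := hv
      exact absurd hc (Set.disjoint_left.1 hxC (.inr hcv.symm))
    · exact hvx
  have hne : (C : Set V) ∪ outerBoundary G C ≠ Set.univ := by
    refine (Set.ne_univ_iff_exists_notMem _).2 ⟨x, ?_⟩
    rintro (h | h)
    · exact Set.disjoint_left.1 hxC (Set.mem_insert x _) h
    · exact G.irrefl (hboundary h)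
  have hclique := hG.not_isClique_outerBoundary C.nonempty hne
  obtain ⟨a, ha, b, hb, hab, hadj⟩ : ∃ a ∈ outerBoundary G C, ∃ b ∈ outerBoundary G C,
      a ≠ b ∧ ¬ G.Adj a b := by
    simpa [isClique_iff, Set.Pairwise] using hclique
  have hminor := hlocal (G.induce (G.neighborSet x)) (by rwa [card_neighborSet_eq_degree])
    (hG.le_degree_induce_neighborSet x)
    (a := ⟨a, hboundary ha⟩) (b := ⟨b, hboundary hb⟩) (by simpa using hab) hadj
  exact hG.not_hasCompleteMinor (hasCompleteMinor_succ_of_induce_neighborSet_sup_edge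
    (connected_induce_componentCompl C) hxC ha hb hminor)

end IsMaderCritical

theorem maderBound_of_addEdgeForcesMinor (hk : 2 ≤ k) (h : AddEdgeForcesMinor.{u} k) :
    MaderBound.{u} k := by
  by_contra hbound
  obtain ⟨V, _, G, hG⟩ := exists_isMaderCritical hbound
  exact hG.not_addEdgeForcesMinor hk h

end LocalStep

section SmallCases

variable {V : Type u} [Fintype V] {G : SimpleGraph V} {k r : ℕ} {a b : V}

theorem degree_add_two_le_card_of_not_adj (hab : a ≠ b) (hadj : ¬ G.Adj a b) :
    G.degree a + 2 ≤ Fintype.card V := by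
  have hdisj : Disjoint (G.neighborFinset a) {a, b} := by simp [disjoint_right, hadj]
  rw [← card_neighborFinset_eq_degree, ← card_pair hab, ← card_union_of_disjoint hdisj]
  exact card_le_univ _

theorem mul_card_le_two_mul_card_edgeFinset (hdeg : ∀ v, k ≤ G.degree v) :
    k * Fintype.card V ≤ 2 * #G.edgeFinset := by
  rw [← sum_degrees_eq_twice_card_edges, mul_comm, ← card_univ, ← smul_eq_mul]
  exact card_nsmul_le_sum univ _ k fun v _ => hdeg v

theorem isRegularOfDegree_of_two_mul_card_edgeFinset_le (hdeg : ∀ v, k ≤ G.degree v)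
    (h : 2 * #G.edgeFinset ≤ k * Fintype.card V) : G.IsRegularOfDegree k := by
  have hsum : ∑ _v : V, k = ∑ v, G.degree v := by
    rw [sum_degrees_eq_twice_card_edges, sum_const, smul_eq_mul, card_univ, mul_comm]
    exact (mul_card_le_two_mul_card_edgeFinset hdeg).antisymm h
  exact fun v => ((sum_eq_sum_iff_of_le fun w _ => hdeg w).1 hsum v (mem_univ v)).symm

theorem exists_not_adj_and_disjoint_neighborSet (hdeg : ∀ v, G.degree v ≤ r)
    (hr : r ^ 2 + 1 < Fintype.card V) (u : V) :
    ∃ v, v ≠ u ∧ ¬ G.Adj u v ∧ Disjoint (G.neighborSet u) (G.neighborSet v) := by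
  set N := G.neighborFinset u
  -- The ball of radius two around `u` has at most `1 + r + r * (r - 1)` vertices (Moore bound).
  set N₂ := N.biUnion fun w => (G.neighborFinset w).erase u
  have hN₂ : #N₂ ≤ r * (r - 1) := by
    refine (card_biUnion_le_card_mul N _ (r - 1) fun w hw => ?_).trans
      (Nat.mul_le_mul_right _ (hdeg u))
    rw [card_erase_of_mem (by simpa [N, adj_comm] using hw)]
    exact Nat.sub_le_sub_right (hdeg w) 1
  have hball : #(insert u (N ∪ N₂)) < #(univ : Finset V) :=
    calc #(insert u (N ∪ N₂)) ≤ #N + #N₂ + 1 :=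
          (card_insert_le _ _).trans (Nat.add_le_add_right (card_union_le _ _) 1)
      _ ≤ r + r * (r - 1) + 1 := by gcongr; exact hdeg u
      _ = r ^ 2 + 1 := by cases r <;> simp; ring
      _ < #(univ : Finset V) := hr
  obtain ⟨v, -, hv⟩ := exists_mem_notMem_of_card_lt_card hball
  simp only [mem_insert, mem_union, N, N₂, mem_biUnion, mem_erase, mem_neighborFinset, not_or,
    not_exists, not_and] at hv
  refine ⟨v, hv.1, hv.2.1, Set.disjoint_left.2 fun w hw hvw => ?_⟩
  exact hv.2.2 w hw hv.1 (G.adj_symm hvw)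

namespace MaderBound

theorem hasCompleteMinor_of_adj (h : MaderBound.{u} k) {u v : V} (huv : G.Adj u v)
    (hk : k + 2 ≤ Fintype.card V)
    (hG : k * Fintype.card V + 1 + #(G.neighborFinset u ∩ G.neighborFinset v) <
      #G.edgeFinset + (k + 1).choose 2 + k) : G.HasCompleteMinor (k + 2) := by
  have hcard := ncard_compl_singleton_add_one v
  have hcontract := card_edgeFinset_le_absorb_add huv
  rw [← Set.fintypeCard_eq_ncard] at hcard
  rw [← hcard, mul_add_one] at hG
  have horder : k + 1 ≤ Fintype.card ({v}ᶜ : Set V) := by omega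
  have hsize : k * Fintype.card ({v}ᶜ : Set V) <
      #((absorb G u {v}).induce {v}ᶜ).edgeFinset + (k + 1).choose 2 := by omega
  exact (isMinorModel_absorb (induce_pair_connected_of_adj huv)
    disjoint_compl_left).hasCompleteMinor (h _ (by convert horder) (by convert hsize))

theorem hasCompleteMinor_sup_edge (h : MaderBound.{u} k) (hab : a ≠ b) (hadj : ¬ G.Adj a b)
    (hk : k + 1 ≤ Fintype.card V)
    (hG : k * Fintype.card V < #G.edgeFinset + 1 + (k + 1).choose 2) :
    (G ⊔ edge a b).HasCompleteMinor (k + 2) :=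
  h _ hk (by convert hG using 2; convert G.card_edgeFinset_sup_edge hadj hab)

end MaderBound

theorem addEdgeForcesMinor_two : AddEdgeForcesMinor.{u} 2 := by
  intro W _ H hcard hdeg a b hab hadj
  have := degree_add_two_le_card_of_not_adj hab hadj
  have := hdeg a
  omega

theorem maderBound_two : MaderBound.{u} 2 :=
  maderBound_of_addEdgeForcesMinor le_rfl addEdgeForcesMinor_two

theorem addEdgeForcesMinor_three : AddEdgeForcesMinor.{u} 3 := by
  intro W _ H hcard hdeg a b hab hadj
  have := degree_add_two_le_card_of_not_adj hab hadj
  have := hdeg a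
  have := mul_card_le_two_mul_card_edgeFinset hdeg
  have hchoose : (2 + 1).choose 2 = 3 := rfl
  exact maderBound_two.hasCompleteMinor_sup_edge hab hadj (by omega) (by omega)

theorem maderBound_three : MaderBound.{u} 3 :=
  maderBound_of_addEdgeForcesMinor (by norm_num) addEdgeForcesMinor_three

theorem exists_adj_card_inter_neighborFinset_le_one (hreg : G.IsRegularOfDegree 4)
    (hcard : Fintype.card V = 7) (hab : a ≠ b) (hadj : ¬ G.Adj a b) :
    ∃ c v, G.Adj c v ∧ c ≠ a ∧ c ≠ b ∧ v ≠ a ∧ v ≠ b ∧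
      #(G.neighborFinset c ∩ G.neighborFinset v) ≤ 1 := by
  have hcompl : ∀ v, Gᶜ.degree v = 2 := fun v => by rw [degree_compl, hreg v, hcard]
  obtain ⟨c, hc⟩ : ((Gᶜ.neighborFinset a).erase b).Nonempty := by
    rw [← card_pos, card_erase_of_mem (by simp [hab, hadj]), card_neighborFinset_eq_degree, hcompl]
    norm_num
  obtain ⟨v, hvc, hnadj, hdisj⟩ := exists_not_adj_and_disjoint_neighborSet
    (fun w => le_of_eq (by convert hcompl w)) (by rw [hcard]; norm_num) c
  simp only [Set.disjoint_left, mem_neighborSet, mem_neighborFinset, compl_adj, mem_erase]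
    at hc hnadj hdisj
  have hcv : G.Adj c v := by grind
  have hunion : G.neighborFinset c ∪ G.neighborFinset v = univ := by
    refine eq_univ_of_forall fun w => ?_
    rw [mem_union, mem_neighborFinset, mem_neighborFinset]
    by_contra! h
    exact hdisj ⟨by rintro rfl; exact h.2 hcv.symm, h.1⟩ ⟨by rintro rfl; exact h.1 hcv, h.2⟩
  have hinter := card_union_add_card_inter (G.neighborFinset c) (G.neighborFinset v)
  rw [hunion, card_univ, hcard, card_neighborFinset_eq_degree, card_neighborFinset_eq_degree,
    hreg c, hreg v] at hinter
  have hca : ¬ G.Adj c a := fun h => hc.2.2 h.symm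
  refine ⟨c, v, hcv, hc.2.1.symm, hc.1, ?_, ?_, by omega⟩
  · rintro rfl
    exact hca hcv
  · rintro rfl
    exact hdisj ⟨hc.2.1.symm, hca⟩ ⟨hab.symm, fun h => hadj h.symm⟩

theorem hasCompleteMinor_sup_edge_of_isRegularOfDegree_four (hreg : G.IsRegularOfDegree 4)
    (hcard : Fintype.card V = 7) (hab : a ≠ b) (hadj : ¬ G.Adj a b) :
    (G ⊔ edge a b).HasCompleteMinor 5 := by
  obtain ⟨c, v, hcv, hca, hcb, hva, hvb, hinter⟩ :=
    exists_adj_card_inter_neighborFinset_le_one hreg hcard hab hadj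
  have hneighbor : ∀ w, w ≠ a → w ≠ b →
      (G ⊔ edge a b).neighborFinset w = G.neighborFinset w := by
    intro w hwa hwb
    ext p
    simp [edge_adj, hwa, hwb]
  have hsum := mul_card_le_two_mul_card_edgeFinset fun w => (hreg w).ge
  have hchoose : (3 + 1).choose 2 = 6 := rfl
  refine maderBound_three.hasCompleteMinor_of_adj (u := c) (v := v) (.inl hcv) (by omega) ?_
  have hsize : #(G ⊔ edge a b).edgeFinset = #G.edgeFinset + 1 :=
    G.card_edgeFinset_sup_edge hadj hab
  have hcommon : #((G ⊔ edge a b).neighborFinset c ∩ (G ⊔ edge a b).neighborFinset v) ≤ 1 := by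
    rwa [hneighbor c hca hcb, hneighbor v hva hvb]
  have hbound : 3 * Fintype.card V + 1 +
      #((G ⊔ edge a b).neighborFinset c ∩ (G ⊔ edge a b).neighborFinset v) <
        #(G ⊔ edge a b).edgeFinset + (3 + 1).choose 2 + 3 := by omega
  convert hbound

theorem addEdgeForcesMinor_four : AddEdgeForcesMinor.{u} 4 := by
  intro W _ H hcard hdeg a b hab hadj
  have := degree_add_two_le_card_of_not_adj hab hadj
  have := hdeg a
  have := mul_card_le_two_mul_card_edgeFinset hdeg
  have hchoose : (3 + 1).choose 2 = 6 := rfl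
  by_cases hfew : Fintype.card W = 7 ∧ #H.edgeFinset ≤ 14
  · exact hasCompleteMinor_sup_edge_of_isRegularOfDegree_four
      (isRegularOfDegree_of_two_mul_card_edgeFinset_le hdeg (by omega)) hfew.1 hab hadj
  · exact maderBound_three.hasCompleteMinor_sup_edge hab hadj (by omega) (by omega)

theorem maderBound_four : MaderBound.{u} 4 :=
  maderBound_of_addEdgeForcesMinor (by norm_num) addEdgeForcesMinor_four

end SmallCases

theorem edges_ge_4n_sub_9_hasK6Minor {V : Type*} [Fintype V] (G : SimpleGraph V)
    (hn : 5 ≤ Fintype.card V) (hsize : 4 * Fintype.card V - 9 ≤ G.edgeFinset.card) :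
    G.HasCompleteMinor 6 := by
  have hchoose : (4 + 1).choose 2 = 10 := rfl
  exact maderBound_four G hn (by omega)
end

section
/- There exists a simple graph of order 26 with minimum degree exactly 6 that contains no K_6 minor. Concretely, let Ic be the icosahedral graph, let G_1 and G_2 each be the cone K_1 ∗ Ic (a new vertex joined to all 12 vertices of Ic), and let G be obtained from the disjoint union of G_1 and G_2 by adding a single edge joining a vertex of G_1 to a vertex of G_2; then G has order 26, minimum degree 6, and no K_6 minor. -/
attribute [local instance] Classical.propDecidable

/-- The icosahedral graph: vertices `a`, `b i`, `c i` (`i : Fin 5`), `z`, with edges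
`a bᵢ`, `bᵢ bᵢ₊₁`, `bᵢ cᵢ`, `bᵢ cᵢ₊₁`, `cᵢ cᵢ₊₁` (indices mod 5), and `z cᵢ`. -/
def Icosa : SimpleGraph (Unit ⊕ Fin 5 ⊕ Fin 5 ⊕ Unit) :=
  SimpleGraph.fromRel fun u v =>
    match u, v with
    | Sum.inl _, Sum.inr (Sum.inl _) => True
    | Sum.inr (Sum.inl i), Sum.inr (Sum.inl j) => j = i + 1
    | Sum.inr (Sum.inl i), Sum.inr (Sum.inr (Sum.inl j)) => j = i ∨ j = i + 1
    | Sum.inr (Sum.inr (Sum.inl i)), Sum.inr (Sum.inr (Sum.inl j)) => j = i + 1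
    | Sum.inr (Sum.inr (Sum.inr _)), Sum.inr (Sum.inr (Sum.inl _)) => True
    | _, _ => False

/-- The cone `K₁ ∗ H`: one new vertex joined to every vertex of `H`. -/
def cone {V : Type*} (H : SimpleGraph V) : SimpleGraph (Unit ⊕ V) :=
  SimpleGraph.fromRel fun u v =>
    match u, v with
    | Sum.inl _, Sum.inr _ => True
    | Sum.inr a, Sum.inr b => H.Adj a b
    | _, _ => False

/-- Disjoint union of `G₁` and `G₂` together with a single bridging edge from `x` to `y`. -/
def addBridge {V W : Type*} (G₁ : SimpleGraph V) (G₂ : SimpleGraph W) (x : V) (y : W) :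
    SimpleGraph (V ⊕ W) :=
  SimpleGraph.fromRel fun u v =>
    match u, v with
    | Sum.inl a, Sum.inl b => G₁.Adj a b
    | Sum.inr a, Sum.inr b => G₂.Adj a b
    | Sum.inl a, Sum.inr b => a = x ∧ b = y
    | _, _ => False

/-!
The icosahedron triangulates the sphere. Contract a triangulated sphere onto a complete graph `K_k`
and call a face rainbow if its vertices stay distinct. The Euler inequality modulo two, applied to
the subcomplex of contracted edges and faces, leaves at most `2k - 4` rainbow faces. For `k ≥ 3`,
since the first cohomology of the sphere vanishes, each of the `k(k - 1)/2` edges of `K_k` is the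
image of an edge of at least two rainbow faces, so `k(k - 1) ≤ 3(2k - 4)` and hence `k ≤ 4`. The
apex of a cone adds at most one branch set, and a bridge adds none, as deleting an edge of a larger
complete graph does not disconnect it.
-/

variable {V : Type*}

section Cochains

/-- The simplicial coboundary from vertices to the edges of `H`, with coefficients in `ZMod 2`. -/
def vertexCoboundary (H : SimpleGraph V) : (V → ZMod 2) →ₗ[ZMod 2] (H.edgeSet → ZMod 2) where
  toFun f e := Sym2.lift ⟨fun u v => f u + f v, fun _ _ => add_comm _ _⟩ e.1
  map_add' f g := by
    ext ⟨e, he⟩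
    induction e with
    | _ u v => exact add_add_add_comm _ _ _ _
  map_smul' r f := by
    ext ⟨e, he⟩
    induction e with
    | _ u v => exact (mul_add _ _ _).symm

theorem vertexCoboundary_apply {H : SimpleGraph V} (f : V → ZMod 2) {u v : V} (h : H.Adj u v) :
    vertexCoboundary H f ⟨s(u, v), h⟩ = f u + f v :=
  rfl

theorem mem_ker_vertexCoboundary {H : SimpleGraph V} {f : V → ZMod 2} :
    f ∈ LinearMap.ker (vertexCoboundary H) ↔ ∀ u v, H.Adj u v → f u = f v := by
  rw [LinearMap.mem_ker]
  constructor
  · intro hf u v h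
    rw [← CharTwo.add_eq_zero, ← vertexCoboundary_apply f h, hf, Pi.zero_apply]
  · intro hf
    ext ⟨e, he⟩
    induction e with
    | _ u v => exact CharTwo.add_eq_zero.2 (hf u v he)

theorem eq_of_mem_ker_vertexCoboundary {H : SimpleGraph V} {f : V → ZMod 2}
    (hf : f ∈ LinearMap.ker (vertexCoboundary H)) {u v : V} (h : H.Reachable u v) : f u = f v := by
  obtain ⟨p⟩ := h
  induction p with
  | nil => rfl
  | cons hadj _ ih => exact (mem_ker_vertexCoboundary.1 hf _ _ hadj).trans ih

theorem ker_vertexCoboundary (H : SimpleGraph V) :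
    LinearMap.ker (vertexCoboundary H) =
      LinearMap.range (LinearMap.funLeft (ZMod 2) (ZMod 2) H.connectedComponentMk) := by
  ext f
  constructor
  · intro hf
    refine ⟨SimpleGraph.ConnectedComponent.lift f fun u v p _ =>
      eq_of_mem_ker_vertexCoboundary hf p.reachable, ?_⟩
    ext v
    rfl
  · rintro ⟨g, rfl⟩
    refine mem_ker_vertexCoboundary.2 fun u v h => congrArg g ?_
    exact SimpleGraph.ConnectedComponent.eq.2 h.reachable

theorem finrank_range_vertexCoboundary [Fintype V] (H : SimpleGraph V) :
    Module.finrank (ZMod 2) (LinearMap.range (vertexCoboundary H)) +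
      Fintype.card H.ConnectedComponent = Fintype.card V := by
  have hker : Module.finrank (ZMod 2) (LinearMap.ker (vertexCoboundary H)) =
      Fintype.card H.ConnectedComponent := by
    rw [ker_vertexCoboundary, LinearMap.finrank_range_of_inj, Module.finrank_fintype_fun_eq_card]
    exact LinearMap.funLeft_injective_of_surjective _ _ _ Quot.mk_surjective
  rw [← hker, LinearMap.finrank_range_add_finrank_ker, Module.finrank_fintype_fun_eq_card]

variable [Fintype V]

/-- The simplicial coboundary from the edges of `H` to a set `F` of triangles, with coefficients
in `ZMod 2`. -/
noncomputable def faceCoboundary (H : SimpleGraph V) (F : Finset (Finset V)) :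
    (H.edgeSet → ZMod 2) →ₗ[ZMod 2] (F → ZMod 2) where
  toFun c t := ∑ e : H.edgeSet with e.1 ∈ t.1.sym2, c e
  map_add' c d := by
    ext t
    simp only [Pi.add_apply, Finset.sum_add_distrib]
  map_smul' r c := by
    ext t
    simp only [Pi.smul_apply, smul_eq_mul, Finset.mul_sum, RingHom.id_apply]

theorem filter_edgeFinset_mem_sym2 {G : SimpleGraph V} {a b c : V}
    (hab : G.Adj a b) (hac : G.Adj a c) (hbc : G.Adj b c) :
    {e ∈ G.edgeFinset | e ∈ ({a, b, c} : Finset V).sym2} = {s(a, b), s(a, c), s(b, c)} := by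
  ext e
  induction e with
  | _ u v =>
    simp only [Finset.mem_filter, SimpleGraph.mem_edgeFinset, SimpleGraph.mem_edgeSet,
      Finset.mk_mem_sym2_iff, Finset.mem_insert, Finset.mem_singleton, Sym2.eq_iff]
    grind [SimpleGraph.Adj.symm, SimpleGraph.irrefl]

theorem sum_edges_of_triangle {M : Type*} [AddCommMonoid M] {G : SimpleGraph V} {a b c : V}
    (hab : G.Adj a b) (hac : G.Adj a c) (hbc : G.Adj b c) (f : Sym2 V → M) :
    ∑ e ∈ G.edgeFinset with e ∈ ({a, b, c} : Finset V).sym2, f e =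
      f s(a, b) + (f s(a, c) + f s(b, c)) := by
  rw [filter_edgeFinset_mem_sym2 hab hac hbc, Finset.sum_insert, Finset.sum_pair]
  all_goals simp [hab.ne, hac.ne, hbc.ne, hab.ne', hbc.ne']

theorem faceCoboundary_apply (H : SimpleGraph V) (F : Finset (Finset V)) (c : Sym2 V → ZMod 2)
    (t : F) :
    faceCoboundary H F (fun e => c e) t = ∑ e ∈ H.edgeFinset with e ∈ t.1.sym2, c e := by
  rw [Finset.sum_filter, SimpleGraph.edgeFinset, ← Finset.sum_set_coe, ← Finset.sum_filter]
  rfl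

theorem faceCoboundary_single (H : SimpleGraph V) (F : Finset (Finset V)) (e : H.edgeSet) (t : F) :
    faceCoboundary H F (Pi.single e 1) t = if e.1 ∈ t.1.sym2 then 1 else 0 := by
  change ∑ e' : H.edgeSet with e'.1 ∈ t.1.sym2, (Pi.single e 1 : H.edgeSet → ZMod 2) e' = _
  simp

theorem range_vertexCoboundary_le_ker_faceCoboundary {H : SimpleGraph V} {F : Finset (Finset V)}
    (hF : ∀ t ∈ F, H.IsNClique 3 t) :
    LinearMap.range (vertexCoboundary H) ≤ LinearMap.ker (faceCoboundary H F) := by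
  rintro _ ⟨f, rfl⟩
  rw [LinearMap.mem_ker]
  ext ⟨t, ht⟩
  obtain ⟨a, b, c, hab, hac, hbc, rfl⟩ := SimpleGraph.is3Clique_iff.1 (hF t ht)
  have hsum := (faceCoboundary_apply H F (Sym2.lift ⟨fun u v => f u + f v, fun _ _ => add_comm _ _⟩)
    ⟨_, ht⟩).trans (sum_edges_of_triangle hab hac hbc _)
  refine hsum.trans ?_
  change f a + f b + (f a + f c + (f b + f c)) = 0
  linear_combination CharTwo.add_self_eq_zero (f a) + CharTwo.add_self_eq_zero (f b) +
    CharTwo.add_self_eq_zero (f c)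

end Cochains

theorem mem_edgeSet_of_isClique {G H : SimpleGraph V} {t : Finset V} (ht : H.IsClique t)
    {e : Sym2 V} (het : e ∈ t.sym2) (he : e ∈ G.edgeSet) : e ∈ H.edgeSet := by
  induction e with
  | _ u v =>
    obtain ⟨hu, hv⟩ := Finset.mk_mem_sym2_iff.1 het
    exact ht hu hv he.ne

/-- Two triangles in a set `T` are adjacent in the dual graph if they share an edge of `G`. -/
def dualGraph (G : SimpleGraph V) (T : Finset (Finset V)) : SimpleGraph T where
  Adj s t := s ≠ t ∧ ∃ e ∈ G.edgeSet, e ∈ s.1.sym2 ∧ e ∈ t.1.sym2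
  symm := ⟨fun _ _ ⟨hne, e, he, hs, ht⟩ => ⟨hne.symm, e, he, ht, hs⟩⟩
  loopless := ⟨fun _ h => h.1 rfl⟩

theorem reachable_dualGraph {G : SimpleGraph V} {T : Finset (Finset V)} {s t : T} {e : Sym2 V}
    (he : e ∈ G.edgeSet) (hs : e ∈ s.1.sym2) (ht : e ∈ t.1.sym2) :
    (dualGraph G T).Reachable s t := by
  by_cases hst : s = t
  · rw [hst]
  · exact SimpleGraph.Adj.reachable ⟨hst, e, he, hs, ht⟩

/-- The set `T` of triangles of `G` is the set of faces of a triangulated sphere: a connected closed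
surface of Euler characteristic two. Vertex links are then automatically cycles, as pulling apart
a pinched vertex would give a connected closed surface of larger Euler characteristic. -/
structure IsSphereTriangulation [Fintype V] (G : SimpleGraph V) (T : Finset (Finset V)) :
    Prop where
  connected : G.Connected
  isNClique : ∀ t ∈ T, G.IsNClique 3 t
  card_faces_of_edge : ∀ e ∈ G.edgeSet, {t ∈ T | e ∈ t.sym2}.card = 2
  dual_connected : (dualGraph G T).Connected
  euler : Fintype.card V + T.card = G.edgeFinset.card + 2

namespace IsSphereTriangulation

variable [Fintype V] {G H : SimpleGraph V} {T F : Finset (Finset V)}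

theorem mem_sym2_iff_eq_or_eq (hT : IsSphereTriangulation G T) {s t : T} (hst : s ≠ t)
    {e : Sym2 V} (he : e ∈ G.edgeSet) (hs : e ∈ s.1.sym2) (ht : e ∈ t.1.sym2) (r : T) :
    e ∈ r.1.sym2 ↔ r = s ∨ r = t := by
  have hpair : {s.1, t.1} = {t ∈ T | e ∈ t.sym2} := by
    refine Finset.eq_of_subset_of_card_le ?_ ?_
    · simp only [Finset.insert_subset_iff, Finset.singleton_subset_iff, Finset.mem_filter]
      exact ⟨⟨s.2, hs⟩, t.2, ht⟩
    · rw [hT.card_faces_of_edge e he, Finset.card_pair (Subtype.coe_ne_coe.2 hst)]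
  have hr := congrArg (r.1 ∈ ·) hpair
  simp only [Finset.mem_insert, Finset.mem_singleton, Finset.mem_filter, r.2, true_and,
    SetLike.coe_eq_coe, eq_iff_iff] at hr
  exact hr.symm

theorem single_mem_range_faceCoboundary (hT : IsSphereTriangulation G T)
    (hFT : F ⊂ T) (hF : ∀ t ∈ F, H.IsNClique 3 t) (t : F) :
    Pi.single t 1 ∈ LinearMap.range (faceCoboundary H F) := by
  obtain ⟨t₀, ht₀, ht₀F⟩ := Finset.exists_of_ssubset hFT
  suffices hreach : ∀ t : T, (dualGraph G T).Reachable ⟨t₀, ht₀⟩ t → ∀ ht : t.1 ∈ F,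
      Pi.single ⟨t.1, ht⟩ 1 ∈ LinearMap.range (faceCoboundary H F) from
    hreach ⟨t, hFT.1 t.2⟩ (hT.dual_connected _ _) t.2
  intro t hreach
  rw [SimpleGraph.reachable_iff_reflTransGen] at hreach
  induction hreach with
  | refl => exact fun ht => absurd ht ht₀F
  | @tail s t _ hadj ih =>
    intro ht
    obtain ⟨hst, e, he, hes, het⟩ := hadj
    have heH : e ∈ H.edgeSet := mem_edgeSet_of_isClique (hF t ht).isClique het he
    have hfaces : ∀ r : F, e ∈ r.1.sym2 ↔ r.1 = s.1 ∨ r.1 = t.1 := fun r => by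
      simpa only [Subtype.ext_iff] using
        hT.mem_sym2_iff_eq_or_eq hst he hes het ⟨r.1, hFT.1 r.2⟩
    have hne : s.1 ≠ t.1 := Subtype.coe_ne_coe.2 hst
    by_cases hs : s.1 ∈ F
    · have hsingle : (Pi.single ⟨t.1, ht⟩ 1 : F → ZMod 2) =
          faceCoboundary H F (Pi.single ⟨e, heH⟩ 1) - Pi.single ⟨s.1, hs⟩ 1 := by
        ext r
        simp only [Pi.sub_apply, faceCoboundary_single, hfaces, Pi.single_apply, Subtype.ext_iff]
        grind
      rw [hsingle]
      exact sub_mem (LinearMap.mem_range_self _ _) (ih hs)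
    · refine ⟨Pi.single ⟨e, heH⟩ 1, ?_⟩
      ext r
      simp only [faceCoboundary_single, hfaces, Pi.single_apply, Subtype.ext_iff]
      grind

theorem range_faceCoboundary (hT : IsSphereTriangulation G T)
    (hFT : F ⊂ T) (hF : ∀ t ∈ F, H.IsNClique 3 t) :
    LinearMap.range (faceCoboundary H F) = ⊤ := by
  rw [eq_top_iff, ← (Pi.basisFun (ZMod 2) F).span_eq, Submodule.span_le]
  rintro _ ⟨t, rfl⟩
  rw [Pi.basisFun_apply]
  exact hT.single_mem_range_faceCoboundary hFT hF t

theorem finrank_ker_faceCoboundary (hT : IsSphereTriangulation G T)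
    (hFT : F ⊂ T) (hF : ∀ t ∈ F, H.IsNClique 3 t) :
    F.card + Module.finrank (ZMod 2) (LinearMap.ker (faceCoboundary H F)) = H.edgeFinset.card := by
  have hrank := LinearMap.finrank_range_add_finrank_ker (faceCoboundary H F)
  rwa [hT.range_faceCoboundary hFT hF, finrank_top, Module.finrank_fintype_fun_eq_card,
    Module.finrank_fintype_fun_eq_card, Fintype.card_coe, ← SimpleGraph.edgeFinset_card] at hrank

/-- The Euler inequality `|V| - |E| + |F| ≤ b₀` of a proper subcomplex, whose second homology
vanishes. -/
theorem card_add_card_le_of_ssubset (hT : IsSphereTriangulation G T)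
    (hFT : F ⊂ T) (hF : ∀ t ∈ F, H.IsNClique 3 t) :
    Fintype.card V + F.card ≤ H.edgeFinset.card + Fintype.card H.ConnectedComponent := by
  have hle : LinearMap.range (vertexCoboundary H) ≤ LinearMap.ker (faceCoboundary H F) :=
    range_vertexCoboundary_le_ker_faceCoboundary hF
  have hrank := Submodule.finrank_mono hle
  have hvert := finrank_range_vertexCoboundary H
  have hface := hT.finrank_ker_faceCoboundary hFT hF
  omega

/-- The first cohomology of the sphere vanishes: both sides of
`range_vertexCoboundary_le_ker_faceCoboundary` have dimension `|V| - 1` by Euler's formula. -/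
theorem mem_range_vertexCoboundary_of_mem_ker (hT : IsSphereTriangulation G T)
    {c : G.edgeSet → ZMod 2} (hc : c ∈ LinearMap.ker (faceCoboundary G T)) :
    c ∈ LinearMap.range (vertexCoboundary G) := by
  obtain ⟨t₀, ht₀⟩ := hT.dual_connected.nonempty
  have hF : ∀ t ∈ T.erase t₀, G.IsNClique 3 t := fun t ht =>
    hT.isNClique t (Finset.mem_of_mem_erase ht)
  have hvert := finrank_range_vertexCoboundary G
  have hone : Fintype.card G.ConnectedComponent = 1 :=
    have := hT.connected.preconnected.subsingleton_connectedComponent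
    have := hT.connected.nonempty
    Fintype.card_eq_one_iff_nonempty_unique.2 ⟨uniqueOfSubsingleton (Classical.arbitrary _)⟩
  have hface := hT.finrank_ker_faceCoboundary (Finset.erase_ssubset ht₀) hF
  have hcard := Finset.card_erase_add_one ht₀
  have heuler := hT.euler
  have heq : LinearMap.range (vertexCoboundary G) =
      LinearMap.ker (faceCoboundary G (T.erase t₀)) :=
    Submodule.eq_of_le_of_finrank_eq (range_vertexCoboundary_le_ker_faceCoboundary hF) (by omega)
  rw [heq, LinearMap.mem_ker]
  ext t
  exact congrFun hc ⟨t.1, Finset.mem_of_mem_erase t.2⟩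

theorem sum_faces_sum_edges (hT : IsSphereTriangulation G T) (f : Sym2 V → ℕ) :
    ∑ t ∈ T, ∑ e ∈ G.edgeFinset with e ∈ t.sym2, f e = 2 * ∑ e ∈ G.edgeFinset, f e := by
  simp only [Finset.sum_filter]
  rw [Finset.sum_comm, Finset.mul_sum]
  refine Finset.sum_congr rfl fun e he => ?_
  rw [← Finset.sum_filter, Finset.sum_const, hT.card_faces_of_edge e
    (SimpleGraph.mem_edgeFinset.1 he), smul_eq_mul]

theorem three_mul_card_faces (hT : IsSphereTriangulation G T) :
    3 * T.card = 2 * G.edgeFinset.card := by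
  rw [Finset.card_eq_sum_ones G.edgeFinset, ← hT.sum_faces_sum_edges, mul_comm, eq_comm]
  refine Finset.sum_const_nat fun t ht => ?_
  obtain ⟨a, b, c, hab, hac, hbc, rfl⟩ := SimpleGraph.is3Clique_iff.1 (hT.isNClique t ht)
  exact sum_edges_of_triangle hab hac hbc _

end IsSphereTriangulation

section Contraction

variable {ι : Type*} {G : SimpleGraph V} {φ : V → ι}

/-- The edges of `G` that are contracted by `φ`. -/
def fiberGraph (G : SimpleGraph V) (φ : V → ι) : SimpleGraph V where
  Adj u v := G.Adj u v ∧ φ u = φ v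
  symm := ⟨fun _ _ h => ⟨h.1.symm, h.2.symm⟩⟩
  loopless := ⟨fun _ h => G.irrefl h.1⟩

/-- Contracting the fibres of `φ`, which are connected, turns `G` into the complete graph
on `ι`. -/
structure IsCompleteContraction (G : SimpleGraph V) (φ : V → ι) : Prop where
  reachable : ∀ u v, φ u = φ v → (fiberGraph G φ).Reachable u v
  exists_adj : ∀ i j, i ≠ j → ∃ u v, φ u = i ∧ φ v = j ∧ G.Adj u v

theorem IsCompleteContraction.card_connectedComponent_le [Fintype V] [Fintype ι]
    (hφ : IsCompleteContraction G φ) :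
    Fintype.card (fiberGraph G φ).ConnectedComponent ≤ Fintype.card ι := by
  have hconst : ∀ {u v}, (fiberGraph G φ).Reachable u v → φ u = φ v := by
    rintro u v ⟨p⟩
    induction p with
    | nil => rfl
    | cons hadj _ ih => exact hadj.2.trans ih
  refine Fintype.card_le_of_injective
    (SimpleGraph.ConnectedComponent.lift φ fun _ _ p _ => hconst p.reachable) ?_
  refine SimpleGraph.ConnectedComponent.ind₂ fun u v huv => ?_
  exact SimpleGraph.ConnectedComponent.eq.2 (hφ.reachable u v huv)

variable [Fintype V]

/-- The faces whose three vertices stay distinct under `φ`. -/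
noncomputable def rainbowFaces (T : Finset (Finset V)) (φ : V → ι) : Finset (Finset V) :=
  T.filter fun t => Set.InjOn φ t

/-- The number of edges of the face `t` that `φ` maps to the pair `p`. -/
noncomputable def numEdgesOver (G : SimpleGraph V) (φ : V → ι) (p : Sym2 ι) (t : Finset V) : ℕ :=
  ∑ e ∈ G.edgeFinset with e ∈ t.sym2, if e.map φ = p then 1 else 0

theorem numEdgesOver_triangle {a b c : V} (hab : G.Adj a b) (hac : G.Adj a c) (hbc : G.Adj b c)
    (p : Sym2 ι) :
    numEdgesOver G φ p {a, b, c} = (if s(φ a, φ b) = p then 1 else 0) +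
      ((if s(φ a, φ c) = p then 1 else 0) + (if s(φ b, φ c) = p then 1 else 0)) :=
  sum_edges_of_triangle hab hac hbc _

theorem injOn_of_odd_numEdgesOver {p : Sym2 ι} (hp : ¬p.IsDiag) {t : Finset V}
    (ht : G.IsNClique 3 t) (hodd : Odd (numEdgesOver G φ p t)) : Set.InjOn φ t := by
  obtain ⟨a, b, c, hab, hac, hbc, rfl⟩ := SimpleGraph.is3Clique_iff.1 ht
  rw [numEdgesOver_triangle hab hac hbc] at hodd
  have hdiag : ∀ i, s(i, i) ≠ p := fun i h => hp (h ▸ Sym2.mk_isDiag_iff.2 rfl)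
  have hswap : ∀ i j : ι, s(i, j) = s(j, i) := fun i j => Sym2.eq_swap
  have h₁ : φ a ≠ φ b := by
    intro h
    rw [h, if_neg (hdiag _), zero_add] at hodd
    exact Nat.not_odd_iff_even.2 (Even.add_self _) hodd
  have h₂ : φ a ≠ φ c := by
    intro h
    rw [h, if_neg (hdiag _), zero_add, hswap] at hodd
    exact Nat.not_odd_iff_even.2 (Even.add_self _) hodd
  have h₃ : φ b ≠ φ c := by
    intro h
    rw [h, if_neg (hdiag _), add_zero] at hodd
    exact Nat.not_odd_iff_even.2 (Even.add_self _) hodd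
  intro u hu v hv huv
  simp only [Finset.coe_insert, Finset.coe_singleton, Set.mem_insert_iff,
    Set.mem_singleton_iff] at hu hv
  grind

theorem card_pairs_odd_numEdgesOver_le {t : Finset V} (ht : G.IsNClique 3 t)
    (P : Finset (Sym2 ι)) : {p ∈ P | Odd (numEdgesOver G φ p t)}.card ≤ 3 := by
  obtain ⟨a, b, c, hab, hac, hbc, rfl⟩ := SimpleGraph.is3Clique_iff.1 ht
  refine (Finset.card_le_card fun p hp => ?_).trans
    (Finset.card_le_three (a := s(φ a, φ b)) (b := s(φ a, φ c)) (c := s(φ b, φ c)))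
  have hodd := (Finset.mem_filter.1 hp).2
  rw [numEdgesOver_triangle hab hac hbc] at hodd
  simp only [Finset.mem_insert, Finset.mem_singleton]
  by_contra! h
  simp [h.1.symm, h.2.1.symm, h.2.2.symm] at hodd

/-- The number of contracted edges of a triangle is 0, 1 or 3. -/
theorem sum_fiberGraph_edges_add_ite_injOn {t : Finset V} (ht : G.IsNClique 3 t) :
    (∑ e ∈ G.edgeFinset with e ∈ t.sym2, if e ∈ (fiberGraph G φ).edgeSet then 1 else 0) +
      (if Set.InjOn φ t then 1 else 0) =
    1 + 2 * (if (fiberGraph G φ).IsNClique 3 t then 1 else 0) := by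
  obtain ⟨a, b, c, hab, hac, hbc, rfl⟩ := SimpleGraph.is3Clique_iff.1 ht
  have hclique : (fiberGraph G φ).IsNClique 3 {a, b, c} ↔ φ a = φ b ∧ φ a = φ c ∧ φ b = φ c := by
    rw [SimpleGraph.is3Clique_triple_iff]
    simp only [fiberGraph, hab, hac, hbc, true_and]
  have hinj : Set.InjOn φ ({a, b, c} : Finset V) ↔ φ a ≠ φ b ∧ φ a ≠ φ c ∧ φ b ≠ φ c := by
    constructor
    · intro h
      refine ⟨h.ne ?_ ?_ hab.ne, h.ne ?_ ?_ hac.ne, h.ne ?_ ?_ hbc.ne⟩ <;> simp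
    · intro h u hu v hv huv
      simp only [Finset.coe_insert, Finset.coe_singleton, Set.mem_insert_iff,
        Set.mem_singleton_iff] at hu hv
      grind
  rw [sum_edges_of_triangle hab hac hbc, if_congr hclique rfl rfl, if_congr hinj rfl rfl]
  simp only [SimpleGraph.mem_edgeSet, fiberGraph, hab, hac, hbc, true_and]
  grind

end Contraction

namespace IsSphereTriangulation

variable [Fintype V] {ι : Type*} {G : SimpleGraph V} {T : Finset (Finset V)} {φ : V → ι}

theorem two_mul_card_edges_fiberGraph (hT : IsSphereTriangulation G T) (φ : V → ι) :
    2 * (fiberGraph G φ).edgeFinset.card + (rainbowFaces T φ).card =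
      T.card + 2 * {t ∈ T | (fiberGraph G φ).IsNClique 3 t}.card := by
  have hedges : ∑ e ∈ G.edgeFinset, (if e ∈ (fiberGraph G φ).edgeSet then 1 else 0) =
      (fiberGraph G φ).edgeFinset.card := by
    rw [← Finset.card_filter]
    congr 1
    ext e
    induction e with
    | _ u v =>
      simp only [Finset.mem_filter, SimpleGraph.mem_edgeFinset, SimpleGraph.mem_edgeSet]
      exact and_iff_right_of_imp And.left
  have hsum := Finset.sum_congr rfl fun t ht =>
    sum_fiberGraph_edges_add_ite_injOn (φ := φ) (hT.isNClique t ht)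
  rwa [Finset.sum_add_distrib, hT.sum_faces_sum_edges, hedges, ← Finset.card_filter,
    Finset.sum_add_distrib, ← Finset.mul_sum, ← Finset.card_filter, ← Finset.card_eq_sum_ones]
    at hsum

theorem filter_isNClique_fiberGraph_ssubset (hT : IsSphereTriangulation G T) {u v : V}
    (huv : G.Adj u v) (hφ : φ u ≠ φ v) : {t ∈ T | (fiberGraph G φ).IsNClique 3 t} ⊂ T := by
  obtain ⟨t, ht⟩ := Finset.card_pos.1 ((hT.card_faces_of_edge s(u, v) huv).symm ▸ two_pos)
  obtain ⟨htT, hut, hvt⟩ := by simpa only [Finset.mem_filter, Finset.mk_mem_sym2_iff] using ht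
  exact Finset.filter_ssubset.2 ⟨t, htT, fun hclique => hφ (hclique.isClique hut hvt huv.ne).2⟩

theorem card_rainbowFaces_add_four_le [Fintype ι] (hT : IsSphereTriangulation G T)
    (hφ : IsCompleteContraction G φ) (hι : 2 ≤ Fintype.card ι) :
    (rainbowFaces T φ).card + 4 ≤ 2 * Fintype.card ι := by
  obtain ⟨i, j, hij⟩ := Fintype.one_lt_card_iff.1 hι
  obtain ⟨u, v, rfl, rfl, huv⟩ := hφ.exists_adj i j hij
  have hcontracted := hT.card_add_card_le_of_ssubset
    (hT.filter_isNClique_fiberGraph_ssubset huv hij) fun t ht => (Finset.mem_filter.1 ht).2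
  have hcomponents := hφ.card_connectedComponent_le
  have hfiber := hT.two_mul_card_edges_fiberGraph φ
  have hfaces := hT.three_mul_card_faces
  have hsphere := hT.euler
  omega

theorem exists_forall_adj_add_eq_of_even (hT : IsSphereTriangulation G T) {p : Sym2 ι}
    (heven : ∀ t ∈ T, Even (numEdgesOver G φ p t)) :
    ∃ f : V → ZMod 2, ∀ u v, G.Adj u v → f u + f v = if s(φ u, φ v) = p then 1 else 0 := by
  have hcocycle : (fun e : G.edgeSet => if e.1.map φ = p then (1 : ZMod 2) else 0) ∈
      LinearMap.ker (faceCoboundary G T) := by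
    rw [LinearMap.mem_ker]
    ext t
    rw [faceCoboundary_apply G T fun e => if e.map φ = p then 1 else 0]
    have hzero := ZMod.natCast_eq_zero_iff_even.2 (heven t t.2)
    simpa [numEdgesOver] using hzero
  obtain ⟨f, hf⟩ := hT.mem_range_vertexCoboundary_of_mem_ker hcocycle
  exact ⟨f, fun u v huv => congrFun hf ⟨s(u, v), huv⟩⟩

/-- Otherwise the edges over `p` form a coboundary, whose potential descends to the complete graph
on `ι`. There it differs at the ends of `p` but agrees at both with any third vertex. -/
theorem exists_odd_numEdgesOver [Fintype ι] (hT : IsSphereTriangulation G T)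
    (hφ : IsCompleteContraction G φ) (hι : 3 ≤ Fintype.card ι) {p : Sym2 ι} (hp : ¬p.IsDiag) :
    ∃ t ∈ T, Odd (numEdgesOver G φ p t) := by
  by_contra! heven
  obtain ⟨f, hedge⟩ := hT.exists_forall_adj_add_eq_of_even fun t ht =>
    Nat.not_odd_iff_even.1 (heven t ht)
  have hfiber : ∀ {u v}, φ u = φ v → f u = f v := fun {u v} huv => by
    refine eq_of_mem_ker_vertexCoboundary (mem_ker_vertexCoboundary.2 ?_) (hφ.reachable u v huv)
    rintro x y ⟨hxy, hφxy⟩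
    rw [← CharTwo.add_eq_zero, hedge x y hxy, if_neg]
    rintro rfl
    exact hp hφxy
  have hpair : ∀ u v, φ u ≠ φ v → f u + f v = if s(φ u, φ v) = p then 1 else 0 := by
    intro u v huv
    obtain ⟨u', v', hu, hv, hadj⟩ := hφ.exists_adj _ _ huv
    rw [← hfiber hu, ← hfiber hv, hedge u' v' hadj, hu, hv]
  induction p with
  | _ i j =>
    have hij : i ≠ j := hp
    obtain ⟨u, v, rfl, rfl, -⟩ := hφ.exists_adj i j hij
    obtain ⟨k, hki, hkj⟩ := ENat.exists_ne_ne_of_three_le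
      (ENat.card_eq_coe_fintype_card (α := ι) ▸ Nat.cast_le.2 hι) (φ u) (φ v)
    obtain ⟨-, w, -, rfl, -⟩ := hφ.exists_adj (φ u) k hki.symm
    have huv := hpair u v hij
    have huw := hpair u w hki.symm
    have hvw := hpair v w hkj.symm
    rw [if_pos rfl] at huv
    rw [if_neg (by simp [hkj, hij]), CharTwo.add_eq_zero] at huw
    rw [if_neg (by simp [hki, hij.symm]), CharTwo.add_eq_zero] at hvw
    rw [huw, hvw, CharTwo.add_self_eq_zero] at huv
    exact zero_ne_one huv

theorem two_le_card_odd_numEdgesOver [Fintype ι] (hT : IsSphereTriangulation G T)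
    (hφ : IsCompleteContraction G φ) (hι : 3 ≤ Fintype.card ι) {p : Sym2 ι} (hp : ¬p.IsDiag) :
    2 ≤ {t ∈ T | Odd (numEdgesOver G φ p t)}.card := by
  have heven : Even {t ∈ T | Odd (numEdgesOver G φ p t)}.card := by
    rw [← Finset.even_sum_iff_even_card_odd]
    exact ⟨_, (hT.sum_faces_sum_edges _).trans (two_mul _)⟩
  have hpos : 0 < {t ∈ T | Odd (numEdgesOver G φ p t)}.card :=
    Finset.card_pos.2 (Finset.filter_nonempty_iff.2 (hT.exists_odd_numEdgesOver hφ hι hp))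
  obtain ⟨n, hn⟩ := heven
  omega

theorem choose_two_mul_two_le_card_rainbowFaces [Fintype ι] (hT : IsSphereTriangulation G T)
    (hφ : IsCompleteContraction G φ) (hι : 3 ≤ Fintype.card ι) :
    (Fintype.card ι).choose 2 * 2 ≤ (rainbowFaces T φ).card * 3 := by
  rw [← SimpleGraph.card_edgeFinset_top_eq_card_choose_two]
  refine Finset.card_mul_le_card_mul (fun p t => Odd (numEdgesOver G φ p t)) ?_ ?_
  · intro p hp
    have hdiag : ¬p.IsDiag := SimpleGraph.not_isDiag_of_mem_edgeFinset hp
    refine (hT.two_le_card_odd_numEdgesOver hφ hι hdiag).trans (Finset.card_le_card fun t ht => ?_)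
    obtain ⟨htT, hodd⟩ := Finset.mem_filter.1 ht
    have hinj := injOn_of_odd_numEdgesOver hdiag (hT.isNClique t htT) hodd
    exact Finset.mem_filter.2 ⟨Finset.mem_filter.2 ⟨htT, hinj⟩, hodd⟩
  · intro t ht
    exact card_pairs_odd_numEdgesOver_le (hT.isNClique t (Finset.mem_filter.1 ht).1) _

theorem card_le_four_of_isCompleteContraction [Fintype ι] (hT : IsSphereTriangulation G T)
    (hφ : IsCompleteContraction G φ) : Fintype.card ι ≤ 4 := by
  by_contra! hι
  have hrainbow := hT.card_rainbowFaces_add_four_le hφ (by omega)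
  have hpairs := hT.choose_two_mul_two_le_card_rainbowFaces hφ (by omega)
  rw [Nat.choose_two_right, Nat.div_mul_cancel (Nat.even_mul_pred_self _).two_dvd] at hpairs
  obtain ⟨k, hk⟩ := Nat.exists_eq_add_of_lt hι
  rw [hk] at hpairs hrainbow
  rw [Nat.add_sub_cancel] at hpairs
  nlinarith

end IsSphereTriangulation

section Models

variable {W ι κ : Type*} {G : SimpleGraph V} {H : SimpleGraph W} {B : ι → Set V}

/-- The branch sets `B i` form a model of the complete graph on `ι` in `G`. -/
structure IsCompleteModel (G : SimpleGraph V) (B : ι → Set V) : Prop where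
  connected : ∀ i, (G.induce (B i)).Connected
  disjoint : Pairwise fun i j => Disjoint (B i) (B j)
  exists_adj : ∀ i j, i ≠ j → ∃ u ∈ B i, ∃ v ∈ B j, G.Adj u v

theorem hasCompleteMinor_iff {t : ℕ} :
    G.HasCompleteMinor t ↔ ∃ B : Fin t → Set V, IsCompleteModel G B := by
  refine exists_congr fun B => ⟨fun ⟨_, hconn, hdisj, hadj⟩ => ⟨hconn, hdisj, hadj⟩, fun hB => ?_⟩
  exact ⟨fun i => Set.nonempty_coe_sort.1 (hB.connected i).nonempty, hB.connected, hB.disjoint,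
    hB.exists_adj⟩

theorem exists_adj_of_connected_induce {S A : Set V} (hS : (G.induce S).Connected) {a b : V}
    (ha : a ∈ S) (haA : a ∈ A) (hb : b ∈ S) (hbA : b ∉ A) :
    ∃ u ∈ S, ∃ v ∈ S, u ∈ A ∧ v ∉ A ∧ G.Adj u v := by
  obtain ⟨p⟩ := hS ⟨a, ha⟩ ⟨b, hb⟩
  obtain ⟨d, -, hfst, hsnd⟩ := p.exists_boundary_dart (Subtype.val ⁻¹' A) haA hbA
  exact ⟨d.fst, d.fst.2, d.snd, d.snd.2, hfst, hsnd, d.adj⟩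

theorem connected_induce_image {S : Set V} {π : V → W} (hS : (G.induce S).Connected)
    (hπ : ∀ u ∈ S, ∀ v ∈ S, G.Adj u v → π u = π v ∨ H.Adj (π u) (π v)) :
    (H.induce (π '' S)).Connected := by
  rw [SimpleGraph.connected_iff_exists_forall_reachable]
  obtain ⟨a⟩ := hS.nonempty
  refine ⟨⟨π a, Set.mem_image_of_mem π a.2⟩, ?_⟩
  rintro ⟨_, b, hb, rfl⟩
  have hreach := hS a ⟨b, hb⟩
  rw [SimpleGraph.reachable_iff_reflTransGen] at hreach ⊢
  refine hreach.lift' (fun u : S => (⟨π u, Set.mem_image_of_mem π u.2⟩ : π '' S)) fun u v huv => ?_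
  rcases hπ u u.2 v v.2 huv with heq | hadj
  · simp only [Function.onFun, heq]
    exact Relation.ReflTransGen.refl
  · exact Relation.ReflTransGen.single hadj

namespace IsCompleteModel

theorem eq_of_mem (hB : IsCompleteModel G B) {i j : ι} {v : V} (hi : v ∈ B i) (hj : v ∈ B j) :
    i = j := by
  by_contra hij
  exact Set.disjoint_left.1 (hB.disjoint hij) hi hj

theorem comp_injective (hB : IsCompleteModel G B) {f : κ → ι} (hf : Function.Injective f) :
    IsCompleteModel G (B ∘ f) where
  connected i := hB.connected (f i)
  disjoint := hB.disjoint.comp_of_injective hf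
  exists_adj i j hij := hB.exists_adj (f i) (f j) (hf.ne hij)

/-- A complete model survives a map that contracts or preserves its edges, provided that each
branch set is closed under the retraction `σ ∘ π`, which keeps the images disjoint. -/
theorem image (hB : IsCompleteModel G B) (π : V → W) (σ : W → V)
    (hπ : ∀ i, ∀ u ∈ B i, ∀ j, ∀ v ∈ B j, G.Adj u v → π u = π v ∨ H.Adj (π u) (π v))
    (hσ : ∀ i, ∀ u ∈ B i, σ (π u) ∈ B i) : IsCompleteModel H fun i => π '' B i where
  connected i := connected_induce_image (hB.connected i) fun u hu v hv => hπ i u hu i v hv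
  disjoint i j hij := Set.disjoint_left.2 <| by
    rintro _ ⟨u, hu, rfl⟩ ⟨v, hv, huv⟩
    exact hij (hB.eq_of_mem (hσ i u hu) (huv ▸ hσ j v hv))
  exists_adj i j hij := by
    obtain ⟨u, hu, v, hv, huv⟩ := hB.exists_adj i j hij
    refine ⟨π u, Set.mem_image_of_mem π hu, π v, Set.mem_image_of_mem π hv, ?_⟩
    refine (hπ i u hu j v hv huv).resolve_left fun heq => ?_
    exact hij (hB.eq_of_mem (hσ i u hu) (heq ▸ hσ j v hv))

theorem update_insert (hB : IsCompleteModel G B) {i : ι} {u v : V} (hu : u ∈ B i)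
    (huv : G.Adj u v) (hv : ∀ j, v ∉ B j) :
    IsCompleteModel G (Function.update B i (insert v (B i))) where
  connected j := by
    rcases eq_or_ne j i with rfl | hji
    · have hpair := SimpleGraph.induce_pair_connected_of_adj huv
      have hunion := SimpleGraph.induce_union_connected hpair.preconnected
        (hB.connected j).preconnected ⟨u, by simp, hu⟩
      rw [Function.update_self]
      have hset : insert v (B j) = {u, v} ∪ B j := by grind
      exact hset ▸ hunion
    · rw [Function.update_of_ne hji]
      exact hB.connected j
  disjoint j k hjk := by
    have hdisj := hB.disjoint hjk
    simp only [Set.disjoint_left] at hdisj ⊢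
    grind
  exists_adj j k hjk := by
    have hle : ∀ l, B l ⊆ Function.update B i (insert v (B i)) l := by grind
    obtain ⟨a, ha, b, hb, hab⟩ := hB.exists_adj j k hjk
    exact ⟨a, hle j ha, b, hle k hb, hab⟩

theorem exists_iUnion_eq_univ [Finite V] [Finite ι] [Nonempty ι] (hB : IsCompleteModel G B)
    (hG : G.Connected) : ∃ C : ι → Set V, IsCompleteModel G C ∧ ⋃ i, C i = Set.univ := by
  obtain ⟨C, hC, hmax⟩ :=
    (Set.toFinite {C : ι → Set V | IsCompleteModel G C}).exists_maximal ⟨B, hB⟩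
  refine ⟨C, hC, ?_⟩
  by_contra hcover
  obtain ⟨v, hv⟩ := (Set.ne_univ_iff_exists_notMem _).1 hcover
  let i₀ := Classical.arbitrary ι
  obtain ⟨u, hu⟩ := (hC.connected i₀).nonempty
  obtain ⟨p⟩ := hG u v
  obtain ⟨d, -, hfst, hsnd⟩ := p.exists_boundary_dart _ (Set.mem_iUnion_of_mem i₀ hu) hv
  obtain ⟨i, hi⟩ := Set.mem_iUnion.1 hfst
  rw [Set.mem_iUnion, not_exists] at hsnd
  have hle := hmax (hC.update_insert hi d.adj hsnd)
    (le_update_self_iff.2 (Set.subset_insert _ _)) i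
  rw [Function.update_self] at hle
  exact hsnd i (hle (Set.mem_insert _ _))

theorem exists_isCompleteContraction (hB : IsCompleteModel G B) (hcover : ⋃ i, B i = Set.univ) :
    ∃ φ : V → ι, IsCompleteContraction G φ := by
  choose φ hφ using Set.iUnion_eq_univ_iff.1 hcover
  have hiff : ∀ {v i}, v ∈ B i → φ v = i := fun hv => hB.eq_of_mem (hφ _) hv
  refine ⟨φ, fun u v huv => ?_, fun i j hij => ?_⟩
  · let f : G.induce (B (φ u)) →g fiberGraph G φ :=
      ⟨Subtype.val, fun {a b} hab => ⟨hab, (hiff a.2).trans (hiff b.2).symm⟩⟩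
    exact (hB.connected (φ u) ⟨u, hφ u⟩ ⟨v, huv ▸ hφ v⟩).map f
  · obtain ⟨u, hu, v, hv, huv⟩ := hB.exists_adj i j hij
    exact ⟨u, v, hiff hu, hiff hv, huv⟩

end IsCompleteModel

theorem IsSphereTriangulation.not_hasCompleteMinor [Fintype V] {T : Finset (Finset V)}
    (hT : IsSphereTriangulation G T) {t : ℕ} (ht : 5 ≤ t) : ¬G.HasCompleteMinor t := by
  rw [hasCompleteMinor_iff]
  rintro ⟨B, hB⟩
  have : NeZero t := ⟨by omega⟩
  obtain ⟨C, hC, hcover⟩ := hB.exists_iUnion_eq_univ hT.connected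
  obtain ⟨φ, hφ⟩ := hC.exists_isCompleteContraction hcover
  have hcard := hT.card_le_four_of_isCompleteContraction hφ
  rw [Fintype.card_fin] at hcard
  omega

end Models

section Cone

variable (H : SimpleGraph V)

@[simp]
theorem cone_adj_inr_inr (u v : V) : (cone H).Adj (Sum.inr u) (Sum.inr v) ↔ H.Adj u v := by
  simp only [cone, SimpleGraph.fromRel_adj, ne_eq, Sum.inr.injEq, H.adj_comm v u, or_self]
  exact and_iff_right_of_imp SimpleGraph.Adj.ne

@[simp]
theorem cone_adj_inl_inr (u : Unit) (v : V) : (cone H).Adj (Sum.inl u) (Sum.inr v) := by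
  simp [cone]

@[simp]
theorem cone_adj_inr_inl (u : Unit) (v : V) : (cone H).Adj (Sum.inr v) (Sum.inl u) :=
  (cone_adj_inl_inr H u v).symm

variable {H}

theorem hasCompleteMinor_of_cone [Nonempty V] {t : ℕ} (h : (cone H).HasCompleteMinor (t + 1)) :
    H.HasCompleteMinor t := by
  rw [hasCompleteMinor_iff] at h ⊢
  obtain ⟨B, hB⟩ := h
  obtain ⟨i₀, hi₀⟩ : ∃ i₀, ∀ i, Sum.inl () ∈ B i → i = i₀ := by
    by_cases hapex : ∃ i₀, Sum.inl () ∈ B i₀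
    · exact hapex.imp fun i₀ hi₀ i hi => hB.eq_of_mem hi hi₀
    · exact ⟨0, fun i hi => absurd ⟨i, hi⟩ hapex⟩
  have hinr : ∀ i, ∀ u ∈ B (i₀.succAbove i), ∃ v, u = Sum.inr v := by
    rintro i (⟨⟩ | v) hu
    · exact absurd (hi₀ _ hu) (i₀.succAbove_ne i)
    · exact ⟨v, rfl⟩
  refine ⟨_, (hB.comp_injective i₀.succAbove_right_injective).image
    (Sum.elim (fun _ => Classical.arbitrary V) id) Sum.inr ?_ ?_⟩
  · intro i u hu j v hv huv
    obtain ⟨u, rfl⟩ := hinr i u hu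
    obtain ⟨v, rfl⟩ := hinr j v hv
    exact Or.inr ((cone_adj_inr_inr H u v).1 huv)
  · intro i u hu
    obtain ⟨u, rfl⟩ := hinr i u hu
    exact hu

end Cone

section Bridge

variable {W ι : Type*} (G₁ : SimpleGraph V) (G₂ : SimpleGraph W) (x : V) (y : W)

@[simp]
theorem addBridge_adj_inl_inl (u v : V) :
    (addBridge G₁ G₂ x y).Adj (Sum.inl u) (Sum.inl v) ↔ G₁.Adj u v := by
  simp only [addBridge, SimpleGraph.fromRel_adj, ne_eq, Sum.inl.injEq, G₁.adj_comm v u, or_self]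
  exact and_iff_right_of_imp SimpleGraph.Adj.ne

@[simp]
theorem addBridge_adj_inr_inr (u v : W) :
    (addBridge G₁ G₂ x y).Adj (Sum.inr u) (Sum.inr v) ↔ G₂.Adj u v := by
  simp only [addBridge, SimpleGraph.fromRel_adj, ne_eq, Sum.inr.injEq, G₂.adj_comm v u, or_self]
  exact and_iff_right_of_imp SimpleGraph.Adj.ne

@[simp]
theorem addBridge_adj_inl_inr (u : V) (v : W) :
    (addBridge G₁ G₂ x y).Adj (Sum.inl u) (Sum.inr v) ↔ u = x ∧ v = y := by
  simp [addBridge]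

@[simp]
theorem addBridge_adj_inr_inl (u : V) (v : W) :
    (addBridge G₁ G₂ x y).Adj (Sum.inr v) (Sum.inl u) ↔ u = x ∧ v = y := by
  rw [SimpleGraph.adj_comm, addBridge_adj_inl_inr]

variable {G₁ G₂ x y}

theorem bridge_mem_of_connected_induce {S : Set (V ⊕ W)}
    (hS : ((addBridge G₁ G₂ x y).induce S).Connected) {u : V} {v : W} (hu : Sum.inl u ∈ S)
    (hv : Sum.inr v ∈ S) : Sum.inl x ∈ S ∧ Sum.inr y ∈ S := by
  obtain ⟨a | a, haS, b | b, hbS, ha, hb, hab⟩ := exists_adj_of_connected_induce hS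
    (A := Set.range Sum.inl) hu (Set.mem_range_self u) hv (by simp)
  · exact absurd (Set.mem_range_self b) hb
  · obtain ⟨rfl, rfl⟩ := (addBridge_adj_inl_inr G₁ G₂ x y a b).1 hab
    exact ⟨haS, hbS⟩
  all_goals simp at ha

namespace IsCompleteModel

variable {B : ι → Set (V ⊕ W)}

theorem image_left (hB : IsCompleteModel (addBridge G₁ G₂ x y) B)
    (hleft : ∀ i, ∃ u, Sum.inl u ∈ B i) :
    IsCompleteModel G₁ fun i => Sum.elim id (fun _ => x) '' B i := by
  refine hB.image _ Sum.inl ?_ ?_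
  · rintro - (u | u) - - (v | v) - huv <;> simp_all
  · rintro i (u | u) hu
    · exact hu
    · obtain ⟨v, hv⟩ := hleft i
      exact (bridge_mem_of_connected_induce (hB.connected i) hv hu).1

theorem image_right (hB : IsCompleteModel (addBridge G₁ G₂ x y) B)
    (hright : ∀ i, ∃ v, Sum.inr v ∈ B i) :
    IsCompleteModel G₂ fun i => Sum.elim (fun _ => y) id '' B i := by
  refine hB.image _ Sum.inr ?_ ?_
  · rintro - (u | u) - - (v | v) - huv <;> simp_all
  · rintro i (u | u) hu
    · obtain ⟨v, hv⟩ := hright i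
      exact (bridge_mem_of_connected_induce (hB.connected i) hu hv).2
    · exact hu

/-- Deleting an edge does not disconnect a complete graph on at least three vertices. -/
theorem forall_left_or_forall_right (hB : IsCompleteModel (addBridge G₁ G₂ x y) B)
    (hι : 3 ≤ ENat.card ι) :
    (∀ i, ∃ u, Sum.inl u ∈ B i) ∨ ∀ i, ∃ v, Sum.inr v ∈ B i := by
  by_contra! ⟨⟨i, hi⟩, j, hj⟩
  obtain ⟨k, hki, hkj⟩ := ENat.exists_ne_ne_of_three_le hι i j
  have hij : Sum.inr y ∈ B i ∧ Sum.inl x ∈ B j := by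
    have hne : i ≠ j := by
      rintro rfl
      obtain ⟨u | v, hw⟩ := (hB.connected i).nonempty
      exacts [hi u hw, hj v hw]
    obtain ⟨u | u, hu, v | v, hv, huv⟩ := hB.exists_adj i j hne <;> simp_all
  have hx : Sum.inl x ∉ B k := fun hx => hkj (hB.eq_of_mem hx hij.2)
  have hy : Sum.inr y ∉ B k := fun hy => hki (hB.eq_of_mem hy hij.1)
  obtain ⟨v, hv⟩ : ∃ v, Sum.inr v ∈ B k := by
    by_contra! hk
    obtain ⟨u | u, hu, v | v, hv, huv⟩ := hB.exists_adj k i hki <;> simp_all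
  obtain ⟨u, hu⟩ : ∃ u, Sum.inl u ∈ B k := by
    by_contra! hk
    obtain ⟨u | u, hu, v | v, hv, huv⟩ := hB.exists_adj k j hkj <;> simp_all
  exact hx (bridge_mem_of_connected_induce (hB.connected k) hu hv).1

end IsCompleteModel

theorem hasCompleteMinor_or_of_addBridge {t : ℕ} (ht : 3 ≤ t)
    (h : (addBridge G₁ G₂ x y).HasCompleteMinor t) :
    G₁.HasCompleteMinor t ∨ G₂.HasCompleteMinor t := by
  simp only [hasCompleteMinor_iff] at h ⊢
  obtain ⟨B, hB⟩ := h
  have hι : 3 ≤ ENat.card (Fin t) := by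
    rw [ENat.card_eq_coe_fintype_card, Fintype.card_fin]
    exact_mod_cast ht
  exact (hB.forall_left_or_forall_right hι).imp (fun hleft => ⟨_, hB.image_left hleft⟩)
    fun hright => ⟨_, hB.image_right hright⟩

end Bridge

section Degree

variable {W : Type*} [Fintype V] [Fintype W]

theorem degree_cone_inl (H : SimpleGraph V) (u : Unit) :
    (cone H).degree (Sum.inl u) = Fintype.card V := by
  have hnbr : (cone H).neighborFinset (Sum.inl u) = Finset.univ.map Function.Embedding.inr := by
    ext (v | v) <;> simp
  rw [← SimpleGraph.card_neighborFinset_eq_degree, hnbr, Finset.card_map, Finset.card_univ]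

theorem degree_cone_inr (H : SimpleGraph V) (v : V) :
    (cone H).degree (Sum.inr v) = H.degree v + 1 := by
  have hnbr : (cone H).neighborFinset (Sum.inr v) =
      Finset.univ.disjSum (H.neighborFinset v) := by
    ext (w | w) <;> simp
  rw [← SimpleGraph.card_neighborFinset_eq_degree, hnbr, Finset.card_disjSum, Finset.card_univ,
    Fintype.card_unit, SimpleGraph.card_neighborFinset_eq_degree, add_comm]

variable (G₁ : SimpleGraph V) (G₂ : SimpleGraph W) (x : V) (y : W)

theorem degree_addBridge_inl (u : V) :
    (addBridge G₁ G₂ x y).degree (Sum.inl u) = G₁.degree u + if u = x then 1 else 0 := by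
  have hnbr : (addBridge G₁ G₂ x y).neighborFinset (Sum.inl u) =
      (G₁.neighborFinset u).disjSum (if u = x then {y} else ∅) := by
    ext (w | w) <;> split_ifs <;> simp [*]
  rw [← SimpleGraph.card_neighborFinset_eq_degree, hnbr, Finset.card_disjSum,
    SimpleGraph.card_neighborFinset_eq_degree]
  split_ifs <;> rfl

theorem degree_le_degree_addBridge_inr (v : W) :
    G₂.degree v ≤ (addBridge G₁ G₂ x y).degree (Sum.inr v) := by
  rw [← SimpleGraph.card_neighborFinset_eq_degree, ← SimpleGraph.card_neighborFinset_eq_degree,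
    ← Finset.card_map (Function.Embedding.inr (α := V))]
  refine Finset.card_le_card fun w hw => ?_
  obtain ⟨w, hvw, rfl⟩ := Finset.mem_map.1 hw
  simpa using hvw

variable {G₁ G₂ x}

theorem minDegree_addBridge {d : ℕ} (h₁ : ∀ u, d ≤ G₁.degree u) (h₂ : ∀ v, d ≤ G₂.degree v) {u : V}
    (hux : u ≠ x) (hu : G₁.degree u = d) : (addBridge G₁ G₂ x y).minDegree = d := by
  have : Nonempty V := ⟨u⟩
  refine le_antisymm ?_ (SimpleGraph.le_minDegree_of_forall_le_degree _ _ ?_)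
  · refine (SimpleGraph.minDegree_le_degree _ (Sum.inl u)).trans ?_
    rw [degree_addBridge_inl, if_neg hux, add_zero, hu]
  · rintro (a | b)
    · exact (h₁ a).trans ((Nat.le_add_right _ _).trans_eq (degree_addBridge_inl ..).symm)
    · exact (h₂ b).trans (degree_le_degree_addBridge_inr ..)

end Degree

namespace Icosa

/-- The north pole `a` of the icosahedron. -/
abbrev a : Unit ⊕ Fin 5 ⊕ Fin 5 ⊕ Unit := Sum.inl ()

/-- The vertex `bᵢ` on the northern pentagon of the icosahedron. -/
abbrev b (i : Fin 5) : Unit ⊕ Fin 5 ⊕ Fin 5 ⊕ Unit := Sum.inr (Sum.inl i)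

/-- The vertex `cᵢ` on the southern pentagon of the icosahedron. -/
abbrev c (i : Fin 5) : Unit ⊕ Fin 5 ⊕ Fin 5 ⊕ Unit := Sum.inr (Sum.inr (Sum.inl i))

/-- The south pole `z` of the icosahedron. -/
abbrev z : Unit ⊕ Fin 5 ⊕ Fin 5 ⊕ Unit := Sum.inr (Sum.inr (Sum.inr ()))

section Decidable

/-- A computable instance, as the classical one would block `decide`. -/
@[reducible]
def decidableAdj : DecidableRel Icosa.Adj := fun u v =>
  @decidable_of_iff _ _ (SimpleGraph.fromRel_adj _ u v).symm <| by
    rcases u with _ | _ | _ | _ <;> rcases v with _ | _ | _ | _ <;> dsimp only <;> infer_instance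

attribute [local instance] decidableAdj

/-- The twenty triangular faces of the icosahedron, in four rings around the axis `az`. -/
def face : Fin 4 → Fin 5 → Finset (Unit ⊕ Fin 5 ⊕ Fin 5 ⊕ Unit)
  | 0, i => {a, b i, b (i + 1)}
  | 1, i => {b i, b (i + 1), c (i + 1)}
  | 2, i => {b i, c i, c (i + 1)}
  | 3, i => {z, c i, c (i + 1)}

/-- The set of faces of the icosahedron. -/
def faces : Finset (Finset (Unit ⊕ Fin 5 ⊕ Fin 5 ⊕ Unit)) :=
  Finset.univ.image fun k : Fin 4 × Fin 5 => face k.1 k.2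

theorem card_faces : faces.card = 20 := by
  decide +kernel

theorem card_filter_faces_of_adj :
    ∀ u v, Icosa.Adj u v → {t ∈ faces | u ∈ t ∧ v ∈ t}.card = 2 := by
  decide +kernel

theorem degree_eq_five (u : Unit ⊕ Fin 5 ⊕ Fin 5 ⊕ Unit) [Fintype (Icosa.neighborSet u)] :
    Icosa.degree u = 5 := by
  have hdeg : ∀ u, (@SimpleGraph.degree _ Icosa u inferInstance) = 5 := by decide +kernel
  convert hdeg u

theorem adj_a_b : ∀ i, Icosa.Adj a (b i) := by
  decide

theorem adj_b_c : ∀ i, Icosa.Adj (b i) (c i) := by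
  decide

theorem adj_c_z : ∀ i, Icosa.Adj (c i) z := by
  decide

theorem adj_b_b : ∀ i, Icosa.Adj (b i) (b (i + 1)) := by
  decide

theorem adj_b_c_add_one : ∀ i, Icosa.Adj (b i) (c (i + 1)) := by
  decide

theorem adj_c_c : ∀ i, Icosa.Adj (c i) (c (i + 1)) := by
  decide

end Decidable

theorem isNClique_face (k : Fin 4) (i : Fin 5) : Icosa.IsNClique 3 (face k i) := by
  fin_cases k
  · exact SimpleGraph.is3Clique_triple_iff.2 ⟨adj_a_b i, adj_a_b (i + 1), adj_b_b i⟩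
  · exact SimpleGraph.is3Clique_triple_iff.2 ⟨adj_b_b i, adj_b_c_add_one i, adj_b_c (i + 1)⟩
  · exact SimpleGraph.is3Clique_triple_iff.2 ⟨adj_b_c i, adj_b_c_add_one i, adj_c_c i⟩
  · exact SimpleGraph.is3Clique_triple_iff.2
      ⟨(adj_c_z i).symm, (adj_c_z (i + 1)).symm, adj_c_c i⟩

theorem connected : Icosa.Connected := by
  have hb : ∀ i, Icosa.Reachable a (b i) := fun i => (adj_a_b i).reachable
  have hc : ∀ i, Icosa.Reachable a (c i) := fun i => (hb i).trans (adj_b_c i).reachable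
  rw [SimpleGraph.connected_iff_exists_forall_reachable]
  refine ⟨a, ?_⟩
  rintro (_ | i | i | _)
  exacts [.refl _, hb i, hc i, (hc 0).trans (adj_c_z 0).reachable]

theorem card_edgeFinset : Icosa.edgeFinset.card = 30 := by
  have hsum := Icosa.sum_degrees_eq_twice_card_edges
  simp only [degree_eq_five, Finset.sum_const, Finset.card_univ, Fintype.card_sum,
    Fintype.card_unit, Fintype.card_fin, smul_eq_mul] at hsum
  omega

theorem mem_faces {t : Finset (Unit ⊕ Fin 5 ⊕ Fin 5 ⊕ Unit)} :
    t ∈ faces ↔ ∃ k i, face k i = t := by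
  simp [faces]

theorem card_filter_faces {e : Sym2 (Unit ⊕ Fin 5 ⊕ Fin 5 ⊕ Unit)} (he : e ∈ Icosa.edgeSet) :
    {t ∈ faces | e ∈ t.sym2}.card = 2 := by
  induction e with
  | _ u v =>
    simp only [Finset.mk_mem_sym2_iff]
    convert card_filter_faces_of_adj u v he

theorem dualGraph_connected : (dualGraph Icosa faces).Connected := by
  have hmem : ∀ k i, face k i ∈ faces := fun k i => mem_faces.2 ⟨k, i, rfl⟩
  let R (k i l j) : Prop := (dualGraph Icosa faces).Reachable ⟨_, hmem k i⟩ ⟨_, hmem l j⟩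
  have hstep : ∀ {k l i j u v}, Icosa.Adj u v → (u ∈ face k i ∧ v ∈ face k i) →
      (u ∈ face l j ∧ v ∈ face l j) → R k i l j := fun huv hk hl =>
    reachable_dualGraph huv (Finset.mk_mem_sym2_iff.2 hk) (Finset.mk_mem_sym2_iff.2 hl)
  have h₀ : ∀ i, R 0 i 0 (i + 1) := fun i =>
    hstep (adj_a_b (i + 1)) (by simp [face]) (by simp [face])
  have h₁ : ∀ i, R 0 i 1 i := fun i => hstep (adj_b_b i) (by simp [face]) (by simp [face])
  have h₂ : ∀ i, R 1 i 2 i := fun i => hstep (adj_b_c_add_one i) (by simp [face]) (by simp [face])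
  have h₃ : ∀ i, R 2 i 3 i := fun i => hstep (adj_c_c i) (by simp [face]) (by simp [face])
  have hring : ∀ i, R 0 0 0 i :=
    Fin.induction (.refl _) fun i ih => ih.trans (Fin.coeSucc_eq_succ (a := i) ▸ h₀ i.castSucc)
  have hface : ∀ k i, R 0 0 k i := by
    intro k i
    fin_cases k
    exacts [hring i, (hring i).trans (h₁ i), (hring i).trans ((h₁ i).trans (h₂ i)),
      (hring i).trans ((h₁ i).trans ((h₂ i).trans (h₃ i)))]
  rw [SimpleGraph.connected_iff_exists_forall_reachable]
  refine ⟨⟨_, hmem 0 0⟩, fun ⟨t, ht⟩ => ?_⟩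
  obtain ⟨k, i, rfl⟩ := mem_faces.1 ht
  exact hface k i

theorem isSphereTriangulation : IsSphereTriangulation Icosa faces where
  connected := connected
  isNClique := by
    simp only [mem_faces]
    rintro _ ⟨k, i, rfl⟩
    exact isNClique_face k i
  card_faces_of_edge e he := by convert card_filter_faces he
  dual_connected := dualGraph_connected
  euler := by
    rw [card_faces, card_edgeFinset]
    rfl

end Icosa

theorem order26_minDegree6_no_K6_minor
    (x y : Unit ⊕ (Unit ⊕ Fin 5 ⊕ Fin 5 ⊕ Unit)) :
    Fintype.card ((Unit ⊕ (Unit ⊕ Fin 5 ⊕ Fin 5 ⊕ Unit)) ⊕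
        (Unit ⊕ (Unit ⊕ Fin 5 ⊕ Fin 5 ⊕ Unit))) = 26 ∧
    (addBridge (cone Icosa) (cone Icosa) x y).minDegree = 6 ∧
    ¬ (addBridge (cone Icosa) (cone Icosa) x y).HasCompleteMinor 6 := by
  refine ⟨rfl, ?_, fun hminor => ?_⟩
  · have hdeg : ∀ u, (cone Icosa).degree (Sum.inr u) = 6 := fun u => by
      rw [degree_cone_inr, Icosa.degree_eq_five]
    have hle : ∀ u, 6 ≤ (cone Icosa).degree u := by
      rintro (u | u)
      · rw [degree_cone_inl]
        decide
      · exact (hdeg u).ge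
    obtain ⟨u, hu⟩ : ∃ u, Sum.inr u ≠ x := by
      by_contra! h
      exact (Icosa.adj_a_b 0).ne (Sum.inr_injective ((h _).trans (h _).symm))
    exact minDegree_addBridge y hle hle hu (hdeg u)
  · have hcone : ¬(cone Icosa).HasCompleteMinor 6 := fun h =>
      Icosa.isSphereTriangulation.not_hasCompleteMinor le_rfl (hasCompleteMinor_of_cone h)
    rcases hasCompleteMinor_or_of_addBridge (by norm_num) hminor with h | h
    exacts [hcone h, hcone h]
end
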